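/- Let Ω ⊆ ℝ³ be open and let f = (F, f₃) : Ω → ℝ³ be a smooth map satisfying the contact equations with J_F > 0 on Ω, and let g be a conformal map defined on an open set containing f(Ω). (1) If g is of type 1, i.e. g = τ_p ∘ r_φ ∘ δ_r ∘ τ_q for some p, q ∈ ℝ³, φ ∈ ℝ, r > 0, then S_CL(g ∘ f) = S_CL(f) on Ω. (2) If g is of type 2, i.e. g = τ_p ∘ ι ∘ r_φ ∘ δ_r ∘ τ_q, then S_CL(g ∘ f) = S_CL(f) holds on Ω if and only if Z̄F = 0 on Ω, i.e. if and only if f is conformal. -/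

import Mathlib

noncomputable section

open Complex

/-- The underlying space of the first Heisenberg group: ℝ³ with coordinates (x, y, t). -/
abbrev Heis : Type := ℝ × ℝ × ℝ

/-- The left-invariant vector field X = ∂/∂x + 2y ∂/∂t, as a derivation. -/
def XD {E : Type*} [NormedAddCommGroup E] [NormedSpace ℝ E] (u : Heis → E) (p : Heis) : E :=
  fderiv ℝ u p (1, 0, 2 * p.2.1)

/-- The left-invariant vector field Y = ∂/∂y − 2x ∂/∂t, as a derivation. -/
def YD {E : Type*} [NormedAddCommGroup E] [NormedSpace ℝ E] (u : Heis → E) (p : Heis) : E :=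
  fderiv ℝ u p (0, 1, -(2 * p.1))

/-- The vector field T = ∂/∂t, as a derivation. -/
def TD {E : Type*} [NormedAddCommGroup E] [NormedSpace ℝ E] (u : Heis → E) (p : Heis) : E :=
  fderiv ℝ u p (0, 0, 1)

/-- Z = (X − iY)/2. -/
def ZD (u : Heis → ℂ) (p : Heis) : ℂ := (XD u p - Complex.I * YD u p) / 2

/-- Z̄ = (X + iY)/2. -/
def ZbD (u : Heis → ℂ) (p : Heis) : ℂ := (XD u p + Complex.I * YD u p) / 2

/-- The complexification F = f₁ + i f₂ of the horizontal components. -/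
def CF (f1 f2 : Heis → ℝ) : Heis → ℂ := fun p => (f1 p : ℂ) + (f2 p : ℂ) * Complex.I

/-- Complexification of a real-valued function. -/
def Cplx (u : Heis → ℝ) : Heis → ℂ := fun p => (u p : ℂ)

/-- The horizontal Jacobian J_F = Xf₁·Yf₂ − Yf₁·Xf₂. -/
def JF (f1 f2 : Heis → ℝ) (p : Heis) : ℝ := XD f1 p * YD f2 p - YD f1 p * XD f2 p

/-- The contact equations on Ω. -/
def ContactOn (f1 f2 f3 : Heis → ℝ) (Ω : Set Heis) : Prop :=
  ∀ p ∈ Ω, XD f3 p - 2 * f2 p * XD f1 p + 2 * f1 p * XD f2 p = 0 ∧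
           YD f3 p - 2 * f2 p * YD f1 p + 2 * f1 p * YD f2 p = 0

/-- f = (f₁,f₂,f₃) is conformal on Ω: smooth, contact, J_F > 0, and the conformality
equations hold. -/
def ConformalOn (f1 f2 f3 : Heis → ℝ) (Ω : Set Heis) : Prop :=
  ContDiffOn ℝ (⊤ : ℕ∞) f1 Ω ∧ ContDiffOn ℝ (⊤ : ℕ∞) f2 Ω ∧ ContDiffOn ℝ (⊤ : ℕ∞) f3 Ω ∧
  ContactOn f1 f2 f3 Ω ∧ (∀ p ∈ Ω, 0 < JF f1 f2 p) ∧
  ∀ p ∈ Ω, (XD f1 p) ^ 2 + (XD f2 p) ^ 2 = (YD f1 p) ^ 2 + (YD f2 p) ^ 2 ∧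
           XD f1 p * YD f1 p + XD f2 p * YD f2 p = 0

/-- The sub-Laplacian Δ_H = X² + Y². -/
def LapH {E : Type*} [NormedAddCommGroup E] [NormedSpace ℝ E] (u : Heis → E) (p : Heis) : E :=
  XD (XD u) p + YD (YD u) p

/-- The CR Schwarzian derivative S_CR(f) = (1/2)·J_F·Z²(J_F⁻¹). -/
def SCR (f1 f2 : Heis → ℝ) (p : Heis) : ℂ :=
  (1 / 2 : ℂ) * (JF f1 f2 p : ℂ) * ZD (ZD (fun q => (((JF f1 f2 q)⁻¹ : ℝ) : ℂ))) p

/-- The classical type Schwarzian S_CL(f) = Z³F/ZF − (3/2)(Z²F/ZF)². -/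
def SCL (f1 f2 : Heis → ℝ) (p : Heis) : ℂ :=
  ZD (ZD (ZD (CF f1 f2))) p / ZD (CF f1 f2) p
    - (3 / 2 : ℂ) * (ZD (ZD (CF f1 f2)) p / ZD (CF f1 f2) p) ^ 2

/-- The Preschwarzian Pf = Z(ln J_F). -/
def PS (f1 f2 : Heis → ℝ) (p : Heis) : ℂ := ZD (Cplx (fun q => Real.log (JF f1 f2 q))) p

/-- The map (f₁,f₂,f₃) packaged as a map Heis → Heis. -/
def Fmap (f1 f2 f3 : Heis → ℝ) (p : Heis) : Heis := (f1 p, f2 p, f3 p)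

/-- Heisenberg group multiplication (z₁,t₁)(z₂,t₂) = (z₁+z₂, t₁+t₂+2 Im(z₁ conj z₂)). -/
def hmul (p q : Heis) : Heis :=
  (p.1 + q.1, p.2.1 + q.2.1, p.2.2 + q.2.2 + 2 * (q.1 * p.2.1 - p.1 * q.2.1))

/-- Left translation τ_p. -/
def tau (p : Heis) (w : Heis) : Heis := hmul p w

/-- Rotation r_φ(z,t) = (e^{iφ}z, t). -/
def rot (φ : ℝ) (w : Heis) : Heis :=
  (w.1 * Real.cos φ - w.2.1 * Real.sin φ, w.1 * Real.sin φ + w.2.1 * Real.cos φ, w.2.2)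

/-- Dilation δ_r(z,t) = (rz, r²t). -/
def dil (r : ℝ) (w : Heis) : Heis := (r * w.1, r * w.2.1, r ^ 2 * w.2.2)

/-- Complex first component of the Korányi inversion: z/(it − |z|²). -/
def iotaC (w : Heis) : ℂ :=
  ((w.1 : ℂ) + (w.2.1 : ℂ) * Complex.I) /
    ((w.2.2 : ℂ) * Complex.I - ((w.1 ^ 2 + w.2.1 ^ 2 : ℝ) : ℂ))

/-- The Korányi inversion ι(z,t) = (z/(it − |z|²), −t/(|z|⁴ + t²)). -/
def iotaMap (w : Heis) : Heis :=
  ((iotaC w).re, (iotaC w).im, -w.2.2 / ((w.1 ^ 2 + w.2.1 ^ 2) ^ 2 + w.2.2 ^ 2))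

section Algebra

open Polynomial

/-- The derivation of `K[X]` acting on coefficients by `d` and killing `X`. -/
def coeffDer {K : Type*} [Field K] (d : Derivation ℤ K K) : Derivation ℤ K[X] K[X] :=
  PolynomialModule.equivPolynomialSelf.compDer d.mapCoeffs

@[simp] lemma coeff_coeffDer {K : Type*} [Field K] (d : Derivation ℤ K K) (p : K[X]) (i : ℕ) :
    (coeffDer d p).coeff i = d (p.coeff i) := rfl

@[simp] lemma coeffDer_C {K : Type*} [Field K] (d : Derivation ℤ K K) (u : K) :
    coeffDer d (C u) = C (d u) := by
  ext i
  rw [coeff_coeffDer, coeff_C, coeff_C]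
  split_ifs <;> simp

@[simp] lemma coeffDer_X {K : Type*} [Field K] (d : Derivation ℤ K K) :
    coeffDer d (X : K[X]) = 0 := by
  ext i
  rw [coeff_coeffDer, coeff_X]
  split_ifs <;> simp

lemma natDegree_coeffDer_le {K : Type*} [Field K] (d : Derivation ℤ K K) (p : K[X]) :
    (coeffDer d p).natDegree ≤ p.natDegree := by
  rw [natDegree_le_iff_coeff_eq_zero]
  intro i hi
  rw [coeff_coeffDer, coeff_eq_zero_of_natDegree_lt hi, map_zero]

lemma derivative_coeffDer {K : Type*} [Field K] (d : Derivation ℤ K K) (p : K[X]) :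
    derivative (coeffDer d p) = coeffDer d (derivative p) := by
  ext i
  simp [coeff_derivative, coeff_coeffDer, Derivation.leibniz]
  ring

/-- If `d E = d₁ u + s d₂ u` for constants `u`, the chain rule for polynomial values. -/
lemma derivation_aeval {K E : Type*} [Field K] [Field E] [Algebra K E] (Z : Derivation ℤ E E)
    (d1 d2 : Derivation ℤ K K) (s : E)
    (hZ : ∀ u : K, Z (algebraMap K E u) = algebraMap K E (d1 u) + s * algebraMap K E (d2 u))
    (n : E) (p : K[X]) :
    Z (aeval n p) = aeval n (coeffDer d1 p) + s * aeval n (coeffDer d2 p)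
      + aeval n (derivative p) * Z n := by
  induction p using Polynomial.induction_on' with
  | add p q hp hq => simp only [map_add, hp, hq]; ring
  | monomial i u =>
    have h1 : ∀ d : Derivation ℤ K K, coeffDer d (monomial i u) = monomial i (d u) := by
      intro d
      ext j
      rw [coeff_coeffDer, coeff_monomial, coeff_monomial]
      split_ifs <;> simp
    simp only [h1, aeval_monomial, Derivation.leibniz, hZ, Derivation.leibniz_pow,
      derivative_monomial, smul_eq_mul, nsmul_eq_mul, map_mul, map_natCast]
    ring

/-- Primes occurring with different multiplicities in the numerator and denominator of a first
integral are Darboux polynomials. -/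
lemma prime_dvd_derivation {R : Type*} [CommRing R] [IsDomain R] [CharZero R]
    (D : Derivation ℤ R R) {π F G : R} (hπ : Prime π) {i j : ℕ} (hij : i ≠ j)
    {f g : R} (hf : ¬ π ∣ f) (hg : ¬ π ∣ g) (hF : F = π ^ i * f) (hG : G = π ^ j * g)
    (hc : ∀ c : ℤ, c ≠ 0 → IsUnit (c : R))
    (h : G * D F = F * D G) : π ∣ D π := by
  have key : ∀ (i : ℕ) (f : R), π * D (π ^ i * f) = π ^ i * (i * f * D π + π * D f) := by
    intro i f
    rcases i with _ | i
    · simp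
    · simp [Derivation.leibniz, Derivation.leibniz_pow]
      ring
  have h2 : G * (π * D F) = F * (π * D G) := by linear_combination π * h
  rw [hF, hG, key, key] at h2
  have h3 : π ^ (i + j) * (((i : R) - j) * (f * g * D π) + π * (g * D f - f * D g)) = 0 := by
    linear_combination h2
  have h4 := (mul_eq_zero.mp h3).resolve_left (pow_ne_zero _ hπ.ne_zero)
  have h5 : π ∣ ((i : R) - j) * (f * g * D π) := ⟨-(g * D f - f * D g), by linear_combination h4⟩
  have h6 : IsUnit ((i : R) - j) := by
    have := hc ((i : ℤ) - j) (by omega)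
    simpa using this
  rw [h6.dvd_mul_left] at h5
  rcases hπ.dvd_or_dvd h5 with h7 | h7
  · rcases hπ.dvd_or_dvd h7 with h8 | h8
    · exact absurd h8 hf
    · exact absurd h8 hg
  · exact h7

lemma isUnit_intCast_polynomial {K : Type*} [Field K] [CharZero K] (c : ℤ) (hc : c ≠ 0) :
    IsUnit (c : K[X]) := by
  have : (c : K[X]) = C (c : K) := by simp
  rw [this, isUnit_C]
  exact (Int.cast_ne_zero.mpr hc).isUnit

/-- Splitting off the maximal power of a prime. -/
lemma exists_eq_pow_mul_not_dvd {K : Type*} [Field K] {π p : K[X]} (hπ : Prime π) (hp : p ≠ 0) :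
    ∃ (i : ℕ) (f : K[X]), p = π ^ i * f ∧ ¬ π ∣ f := by
  have hfin : FiniteMultiplicity π p := FiniteMultiplicity.of_prime_left hπ hp
  obtain ⟨c, hc, hc'⟩ := hfin.exists_eq_pow_mul_and_not_dvd
  exact ⟨_, c, hc, hc'⟩

/-- A squarefree polynomial divides any polynomial divisible by all its prime factors. -/
lemma dvd_of_squarefree_of_primes {K : Type*} [Field K] {q p : K[X]} (hq : Squarefree q)
    (h : ∀ π, Prime π → π ∣ q → π ∣ p) : q ∣ p := by
  by_cases hp : p = 0
  · simp [hp]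
  have hq0 : q ≠ 0 := hq.ne_zero
  classical
  rw [← UniqueFactorizationMonoid.dvd_radical_iff hq.isRadical hp]
  refine (hq.isRadical.dvd_radical hq0).trans ?_
  rw [UniqueFactorizationMonoid.radical_dvd_radical_iff_normalizedFactors_subset_normalizedFactors]
  intro x hx
  rw [UniqueFactorizationMonoid.mem_normalizedFactors_iff' hq0] at hx
  rw [UniqueFactorizationMonoid.mem_normalizedFactors_iff' hp]
  exact ⟨hx.1, hx.2.1, h x hx.1.prime hx.2.2⟩

/-- Two commuting derivations of a field together with three elements of it. -/
structure CRData (K : Type*) [Field K] where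
  d1 : Derivation ℤ K K
  d2 : Derivation ℤ K K
  comm : ∀ u, d1 (d2 u) = d2 (d1 u)
  h : K
  k : K
  e : K

namespace CRData

variable {K : Type*} [Field K] (S : CRData K)

/-- The bracket `{h, k}`. -/
def hk : K := S.d1 S.h * S.d2 S.k - S.d2 S.h * S.d1 S.k

/-- The bracket `{h, e}`. -/
def he : K := S.d1 S.h * S.d2 S.e - S.d2 S.h * S.d1 S.e

/-- The bracket `{k, e}`. -/
def ke : K := S.d1 S.k * S.d2 S.e - S.d2 S.k * S.d1 S.e

/-- The derivative along `d1` of the quadratic `X0`. -/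
def a : K[X] := C (S.d1 S.h) * X ^ 2 - 2 * C (S.d1 S.k) * X - C (S.d1 S.e)

/-- The derivative along `d2` of the quadratic `X0`. -/
def b : K[X] := C (S.d2 S.h) * X ^ 2 - 2 * C (S.d2 S.k) * X - C (S.d2 S.e)

/-- Half the Wronskian `a' b - a b'`. -/
def w : K[X] := - C S.hk * X ^ 2 - C S.he * X + C S.ke

/-- The discriminant of `w`. -/
def disc : K := S.he ^ 2 + 4 * S.hk * S.ke

def U : K[X] := C S.h * X - C S.k

def V : K[X] := C S.k * X + C S.e

def X0 : K[X] := C S.h * X ^ 2 - 2 * C S.k * X - C S.e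

def Δ : K := S.k ^ 2 + S.h * S.e

/-- The derivation `b d1 - a d2` on polynomials. -/
def vf : Derivation ℤ K[X] K[X] := S.b • coeffDer S.d1 - S.a • coeffDer S.d2

/-- The polynomial `b vf(a) - a vf(b)`. -/
def P6 : K[X] := S.b * S.vf S.a - S.a * S.vf S.b

/-- The polynomial `b' vf(a) - a' vf(b)`. -/
def kap : K[X] := derivative S.b * S.vf S.a - derivative S.a * S.vf S.b

/-- The derivation `P d/dX - vf` on polynomials. -/
def der (P : K[X]) : Derivation ℤ K[X] K[X] := P • (derivative' : Derivation K K[X] K[X]).restrictScalars ℤ - S.vf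

lemma vf_apply (p : K[X]) : S.vf p = S.b * coeffDer S.d1 p - S.a * coeffDer S.d2 p := rfl

lemma der_apply (P p : K[X]) : S.der P p = P * derivative p - S.vf p := rfl

lemma vf_mul (p q : K[X]) : S.vf (p * q) = p * S.vf q + q * S.vf p := by
  simp [Derivation.leibniz]

@[simp] lemma vf_C (u : K) : S.vf (C u) = S.b * C (S.d1 u) - S.a * C (S.d2 u) := by
  simp [vf_apply]

@[simp] lemma vf_X : S.vf (X : K[X]) = 0 := by
  simp [vf_apply]

@[simp] lemma vf_two : S.vf (2 : K[X]) = 0 := by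
  simpa using S.vf.map_natCast 2

lemma wronskian_eq : derivative S.a * S.b - S.a * derivative S.b = 2 * S.w := by
  simp only [a, b, w, hk, he, ke, map_sub, map_mul]
  simp [derivative_mul]
  ring

lemma vf_U : S.vf S.U = S.w := by
  simp only [U, map_sub, vf_mul, vf_C, vf_X, w, hk, he, ke, map_mul, a, b]
  ring

lemma vf_V : S.vf S.V = X * S.w := by
  simp only [V, map_sub, map_add, vf_mul, vf_C, vf_X, w, hk, he, ke, map_mul, a, b]
  ring

lemma X0_eq : S.X0 = X * S.U - S.V := by
  simp only [X0, U, V]; ring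

lemma vf_X0 : S.vf S.X0 = 0 := by
  rw [X0_eq, map_sub, vf_mul, vf_U, vf_V, vf_X]; ring

lemma vf_k : S.vf (C S.k) = -C S.hk * X ^ 2 - C S.ke := by
  simp only [vf_C, hk, ke, map_sub, map_mul, a, b]; ring

lemma derivative_U : derivative S.U = C S.h := by
  simp [U, derivative_mul]

lemma derivative_V : derivative S.V = C S.k := by
  simp [V, derivative_mul]

lemma derivative_X0 : derivative S.X0 = 2 * S.U := by
  rw [X0_eq, derivative_sub, derivative_mul, derivative_U, derivative_V]
  simp only [U, derivative_X]; ring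

lemma der_X0 (P : K[X]) : S.der P S.X0 = 2 * S.U * P := by
  rw [der_apply, derivative_X0, vf_X0]; ring

lemma der_U (P : K[X]) : S.der P S.U = C S.h * P - S.w := by
  rw [der_apply, derivative_U, vf_U]; ring

lemma der_V (P : K[X]) : S.der P S.V = C S.k * P - X * S.w := by
  rw [der_apply, derivative_V, vf_V]; ring

lemma der_X (P : K[X]) : S.der P X = P := by
  rw [der_apply, vf_X, derivative_X]; ring

lemma der_mul (P p q : K[X]) : S.der P (p * q) = p * S.der P q + q * S.der P p := by
  simp [Derivation.leibniz]

lemma C_h_mul_X0 : C S.h * S.X0 = S.U ^ 2 - C S.Δ := by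
  simp only [X0, U, Δ, map_add, map_mul, map_pow]; ring

lemma C_h_mul_V : C S.h * S.V = C S.k * S.U + C S.Δ := by
  simp only [V, U, Δ, map_add, map_mul, map_pow]; ring

lemma coeffDer_d2_a : coeffDer S.d2 S.a = coeffDer S.d1 S.b := by
  have h2 : ∀ d : Derivation ℤ K K, coeffDer d (2 : K[X]) = 0 := fun d => by
    simpa using (coeffDer d).map_natCast 2
  simp [a, b, Derivation.leibniz, h2, S.comm]

lemma vf_w : 2 * S.vf S.w = derivative S.P6 - 3 * S.kap := by
  have h1 : 2 * S.vf S.w = S.vf (derivative S.a * S.b - S.a * derivative S.b) := by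
    rw [wronskian_eq, vf_mul, vf_two]; ring
  have hc := S.coeffDer_d2_a
  rw [h1, map_sub, vf_mul, vf_mul, P6, kap]
  simp only [vf_apply, derivative_sub, derivative_mul, derivative_coeffDer, hc]
  have hc' : coeffDer S.d2 (derivative S.a) = coeffDer S.d1 (derivative S.b) := by
    rw [← derivative_coeffDer, hc, derivative_coeffDer]
  rw [hc']
  ring

lemma b_mul_kap : S.b * S.kap = derivative S.b * S.P6 - 2 * S.w * S.vf S.b := by
  rw [← wronskian_eq, kap, P6]; ring

lemma a_mul_kap : S.a * S.kap = derivative S.a * S.P6 - 2 * S.w * S.vf S.a := by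
  rw [← wronskian_eq, kap, P6]; ring

/-- The polynomial `h₁ b - h₂ a`. -/
def eta : K[X] := C (S.d1 S.h) * S.b - C (S.d2 S.h) * S.a

lemma eta_eq : S.eta = -(2 * C S.hk * X + C S.he) := by
  simp only [eta, a, b, hk, he, map_sub, map_mul]; ring

lemma disc_eq : C S.disc = (C S.he + 2 * C S.hk * X) * (-S.eta) + 4 * C S.hk * S.w := by
  rw [eta_eq]
  simp only [disc, w, map_add, map_mul, map_pow, map_ofNat]; ring

/-- `w` lies in the ideal generated by `a` and `b`, hence so does the discriminant. -/
lemma w_dvd_disc_mul_kap (hP : S.w ∣ S.P6) : S.w ∣ C S.disc * S.kap := by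
  have h1 : S.w ∣ S.b * S.kap := by
    rw [b_mul_kap]
    exact dvd_sub (hP.mul_left _) ⟨2 * S.vf S.b, by ring⟩
  have h2 : S.w ∣ S.a * S.kap := by
    rw [a_mul_kap]
    exact dvd_sub (hP.mul_left _) ⟨2 * S.vf S.a, by ring⟩
  have : C S.disc * S.kap = (C S.he + 2 * C S.hk * X) *
      (C (S.d2 S.h) * (S.a * S.kap) - C (S.d1 S.h) * (S.b * S.kap))
      + S.w * (4 * C S.hk * S.kap) := by
    rw [disc_eq, eta]; ring
  rw [this]
  exact dvd_add ((dvd_sub (h2.mul_left _) (h1.mul_left _)).mul_left _) (dvd_mul_right _ _)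

end CRData

lemma squarefree_quadratic {K : Type*} [Field K] {p : K[X]} (α β γ : K)
    (hp : p = C α * X ^ 2 + C β * X + C γ) (hd : β ^ 2 - 4 * α * γ ≠ 0) : Squarefree p := by
  apply Separable.squarefree
  have hd' : derivative p = 2 * C α * X + C β := by
    rw [hp]; simp [derivative_mul]; ring
  refine ⟨C (β ^ 2 - 4 * α * γ)⁻¹ * (-4 * C α), C (β ^ 2 - 4 * α * γ)⁻¹ * derivative p, ?_⟩
  have h1 : C (β ^ 2 - 4 * α * γ)⁻¹ * C (β ^ 2 - 4 * α * γ) = (1 : K[X]) := by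
    rw [← C_mul, inv_mul_cancel₀ hd, C_1]
  rw [← h1, hd', hp]
  simp only [map_sub, map_pow, map_mul, map_ofNat]
  ring

lemma not_prime_dvd_C {K : Type*} [Field K] {π : K[X]} (hπ : Prime π) {c : K} (hc : c ≠ 0) :
    ¬ π ∣ C c := fun h =>
  hπ.not_isUnit (isUnit_of_dvd_unit h (isUnit_C.mpr hc.isUnit))

namespace CRData

variable {K : Type*} [Field K] (S : CRData K)

lemma natDegree_a_le : S.a.natDegree ≤ 2 := by
  rw [a]; compute_degree

lemma natDegree_b_le : S.b.natDegree ≤ 2 := by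
  rw [b]; compute_degree

lemma natDegree_w_le : S.w.natDegree ≤ 2 := by
  rw [w]; compute_degree

lemma natDegree_U (hh : S.h ≠ 0) : S.U.natDegree = 1 := by
  rw [U]; compute_degree!

lemma natDegree_V (hk : S.k ≠ 0) : S.V.natDegree = 1 := by
  rw [V]; compute_degree!

lemma natDegree_X0 (hh : S.h ≠ 0) : S.X0.natDegree = 2 := by
  rw [X0]; compute_degree!

lemma prime_U (hh : S.h ≠ 0) : Prime S.U := by
  apply prime_of_degree_eq_one
  rw [show (1 : WithBot ℕ) = ((1 : ℕ) : WithBot ℕ) from rfl,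
    degree_eq_iff_natDegree_eq_of_pos one_pos, S.natDegree_U hh]

lemma prime_V (hk : S.k ≠ 0) : Prime S.V := by
  apply prime_of_degree_eq_one
  rw [show (1 : WithBot ℕ) = ((1 : ℕ) : WithBot ℕ) from rfl,
    degree_eq_iff_natDegree_eq_of_pos one_pos, S.natDegree_V hk]

section

variable {S} {π : K[X]}

lemma not_dvd_U_of_dvd_X (hπ : Prime π) (hk : S.k ≠ 0) (h : π ∣ X) : ¬ π ∣ S.U := fun h' =>
  not_prime_dvd_C hπ hk <| by
    have : C S.k = X * C S.h - S.U := by rw [U]; ring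
    rw [this]; exact dvd_sub (h.mul_right _) h'

lemma not_dvd_V_of_dvd_X (hπ : Prime π) (he : S.e ≠ 0) (h : π ∣ X) : ¬ π ∣ S.V := fun h' =>
  not_prime_dvd_C hπ he <| by
    have : C S.e = S.V - X * C S.k := by rw [V]; ring
    rw [this]; exact dvd_sub h' (h.mul_right _)

lemma not_dvd_X0_of_dvd_X (hπ : Prime π) (he : S.e ≠ 0) (h : π ∣ X) : ¬ π ∣ S.X0 := fun h' =>
  not_dvd_V_of_dvd_X hπ he h <| by
    have : S.V = X * S.U - S.X0 := by rw [X0_eq]; ring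
    rw [this]; exact dvd_sub (h.mul_right _) h'

lemma not_dvd_X0_of_dvd_U (hπ : Prime π) (hΔ : S.Δ ≠ 0) (h : π ∣ S.U) : ¬ π ∣ S.X0 := fun h' =>
  not_prime_dvd_C hπ hΔ <| by
    have : C S.Δ = S.U * S.U - C S.h * S.X0 := by rw [C_h_mul_X0]; ring
    rw [this]; exact dvd_sub (h.mul_right _) (h'.mul_left _)

lemma not_dvd_V_of_dvd_U (hπ : Prime π) (hΔ : S.Δ ≠ 0) (h : π ∣ S.U) : ¬ π ∣ S.V := fun h' =>
  not_prime_dvd_C hπ hΔ <| by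
    have : C S.Δ = C S.h * S.V - C S.k * S.U := by rw [C_h_mul_V]; ring
    rw [this]; exact dvd_sub (h'.mul_left _) (h.mul_left _)

lemma not_dvd_X0_of_dvd_V (hπ : Prime π) (he : S.e ≠ 0) (hΔ : S.Δ ≠ 0) (h : π ∣ S.V) :
    ¬ π ∣ S.X0 := fun h' => by
  have h1 : π ∣ X * S.U := by
    have : X * S.U = S.X0 + S.V := by rw [X0_eq]; ring
    rw [this]; exact dvd_add h' h
  rcases hπ.dvd_or_dvd h1 with h2 | h2
  · exact not_dvd_V_of_dvd_X hπ he h2 h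
  · exact not_dvd_V_of_dvd_U hπ hΔ h2 h

end

/-- The leading behaviour of `der P` when `P` has degree at least four. -/
lemma natDegree_der_le {P : K[X]} (hP : 4 ≤ P.natDegree) (p : K[X]) :
    (S.der P p).natDegree ≤ p.natDegree + (P.natDegree - 1) ∧
    (S.der P p).coeff (p.natDegree + (P.natDegree - 1)) =
      p.natDegree * p.leadingCoeff * P.leadingCoeff := by
  have hv : (S.vf p).natDegree ≤ p.natDegree + 2 := by
    rw [vf_apply]
    refine (natDegree_sub_le _ _).trans (max_le ?_ ?_)
    · refine natDegree_mul_le.trans ?_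
      have := natDegree_coeffDer_le S.d1 p
      have := S.natDegree_b_le
      omega
    · refine natDegree_mul_le.trans ?_
      have := natDegree_coeffDer_le S.d2 p
      have := S.natDegree_a_le
      omega
  have hv0 : (S.vf p).coeff (p.natDegree + (P.natDegree - 1)) = 0 :=
    coeff_eq_zero_of_natDegree_lt (by omega)
  rw [der_apply]
  rcases Nat.eq_zero_or_pos p.natDegree with h0 | h0
  · have hp' : derivative p = 0 := by
      rw [eq_C_of_natDegree_eq_zero h0, derivative_C]
    rw [hp', mul_zero, zero_sub]
    refine ⟨by rw [natDegree_neg]; omega, ?_⟩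
    rw [coeff_neg, hv0, h0]; simp
  · have hd := natDegree_derivative_le p
    refine ⟨(natDegree_sub_le _ _).trans (max_le (natDegree_mul_le.trans (by omega)) (by omega)), ?_⟩
    rw [coeff_sub, hv0, sub_zero]
    have : p.natDegree + (P.natDegree - 1) = P.natDegree + (p.natDegree - 1) := by omega
    rw [this, coeff_mul_add_eq_of_natDegree_le le_rfl hd, coeff_derivative]
    have h3 : p.natDegree - 1 + 1 = p.natDegree := by omega
    rw [h3]
    have h4 : ((p.natDegree - 1 : ℕ) : K) + 1 = p.natDegree := by
      exact_mod_cast congrArg (Nat.cast : ℕ → K) h3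
    rw [h4, leadingCoeff, leadingCoeff]
    ring

/-- For `deg P ≥ 4` a rational first integral has numerator and denominator of equal degree. -/
lemma natDegree_eq_of_first_integral [CharZero K] {P F G : K[X]} (hP : 4 ≤ P.natDegree)
    (hF : F ≠ 0) (hG : G ≠ 0) (h : G * S.der P F = F * S.der P G) :
    F.natDegree = G.natDegree := by
  obtain ⟨hF1, hF2⟩ := S.natDegree_der_le hP F
  obtain ⟨hG1, hG2⟩ := S.natDegree_der_le hP G
  have h1 : coeff _ (F.natDegree + G.natDegree + (P.natDegree - 1)) = coeff _ _ :=
    congrArg (fun p => coeff p (F.natDegree + G.natDegree + (P.natDegree - 1))) h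
  have e1 : F.natDegree + G.natDegree + (P.natDegree - 1) =
    G.natDegree + (F.natDegree + (P.natDegree - 1)) := by ring
  have e2 : F.natDegree + G.natDegree + (P.natDegree - 1) =
    F.natDegree + (G.natDegree + (P.natDegree - 1)) := by ring
  nth_rewrite 1 [e1] at h1
  rw [e2, coeff_mul_add_eq_of_natDegree_le le_rfl hF1, coeff_mul_add_eq_of_natDegree_le le_rfl hG1, hF2, hG2,
    coeff_natDegree, coeff_natDegree] at h1
  have hP0 : P ≠ 0 := by rintro rfl; simp at hP
  have h2 : (F.leadingCoeff * G.leadingCoeff * P.leadingCoeff) *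
      ((F.natDegree : K) - G.natDegree) = 0 := by linear_combination h1
  have h3 := (mul_eq_zero.mp h2).resolve_left
    (mul_ne_zero (mul_ne_zero (leadingCoeff_ne_zero.mpr hF) (leadingCoeff_ne_zero.mpr hG))
      (leadingCoeff_ne_zero.mpr hP0))
  exact_mod_cast sub_eq_zero.mp h3

end CRData

namespace CRData

variable {K : Type*} [Field K] (S : CRData K)

lemma squarefree_X0 [CharZero K] (hΔ : S.Δ ≠ 0) : Squarefree S.X0 := by
  refine squarefree_quadratic S.h (-2 * S.k) (-S.e) ?_ ?_
  · simp only [X0, map_neg, map_mul, map_ofNat]; ring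
  · intro h
    apply hΔ
    have : (4 : K) * S.Δ = 0 := by rw [Δ]; linear_combination h
    simpa using this

/-- Structure of `P` and `w` forced by a first integral of the derivation `der P`. -/
lemma exists_of_first_integral [CharZero K] (hh : S.h ≠ 0) (hk : S.k ≠ 0) (he : S.e ≠ 0)
    (hΔ : S.Δ ≠ 0) {P M : K[X]} (hP : P ≠ 0) (hM : M = C S.k * P - X * S.w) (hM0 : M ≠ 0)
    (hint : (P ^ 2 * (S.U * S.V * X) ^ 3) * S.der P (M ^ 2 * S.X0 ^ 6) =
      (M ^ 2 * S.X0 ^ 6) * S.der P (P ^ 2 * (S.U * S.V * X) ^ 3)) :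
    ∃ c2 c3 : K, c2 ≠ 0 ∧ c3 ≠ 0 ∧ P = C c2 * (X * S.X0) ∧
      S.w = C (c2 * S.k) * S.X0 - C c3 * (S.U * S.V) := by
  have hc := isUnit_intCast_polynomial (K := K)
  have hX : Prime (X : K[X]) := prime_X
  have hU := S.prime_U hh
  have hV := S.prime_V hk
  have hX0 : S.X0 ≠ 0 := fun h => by
    have := S.natDegree_X0 hh
    rw [h] at this; simp at this
  have ndm : ∀ {π p q : K[X]}, Prime π → ¬ π ∣ p → ¬ π ∣ q → ¬ π ∣ p * q :=
    fun hπ hp hq h => (hπ.dvd_or_dvd h).elim hp hq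
  have ndp : ∀ {π p : K[X]} (i : ℕ), Prime π → ¬ π ∣ p → ¬ π ∣ p ^ i :=
    fun i hπ hp h => hp (hπ.dvd_of_dvd_pow h)
  have VX : ¬ S.V ∣ X := fun h => by
    exact S.prime_V hk |>.not_isUnit <| (hX.irreducible.dvd_iff.mp h).resolve_right
      (fun h' => not_dvd_V_of_dvd_X hX he dvd_rfl h'.dvd)
  have UX : ¬ S.U ∣ X := fun h => by
    exact hU.not_isUnit <| (hX.irreducible.dvd_iff.mp h).resolve_right
      (fun h' => not_dvd_U_of_dvd_X hX hk dvd_rfl h'.dvd)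
  have VU : ¬ S.V ∣ S.U := fun h => not_dvd_V_of_dvd_U hV hΔ h dvd_rfl
  have UV : ¬ S.U ∣ S.V := not_dvd_V_of_dvd_U hU hΔ dvd_rfl
  -- the factor `X`
  have hXP : X ∣ P := by
    obtain ⟨i, m, hm, hm'⟩ := exists_eq_pow_mul_not_dvd hX hM0
    obtain ⟨j, p, hp, hp'⟩ := exists_eq_pow_mul_not_dvd hX hP
    have := prime_dvd_derivation (S.der P) hX (i := 2 * i) (j := 2 * j + 3) (by omega)
      (f := m ^ 2 * S.X0 ^ 6) (g := p ^ 2 * (S.U * S.V) ^ 3)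
      (ndm hX (ndp 2 hX hm') (ndp 6 hX (not_dvd_X0_of_dvd_X hX he dvd_rfl)))
      (ndm hX (ndp 2 hX hp') (ndp 3 hX (ndm hX (not_dvd_U_of_dvd_X hX hk dvd_rfl)
        (not_dvd_V_of_dvd_X hX he dvd_rfl))))
      (by nth_rewrite 1 [hm]; ring) (by nth_rewrite 1 [hp]; ring) hc hint
    exact this.trans (dvd_of_eq (S.der_X P))
  -- the factor `U`
  have hUP : S.U ∣ C S.h * P - S.w := by
    obtain ⟨i, m, hm, hm'⟩ := exists_eq_pow_mul_not_dvd hU hM0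
    obtain ⟨j, p, hp, hp'⟩ := exists_eq_pow_mul_not_dvd hU hP
    have := prime_dvd_derivation (S.der P) hU (i := 2 * i) (j := 2 * j + 3) (by omega)
      (f := m ^ 2 * S.X0 ^ 6) (g := p ^ 2 * (S.V * X) ^ 3)
      (ndm hU (ndp 2 hU hm') (ndp 6 hU (not_dvd_X0_of_dvd_U hU hΔ dvd_rfl)))
      (ndm hU (ndp 2 hU hp') (ndp 3 hU (ndm hU UV UX)))
      (by nth_rewrite 1 [hm]; ring) (by nth_rewrite 1 [hp]; ring) hc hint
    exact this.trans (dvd_of_eq (S.der_U P))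
  -- the factor `V`
  have hVP : S.V ∣ M := by
    obtain ⟨i, m, hm, hm'⟩ := exists_eq_pow_mul_not_dvd hV hM0
    obtain ⟨j, p, hp, hp'⟩ := exists_eq_pow_mul_not_dvd hV hP
    have := prime_dvd_derivation (S.der P) hV (i := 2 * i) (j := 2 * j + 3) (by omega)
      (f := m ^ 2 * S.X0 ^ 6) (g := p ^ 2 * (S.U * X) ^ 3)
      (ndm hV (ndp 2 hV hm') (ndp 6 hV (not_dvd_X0_of_dvd_V hV he hΔ dvd_rfl)))
      (ndm hV (ndp 2 hV hp') (ndp 3 hV (ndm hV VU VX)))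
      (by nth_rewrite 1 [hm]; ring) (by nth_rewrite 1 [hp]; ring) hc hint
    exact this.trans (dvd_of_eq ((S.der_V P).trans hM.symm))
  -- the factor `X0`
  have hX0P : S.X0 ∣ P := by
    refine dvd_of_squarefree_of_primes (S.squarefree_X0 hΔ) fun π hπ hd => ?_
    obtain ⟨t, ht⟩ := hd
    have ht' : ¬ π ∣ t := fun ⟨t', h'⟩ =>
      hπ.not_isUnit (S.squarefree_X0 hΔ π ⟨t', by rw [ht, h']; ring⟩)
    have hπ0 : π ∣ S.X0 := ⟨t, ht⟩
    have hπU : ¬ π ∣ S.U := fun h => not_dvd_X0_of_dvd_U hπ hΔ h hπ0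
    have hπV : ¬ π ∣ S.V := fun h => not_dvd_X0_of_dvd_V hπ he hΔ h hπ0
    have hπX : ¬ π ∣ X := fun h => not_dvd_X0_of_dvd_X hπ he h hπ0
    obtain ⟨i, m, hm, hm'⟩ := exists_eq_pow_mul_not_dvd hπ hM0
    obtain ⟨j, p, hp, hp'⟩ := exists_eq_pow_mul_not_dvd hπ hP
    by_cases hij : 2 * i + 6 = 2 * j
    · rw [hp]
      exact (dvd_pow_self π (by omega)).mul_right _
    · have := prime_dvd_derivation (S.der P) hπ hij
        (f := m ^ 2 * t ^ 6) (g := p ^ 2 * (S.U * S.V * X) ^ 3)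
        (ndm hπ (ndp 2 hπ hm') (ndp 6 hπ ht'))
        (ndm hπ (ndp 2 hπ hp') (ndp 3 hπ (ndm hπ (ndm hπ hπU hπV) hπX)))
        (by rw [ht]; nth_rewrite 1 [hm]; ring) (by nth_rewrite 1 [hp]; ring) hc hint
      have h2 : π ∣ 2 * S.U * P := by
        rw [← der_X0, ht, der_mul]
        exact dvd_add (dvd_mul_right _ _) (this.mul_left _)
      refine (hπ.dvd_or_dvd h2).resolve_left (ndm hπ ?_ hπU)
      rw [show (2 : K[X]) = C (2 : K) from (map_ofNat C 2).symm]
      exact not_prime_dvd_C hπ two_ne_zero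
  -- the degree bound
  have hdeg : P.natDegree ≤ 3 := by
    by_contra hlt
    have h4 : 4 ≤ P.natDegree := by omega
    have hU0 := hU.ne_zero
    have hV0 := hV.ne_zero
    have hMd : M.natDegree = P.natDegree := by
      have h1 : (X * S.w).natDegree ≤ 3 := by
        refine natDegree_mul_le.trans ?_
        have := S.natDegree_w_le
        rw [natDegree_X]; omega
      have h2 : (C S.k * P).natDegree = P.natDegree := natDegree_C_mul hk
      rw [hM, natDegree_sub_eq_left_of_natDegree_lt (by omega), h2]
    have hUVX : S.U * S.V * X ≠ 0 := mul_ne_zero (mul_ne_zero hU0 hV0) X_ne_zero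
    have := S.natDegree_eq_of_first_integral h4
      (mul_ne_zero (pow_ne_zero 2 hM0) (pow_ne_zero 6 hX0))
      (mul_ne_zero (pow_ne_zero 2 hP) (pow_ne_zero 3 hUVX)) hint
    rw [natDegree_mul (pow_ne_zero 2 hM0) (pow_ne_zero 6 hX0),
      natDegree_mul (pow_ne_zero 2 hP) (pow_ne_zero 3 hUVX), natDegree_pow, natDegree_pow,
      natDegree_pow, natDegree_pow, natDegree_mul (mul_ne_zero hU0 hV0) X_ne_zero,
      natDegree_mul hU0 hV0, natDegree_X, S.natDegree_U hh, S.natDegree_V hk,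
      S.natDegree_X0 hh, hMd] at this
    omega
  have hcop : IsCoprime (X : K[X]) S.X0 := by
    rw [(irreducible_X : Irreducible (X : K[X])).coprime_iff_not_dvd]
    exact not_dvd_X0_of_dvd_X hX he dvd_rfl
  obtain ⟨g, hg⟩ := hcop.mul_dvd hXP hX0P
  have hg0 : g ≠ 0 := by rintro rfl; exact hP (by rw [hg, mul_zero])
  have hgd : g.natDegree = 0 := by
    rw [hg, natDegree_mul (mul_ne_zero X_ne_zero hX0) hg0, natDegree_mul X_ne_zero hX0,
      natDegree_X, S.natDegree_X0 hh] at hdeg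
    omega
  obtain ⟨c2, rfl⟩ : ∃ c, g = C c := ⟨_, eq_C_of_natDegree_eq_zero hgd⟩
  have hPe : P = C c2 * (X * S.X0) := by rw [hg]; ring
  have hMe : M = X * (C (c2 * S.k) * S.X0 - S.w) := by
    rw [hM, hPe, C_mul]; ring
  have hVN : S.V ∣ C (c2 * S.k) * S.X0 - S.w := by
    rw [hMe] at hVP
    exact (hV.dvd_or_dvd hVP).resolve_left VX
  have hUN : S.U ∣ C (c2 * S.k) * S.X0 - S.w := by
    have : C (c2 * S.k) * S.X0 - S.w = (C S.h * P - S.w) - S.U * (C c2 * S.X0) := by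
      rw [hPe, C_mul, U]; ring
    rw [this]
    exact dvd_sub hUP (dvd_mul_right _ _)
  have hcop2 : IsCoprime S.U S.V := by
    rw [hU.irreducible.coprime_iff_not_dvd]; exact UV
  obtain ⟨g', hg'⟩ := hcop2.mul_dvd hUN hVN
  have hg'0 : g' ≠ 0 := by
    rintro rfl
    apply hM0
    rw [hMe, hg']; ring
  have hg'd : g'.natDegree = 0 := by
    have h1 : (C (c2 * S.k) * S.X0 - S.w).natDegree ≤ 2 := by
      refine (natDegree_sub_le _ _).trans (max_le ?_ S.natDegree_w_le)
      exact (natDegree_C_mul_le _ _).trans (S.natDegree_X0 hh).le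
    rw [hg', natDegree_mul (mul_ne_zero hU.ne_zero hV.ne_zero) hg'0,
      natDegree_mul hU.ne_zero hV.ne_zero, S.natDegree_U hh, S.natDegree_V hk] at h1
    omega
  obtain ⟨c3, rfl⟩ : ∃ c, g' = C c := ⟨_, eq_C_of_natDegree_eq_zero hg'd⟩
  refine ⟨c2, c3, ?_, ?_, hPe, by linear_combination -hg'⟩
  · rintro rfl; simp at hg0
  · rintro rfl; simp at hg'0

end CRData

namespace CRData

variable {K : Type*} [Field K] (S : CRData K)

lemma sq_dvd_w_of_dvd [CharZero K] {d : K[X]} (ha : d ∣ S.a) (hb : d ∣ S.b) : d ^ 2 ∣ S.w := by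
  obtain ⟨α, hα⟩ := ha
  obtain ⟨β, hβ⟩ := hb
  have h1 : 2 * S.w = d ^ 2 * (derivative α * β - α * derivative β) := by
    rw [← wronskian_eq, hα, hβ, derivative_mul, derivative_mul]; ring
  have h2 : S.w = C (1 / 2 : K) * (2 * S.w) := by
    rw [show (2 : K[X]) = C (2 : K) from (map_ofNat C 2).symm, ← mul_assoc, ← C_mul]
    simp
  rw [h2, h1]
  exact (dvd_mul_right _ _).mul_left _

lemma cube_dvd_P6_of_dvd {d : K[X]} (ha : d ∣ S.a) (hb : d ∣ S.b) : d ^ 3 ∣ S.P6 := by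
  obtain ⟨α, hα⟩ := ha
  obtain ⟨β, hβ⟩ := hb
  have hv : ∀ p, S.vf p = d * (β * coeffDer S.d1 p - α * coeffDer S.d2 p) := fun p => by
    rw [vf_apply, hα, hβ]; ring
  refine ⟨β * (β * coeffDer S.d1 α - α * coeffDer S.d2 α)
    - α * (β * coeffDer S.d1 β - α * coeffDer S.d2 β), ?_⟩
  rw [P6, hv, hv, hα, hβ]
  simp only [Derivation.leibniz, smul_eq_mul]
  ring

/-- When the discriminant vanishes, `w` is constant or `a` and `b` have a common root. -/
lemma isUnit_w_or_common_root [CharZero K] (hw : S.w ≠ 0) (hd : S.disc = 0) :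
    IsUnit S.w ∨ ∃ ω : K, (X - C ω) ∣ S.a ∧ (X - C ω) ∣ S.b := by
  by_cases h1 : S.hk = 0
  · left
    have h2 : S.he = 0 := by
      have : S.he ^ 2 = 0 := by rw [disc, h1] at hd; linear_combination hd
      exact pow_eq_zero_iff (two_ne_zero) |>.mp this
    have h3 : S.w = C S.ke := by rw [w, h1, h2]; simp
    rw [h3] at hw ⊢
    exact isUnit_C.mpr (C_ne_zero.mp hw).isUnit
  · right
    have h4 : ∀ u v : K, (4 * S.hk ^ 2) * u = v * S.disc → u = 0 := fun u v hu =>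
      (mul_eq_zero.mp (hu.trans (by rw [hd, mul_zero]))).resolve_left
        (mul_ne_zero (by norm_num) (pow_ne_zero 2 h1))
    have h5 : 2 * S.hk * (-S.he / (2 * S.hk)) = -S.he := by field_simp
    refine ⟨-S.he / (2 * S.hk), ?_, ?_⟩
    · rw [dvd_iff_isRoot, IsRoot.def]
      apply h4 _ (S.d1 S.h)
      simp only [a, eval_sub, eval_mul, eval_C, eval_pow, eval_X, eval_ofNat]
      generalize -S.he / (2 * S.hk) = ω at h5
      have h6 : 4 * S.hk ^ 2 * ω ^ 2 = S.he ^ 2 := by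
        linear_combination (2 * S.hk * ω - S.he) * h5
      have h7 : S.d1 S.h * S.ke - S.d1 S.k * S.he + S.d1 S.e * S.hk = 0 := by
        simp only [hk, he, ke]; ring
      rw [disc]
      linear_combination S.d1 S.h * h6 - 4 * S.d1 S.k * S.hk * h5 - 4 * S.hk * h7
    · rw [dvd_iff_isRoot, IsRoot.def]
      apply h4 _ (S.d2 S.h)
      simp only [b, eval_sub, eval_mul, eval_C, eval_pow, eval_X, eval_ofNat]
      generalize -S.he / (2 * S.hk) = ω at h5
      have h6 : 4 * S.hk ^ 2 * ω ^ 2 = S.he ^ 2 := by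
        linear_combination (2 * S.hk * ω - S.he) * h5
      have h7 : S.d2 S.h * S.ke - S.d2 S.k * S.he + S.d2 S.e * S.hk = 0 := by
        simp only [hk, he, ke]; ring
      rw [disc]
      linear_combination S.d2 S.h * h6 - 4 * S.d2 S.k * S.hk * h5 - 4 * S.hk * h7

/-- When the discriminant vanishes, `w` divides `P6`. -/
lemma w_dvd_P6_of_disc_eq_zero [CharZero K] (hw : S.w ≠ 0) (hd : S.disc = 0) : S.w ∣ S.P6 := by
  rcases S.isUnit_w_or_common_root hw hd with h | ⟨ω, ha, hb⟩
  · exact h.dvd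
  · obtain ⟨g, hg⟩ := S.sq_dvd_w_of_dvd ha hb
    have hg0 : g ≠ 0 := by rintro rfl; exact hw (by rw [hg, mul_zero])
    have hgd : g.natDegree = 0 := by
      have h1 := S.natDegree_w_le
      rw [hg, natDegree_mul (pow_ne_zero 2 (X_sub_C_ne_zero ω)) hg0, natDegree_pow,
        natDegree_X_sub_C] at h1
      omega
    have hgu : IsUnit g := by
      rw [eq_C_of_natDegree_eq_zero hgd] at hg0 ⊢
      exact isUnit_C.mpr (C_ne_zero.mp hg0).isUnit
    rw [hg, hgu.mul_right_dvd]
    exact (pow_dvd_pow _ (by norm_num)).trans (S.cube_dvd_P6_of_dvd ha hb)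

/-- The ratio of the two constants of `exists_of_first_integral` is four. -/
lemma c3_eq_four_mul_c2 [CharZero K] (hh : S.h ≠ 0) (hk : S.k ≠ 0) (he : S.e ≠ 0)
    (hΔ : S.Δ ≠ 0) {P M : K[X]} (hM : M = C S.k * P - X * S.w)
    (hint : (P ^ 2 * (S.U * S.V * X) ^ 3) * S.der P (M ^ 2 * S.X0 ^ 6) =
      (M ^ 2 * S.X0 ^ 6) * S.der P (P ^ 2 * (S.U * S.V * X) ^ 3))
    (hw : S.w ≠ 0) (hP6 : S.P6 = 2 * S.w * P)
    {c2 c3 : K} (hc2 : c2 ≠ 0) (hc3 : c3 ≠ 0) (hP : P = C c2 * (X * S.X0))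
    (hwe : S.w = C (c2 * S.k) * S.X0 - C c3 * (S.U * S.V)) : c3 = 4 * c2 := by
  have hX : Prime (X : K[X]) := prime_X
  have hU := S.prime_U hh
  have hV := S.prime_V hk
  have hU0 := hU.ne_zero
  have hV0 := hV.ne_zero
  have hX0 : S.X0 ≠ 0 := fun h => by
    have := S.natDegree_X0 hh
    rw [h] at this; simp at this
  set D : K[X] := C c2 with hD
  set N : K[X] := C c3 with hN
  have hD0 : D ≠ 0 := C_ne_zero.mpr hc2
  have hN0 : N ≠ 0 := C_ne_zero.mpr hc3
  have hwe' : S.w = D * C S.k * S.X0 - N * (S.U * S.V) := by rw [hwe, C_mul]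
  -- coefficients of `w`
  have hcoef : S.w = C ((c2 - c3) * S.k * S.h) * X ^ 2
      + C (-2 * c2 * S.k ^ 2 - c3 * (S.h * S.e - S.k ^ 2)) * X + C (-(c2 - c3) * S.k * S.e) := by
    rw [hwe', hD, hN, X0, U, V]
    simp only [map_sub, map_mul, map_neg, map_pow, map_ofNat]
    ring
  have co : ∀ u v t : K, (C u * X ^ 2 + C v * X + C t).coeff 2 = u ∧
      (C u * X ^ 2 + C v * X + C t).coeff 1 = v ∧ (C u * X ^ 2 + C v * X + C t).coeff 0 = t := by
    intro u v t
    refine ⟨?_, ?_, ?_⟩ <;> simp [coeff_X, coeff_C]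
  have hw' : S.w = C (-S.hk) * X ^ 2 + C (-S.he) * X + C S.ke := by
    rw [w]; simp only [map_neg]; ring
  have hhk : S.hk = -((c2 - c3) * S.k * S.h) := by
    have := (co _ _ _).1.symm.trans ((congrArg (coeff · 2) (hw'.symm.trans hcoef)).trans (co _ _ _).1)
    linear_combination -this
  have hke : S.ke = -(c2 - c3) * S.k * S.e := by
    exact (co _ _ _).2.2.symm.trans
      ((congrArg (coeff · 0) (hw'.symm.trans hcoef)).trans (co _ _ _).2.2)
  have hvk : S.vf (C S.k) = (D - N) * C S.k * (X * S.U + S.V) := by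
    rw [vf_k, hhk, hke, hD, hN, U, V]
    simp only [map_neg, map_mul, map_sub]; ring
  -- the derivation on the basic polynomials
  have dX0 : S.der P S.X0 = 2 * S.U * (D * (X * S.X0)) := by rw [der_X0, hP]
  have dU : S.der P S.U = S.U * (D * S.X0 + N * S.V) := by
    rw [der_U, hwe', hP, U]; ring
  have hMe : M = N * (X * S.U * S.V) := by rw [hM, hP, hwe']; ring
  have dV : S.der P S.V = S.V * (N * (X * S.U)) := by
    rw [der_V, ← hM, hMe]; ring
  have dX : S.der P X = X * (D * S.X0) := by rw [der_X, hP]; ring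
  have dC : ∀ c : K, S.der P (C c) = - S.vf (C c) := fun c => by
    rw [der_apply, derivative_C]; ring
  have dk : S.der P (C S.k) = - ((D - N) * C S.k * (X * S.U + S.V)) := by rw [dC, hvk]
  have dpow : ∀ (p : K[X]) (i : ℕ), S.der P (p ^ (i + 1)) = (i + 1 : ℕ) * p ^ i * S.der P p := by
    intro p i
    rw [Derivation.leibniz_pow]
    simp [mul_assoc]
  -- the differential equation for the ratio
  have R1 : 2 * (D * S.vf N - N * S.vf D) = D * N * (4 * D - N) * (X * S.U + S.V) := by
    have e1 : M ^ 2 * S.X0 ^ 6 = (X * S.U * S.V * S.X0) ^ 2 * (N ^ 2 * S.X0 ^ 4) := by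
      rw [hMe]; ring
    have e2 : P ^ 2 * (S.U * S.V * X) ^ 3 =
        (X * S.U * S.V * S.X0) ^ 2 * (D ^ 2 * (S.U * S.V * X ^ 3)) := by
      rw [hP]; ring
    rw [e1, e2, der_mul, der_mul _ _ _ (D ^ 2 * _)] at hint
    have hG : (X * S.U * S.V * S.X0) ^ 2 ≠ 0 :=
      pow_ne_zero 2 (mul_ne_zero (mul_ne_zero (mul_ne_zero X_ne_zero hU0) hV0) hX0)
    have h1 : ((X * S.U * S.V * S.X0) ^ 2) ^ 2 *
        ((D ^ 2 * (S.U * S.V * X ^ 3)) * S.der P (N ^ 2 * S.X0 ^ 4)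
          - (N ^ 2 * S.X0 ^ 4) * S.der P (D ^ 2 * (S.U * S.V * X ^ 3))) = 0 := by
      linear_combination hint
    have h2 := (mul_eq_zero.mp h1).resolve_left (pow_ne_zero 2 hG)
    simp only [der_mul, dpow, dX0, dU, dV, dX] at h2
    rw [hN, dC, ← hN, hD, dC, ← hD] at h2
    push_cast at h2
    have h3 : (D * N * (S.U * S.V * X ^ 3 * S.X0 ^ 4)) *
        (2 * (D * S.vf N - N * S.vf D) - D * N * (4 * D - N) * (X * S.U + S.V)) = 0 := by
      rw [X0_eq] at h2 ⊢
      linear_combination -h2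
    have h4 := (mul_eq_zero.mp h3).resolve_left (mul_ne_zero (mul_ne_zero hD0 hN0)
      (mul_ne_zero (mul_ne_zero (mul_ne_zero hU0 hV0) (pow_ne_zero 3 X_ne_zero))
        (pow_ne_zero 4 hX0)))
    linear_combination h4
  have hD_unit : IsUnit D := isUnit_C.mpr hc2.isUnit
  have hN_unit : IsUnit N := isUnit_C.mpr hc3.isUnit
  have h2_unit : IsUnit (2 : K[X]) := by
    rw [show (2 : K[X]) = C (2 : K) from (map_ofNat C 2).symm]
    exact isUnit_C.mpr two_ne_zero.isUnit
  have hfin : S.w ∣ S.kap → c3 = 4 * c2 := by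
    intro hkap
    have hdw : S.w ∣ S.der P S.w := by
      have h1 : 2 * S.der P S.w = 3 * S.kap - S.w * (2 * derivative P) := by
        have h2 := S.vf_w
        rw [hP6, derivative_mul, derivative_mul, derivative_ofNat] at h2
        rw [der_apply]
        linear_combination -h2
      rw [← h2_unit.dvd_mul_left, h1]
      exact dvd_sub (hkap.mul_left _) (dvd_mul_right _ _)
    have hD2 : 2 * (D * S.der P S.w) =
        S.w * (2 * (-S.vf D - D * (D - N) * (X * S.U + S.V) + 2 * D ^ 2 * S.U * X))
        + D * N * (4 * D - N) * ((S.U * S.V) * (X * S.U + S.V)) := by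
      have h1 : S.der P S.w = S.der P (D * C S.k * S.X0 - N * (S.U * S.V)) := by rw [← hwe']
      rw [h1, map_sub]
      simp only [der_mul, dX0, dU, dV, dk]
      rw [hN, dC, ← hN, hD, dC, ← hD, hwe', X0_eq]
      linear_combination S.U * S.V * R1
    by_contra hne
    have h4 : IsUnit (4 * D - N) := by
      have : 4 * D - N = C (4 * c2 - c3) := by
        rw [hD, hN, map_sub, map_mul, map_ofNat]
      rw [this]
      exact isUnit_C.mpr (sub_ne_zero.mpr (Ne.symm hne)).isUnit
    have hdvd : S.w ∣ (S.U * S.V) * (X * S.U + S.V) := by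
      rw [← ((hD_unit.mul hN_unit).mul h4).dvd_mul_left]
      have := (dvd_add_right (dvd_mul_right S.w
        (2 * (-S.vf D - D * (D - N) * (X * S.U + S.V) + 2 * D ^ 2 * S.U * X)))).mp
        (hD2 ▸ ((hdw.mul_left D).mul_left 2))
      exact this
    have hk_unit : IsUnit (C S.k) := isUnit_C.mpr hk.isUnit
    have hcU : IsCoprime S.w S.U := by
      rw [isCoprime_comm, hU.irreducible.coprime_iff_not_dvd]
      intro h
      apply not_dvd_X0_of_dvd_U hU hΔ dvd_rfl
      rw [← (hD_unit.mul hk_unit).dvd_mul_left]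
      have : D * C S.k * S.X0 = S.w + S.U * (N * S.V) := by rw [hwe']; ring
      rw [this]
      exact dvd_add h (dvd_mul_right _ _)
    have hcV : IsCoprime S.w S.V := by
      rw [isCoprime_comm, hV.irreducible.coprime_iff_not_dvd]
      intro h
      apply not_dvd_X0_of_dvd_V hV he hΔ dvd_rfl
      rw [← (hD_unit.mul hk_unit).dvd_mul_left]
      have : D * C S.k * S.X0 = S.w + S.V * (N * S.U) := by rw [hwe']; ring
      rw [this]
      exact dvd_add h (dvd_mul_right _ _)
    obtain ⟨g, hg⟩ := (hcU.mul_right hcV).dvd_of_dvd_mul_left hdvd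
    have hq : X * S.U + S.V = C S.h * X ^ 2 + C 0 * X + C S.e := by
      rw [U, V, C_0]; ring
    have hg0 : g ≠ 0 := by
      rintro rfl
      have := (co _ _ _).2.2.symm.trans (congrArg (coeff · 0) (hq.symm.trans hg))
      exact he (by simpa using this)
    by_cases hcc : c2 = c3
    · have h5 : X ∣ C S.e := by
        have : C S.e = (X * S.U + S.V) - X * (C S.h * X) := by rw [hq, C_0]; ring
        rw [this, hg, hcoef, hcc]
        refine dvd_sub (Dvd.dvd.mul_right ?_ _) (dvd_mul_right _ _)
        refine ⟨C (-2 * c3 * S.k ^ 2 - c3 * (S.h * S.e - S.k ^ 2)), ?_⟩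
        simp only [sub_self, zero_mul, neg_zero, map_zero]
        ring
      exact not_prime_dvd_C hX he h5
    · have hwd : 2 ≤ S.w.natDegree := by
        apply le_natDegree_of_ne_zero
        rw [hcoef, (co _ _ _).1]
        exact mul_ne_zero (mul_ne_zero (sub_ne_zero.mpr hcc) hk) hh
      have hgd : g.natDegree = 0 := by
        have h6 : (X * S.U + S.V).natDegree ≤ 2 := by rw [hq]; compute_degree
        rw [hg, natDegree_mul hw hg0] at h6
        omega
      obtain ⟨g', rfl⟩ : ∃ c, g = C c := ⟨_, eq_C_of_natDegree_eq_zero hgd⟩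
      have h7 : C S.h * X ^ 2 + C 0 * X + C S.e = C ((c2 - c3) * S.k * S.h * g') * X ^ 2
          + C ((-2 * c2 * S.k ^ 2 - c3 * (S.h * S.e - S.k ^ 2)) * g') * X
          + C (-(c2 - c3) * S.k * S.e * g') := by
        rw [← hq, hg, hcoef]
        simp only [C_mul]; ring
      have h8 := (co _ _ _).1.symm.trans ((congrArg (coeff · 2) h7).trans (co _ _ _).1)
      have h9 := (co _ _ _).2.2.symm.trans ((congrArg (coeff · 0) h7).trans (co _ _ _).2.2)
      have h10 : 2 * (S.h * S.e) = 0 := by linear_combination S.e * h8 + S.h * h9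
      exact mul_ne_zero two_ne_zero (mul_ne_zero hh he) h10
  by_cases hd : S.disc = 0
  · rcases S.isUnit_w_or_common_root hw hd with h | ⟨ω, ha, hb⟩
    · exact hfin h.dvd
    · exfalso
      have hpr : Prime (X - C ω) := prime_X_sub_C ω
      have hsq := S.sq_dvd_w_of_dvd ha hb
      have hdP : X - C ω ∣ P := by
        by_contra hnd
        have h1 := S.cube_dvd_P6_of_dvd ha hb
        rw [hP6, mul_assoc, h2_unit.dvd_mul_left] at h1
        have h2 := hpr.pow_dvd_of_dvd_mul_right 3 hnd h1
        have h3 := natDegree_le_of_dvd h2 hw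
        have h4 := S.natDegree_w_le
        rw [natDegree_pow, natDegree_X_sub_C] at h3
        omega
      rw [hP, hD_unit.dvd_mul_left] at hdP
      rcases hpr.dvd_or_dvd hdP with h1 | h1
      · have hω : ω = 0 := by
          rw [dvd_iff_isRoot] at h1
          simpa using h1
        subst hω
        rw [C_0, sub_zero] at hsq
        obtain ⟨g, hg⟩ := hsq
        have e1 := congrArg (coeff · 1) (hcoef.symm.trans hg)
        have e0 := congrArg (coeff · 0) (hcoef.symm.trans hg)
        simp only [(co _ _ _).2.1, (co _ _ _).2.2, coeff_X_pow_mul'] at e1 e0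
        norm_num at e1 e0
        have hcc : c2 = c3 := by
          rcases e0 with (h | h) | h
          · exact (sub_eq_zero.mp h).symm
          · exact absurd h hk
          · exact absurd h he
        apply mul_ne_zero hc2 hΔ
        rw [Δ]
        subst hcc
        linear_combination -e1
      · have h3 : X - C ω ∣ N * (S.U * S.V) := by
          have : N * (S.U * S.V) = D * C S.k * S.X0 - S.w := by rw [hwe']; ring
          rw [this]
          exact dvd_sub (h1.mul_left _) ((dvd_pow_self _ two_ne_zero).trans hsq)
        rw [hN_unit.dvd_mul_left] at h3
        rcases hpr.dvd_or_dvd h3 with h4 | h4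
        · exact not_dvd_X0_of_dvd_U hpr hΔ h4 h1
        · exact not_dvd_X0_of_dvd_V hpr he hΔ h4 h1
  · apply hfin
    have h1 : S.w ∣ S.P6 := ⟨2 * P, by rw [hP6]; ring⟩
    have h2 := S.w_dvd_disc_mul_kap h1
    rwa [(isUnit_C.mpr (Ne.isUnit hd) : IsUnit (C S.disc)).dvd_mul_left] at h2

end CRData

/-- A differential field extension generated over the constants of `Z̄` by elements `s` and `n`,
where `n` solves the equation `n² Zh - 2 n Zk - Ze = 0`. -/
structure CRExtension {K : Type*} [Field K] (S : CRData K) (E : Type*) [Field E]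
    [Algebra K E] where
  Z : Derivation ℤ E E
  s : E
  n : E
  Z_algebraMap : ∀ u : K,
    Z (algebraMap K E u) = algebraMap K E (S.d1 u) + s * algebraMap K E (S.d2 u)
  Z_s : Z s = 0
  eq_zero_of_aeval_s : ∀ p : K[X], aeval s p = 0 → p = 0
  eq_zero_of_aeval_n : ∀ p : K[X], aeval n p = 0 → p = 0
  aeval_a : aeval n S.a + s * aeval n S.b = 0
  Z_n_ne_zero : Z n ≠ 0

namespace CRExtension

variable {K : Type*} [Field K] {S : CRData K} {E : Type*} [Field E] [Algebra K E]

lemma Z_aeval_n (R : CRExtension S E) (p : K[X]) :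
    aeval R.n S.b * R.Z (aeval R.n p) =
      aeval R.n (S.vf p) + aeval R.n (derivative p) * (aeval R.n S.b * R.Z R.n) := by
  rw [derivation_aeval R.Z S.d1 S.d2 R.s R.Z_algebraMap, S.vf_apply]
  simp only [map_sub, map_mul]
  linear_combination (aeval R.n (coeffDer S.d2 p)) * R.aeval_a

lemma aeval_P6 (R : CRExtension S E) :
    aeval R.n S.P6 + 2 * aeval R.n S.w * (aeval R.n S.b * R.Z R.n) = 0 := by
  have h1 := congrArg R.Z R.aeval_a
  simp only [map_add, Derivation.leibniz, R.Z_s, smul_eq_mul, map_zero] at h1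
  have h2 := R.Z_aeval_n S.a
  have h3 := R.Z_aeval_n S.b
  have h4 := congrArg (aeval R.n) S.wronskian_eq
  simp only [map_sub, map_mul, map_ofNat] at h4
  simp only [CRData.P6, map_sub, map_mul]
  linear_combination (aeval R.n S.b) ^ 2 * h1 - aeval R.n S.b * h2 + aeval R.n S.a * h3
    - (aeval R.n S.b * R.Z R.n) * h4 - (aeval R.n S.b * R.Z (aeval R.n S.b)) * R.aeval_a

/-- If the Wronskian vanishes, all first derivatives of `h`, `k`, `e` vanish. -/
lemma a_b_eq_zero_of_w_eq_zero (R : CRExtension S E) (hw : S.w = 0) : S.a = 0 ∧ S.b = 0 := by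
  have hc : ∀ i, S.w.coeff i = 0 := by simp [hw]
  have h0 : S.ke = 0 := by simpa [CRData.w] using hc 0
  have h1 : S.he = 0 := by simpa [CRData.w, coeff_X, coeff_C] using hc 1
  have h2 : S.hk = 0 := by simpa [CRData.w, coeff_X, coeff_C] using hc 2
  have hb : S.b = 0 := by
    by_contra hb
    have key : ∃ c, c ≠ 0 ∧ ∃ d, C c * S.a = C d * S.b := by
      by_cases e1 : S.d2 S.h = 0
      · by_cases e2 : S.d2 S.k = 0
        · by_cases e3 : S.d2 S.e = 0
          · exact absurd (by simp [CRData.b, e1, e2, e3]) hb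
          · refine ⟨_, e3, S.d1 S.e, ?_⟩
            have h1' := congrArg C h1
            have h0' := congrArg C h0
            simp only [CRData.he, CRData.ke, map_sub, map_mul, map_zero] at h1' h0'
            simp only [CRData.a, CRData.b]
            linear_combination X ^ 2 * h1' - 2 * X * h0'
        · refine ⟨_, e2, S.d1 S.k, ?_⟩
          have h1' := congrArg C h2
          have h0' := congrArg C h0
          simp only [CRData.hk, CRData.ke, map_sub, map_mul, map_zero] at h1' h0'
          simp only [CRData.a, CRData.b]
          linear_combination X ^ 2 * h1' + h0'
      · refine ⟨_, e1, S.d1 S.h, ?_⟩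
        have h1' := congrArg C h1
        have h0' := congrArg C h2
        simp only [CRData.he, CRData.hk, map_sub, map_mul, map_zero] at h1' h0'
        simp only [CRData.a, CRData.b]
        linear_combination h1' + 2 * X * h0'
    obtain ⟨c, hc0, d, hcd⟩ := key
    have h3 := congrArg (aeval R.n) hcd
    simp only [map_mul, aeval_C] at h3
    have h4 : aeval R.n S.b ≠ 0 := fun h => hb (R.eq_zero_of_aeval_n _ h)
    have h5 : aeval R.s (C c * X + C d) = 0 := by
      simp only [map_mul, map_add, aeval_C, aeval_X]
      apply mul_right_cancel₀ h4
      linear_combination algebraMap K E c * R.aeval_a - h3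
    have h6 := congrArg (fun p => coeff p 1) (R.eq_zero_of_aeval_s _ h5)
    exact hc0 (by simpa using h6)
  exact ⟨R.eq_zero_of_aeval_n _ (by simpa [hb] using R.aeval_a), hb⟩

lemma aeval_b_ne_zero [CharZero K] (R : CRExtension S E) (hw : S.w ≠ 0) : aeval R.n S.b ≠ 0 := by
  intro h
  have hb := R.eq_zero_of_aeval_n _ h
  have ha : S.a = 0 := R.eq_zero_of_aeval_n _ (by simpa [hb] using R.aeval_a)
  have := S.wronskian_eq
  rw [ha, hb] at this
  simp at this
  exact hw this

lemma n_ne_zero (R : CRExtension S E) : R.n ≠ 0 := fun h => by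
  have := R.eq_zero_of_aeval_n X (by simpa using h)
  exact X_ne_zero this

lemma aeval_n_ne_zero (R : CRExtension S E) {p : K[X]} (hp : p ≠ 0) : aeval R.n p ≠ 0 :=
  fun h => hp (R.eq_zero_of_aeval_n _ h)

lemma Z_V (R : CRExtension S E) (Y : E) (hY : R.Z (aeval R.n S.V) = Y * R.Z R.n) :
    Y * (aeval R.n S.b * R.Z R.n) =
      algebraMap K E S.k * (aeval R.n S.b * R.Z R.n) + R.n * aeval R.n S.w := by
  have h1 := R.Z_aeval_n S.V
  rw [hY, S.vf_V, S.derivative_V] at h1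
  simp only [map_mul, aeval_C, aeval_X] at h1
  linear_combination h1

/-- The case in which `Z n` is a rational function of `n` with denominator `b`. -/
lemma eq_of_w_dvd_P6 [CharZero K] (R : CRExtension S E) (hh : S.h ≠ 0) (hk : S.k ≠ 0) (he : S.e ≠ 0) (hΔ : S.Δ ≠ 0)
    (hw : S.w ≠ 0) (hdvd : S.w ∣ S.P6) {Y c : E} (hY : R.Z (aeval R.n S.V) = Y * R.Z R.n)
    (hY0 : Y ≠ 0) (hc : R.Z c = 0)
    (hcY : c * Y ^ 2 * (aeval R.n S.X0) ^ 6 =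
      -64 * (aeval R.n S.U * aeval R.n S.V * R.n) ^ 3) :
    Y * aeval R.n S.X0 = 4 * aeval R.n S.U * aeval R.n S.V := by
  have hb := R.aeval_b_ne_zero hw
  have hn := R.n_ne_zero
  have hZn := R.Z_n_ne_zero
  have hwn := R.aeval_n_ne_zero hw
  have : CharZero E := charZero_of_injective_algebraMap (algebraMap K E).injective
  obtain ⟨P', hP'⟩ := hdvd
  set P : K[X] := C (1 / 2) * P' with hPdef
  have hP6 : S.P6 = 2 * S.w * P := by
    have h2 : (2 : K[X]) * C (1 / 2) = 1 := by
      rw [← C_ofNat, ← C_mul]; norm_num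
    rw [hP', hPdef]; linear_combination -S.w * P' * h2
  have hPn : aeval R.n P = -(aeval R.n S.b * R.Z R.n) := by
    have h1 := R.aeval_P6
    rw [hP6] at h1
    simp only [map_mul, map_ofNat] at h1
    apply mul_left_cancel₀ (mul_ne_zero two_ne_zero hwn)
    linear_combination h1
  have hP0 : P ≠ 0 := by
    intro h
    rw [h, map_zero] at hPn
    exact mul_ne_zero hb hZn (neg_eq_zero.mp hPn.symm)
  set M : K[X] := C S.k * P - X * S.w with hM
  have hMn : Y * aeval R.n P = aeval R.n M := by
    have := R.Z_V Y hY
    simp only [hM, map_sub, map_mul, aeval_C, aeval_X, hPn]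
    linear_combination -this
  have hM0 : M ≠ 0 := by
    intro h
    rw [h, map_zero] at hMn
    exact mul_ne_zero hY0 (R.aeval_n_ne_zero hP0) hMn
  have hder : ∀ p : K[X], aeval R.n (S.der P p) = -(aeval R.n S.b * R.Z (aeval R.n p)) := by
    intro p
    rw [R.Z_aeval_n p, S.der_apply]
    simp only [map_sub, map_mul, hPn]
    ring
  have hint : (P ^ 2 * (S.U * S.V * X) ^ 3) * S.der P (M ^ 2 * S.X0 ^ 6) =
      (M ^ 2 * S.X0 ^ 6) * S.der P (P ^ 2 * (S.U * S.V * X) ^ 3) := by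
    rw [← sub_eq_zero]
    apply R.eq_zero_of_aeval_n
    rw [map_sub, map_mul (aeval R.n) (P ^ 2 * _), map_mul (aeval R.n) (M ^ 2 * _), hder, hder]
    have h1 : c * aeval R.n (M ^ 2 * S.X0 ^ 6) =
        -64 * aeval R.n (P ^ 2 * (S.U * S.V * X) ^ 3) := by
      simp only [map_mul, map_pow, aeval_X, ← hMn]
      linear_combination (aeval R.n P) ^ 2 * hcY
    have h2 := congrArg R.Z h1
    have h64 : R.Z (-64) = 0 := by
      have := R.Z.map_natCast 64
      rw [R.Z.map_neg]; simpa using this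
    rw [Derivation.leibniz, Derivation.leibniz, hc, h64] at h2
    simp only [smul_eq_mul, mul_zero, add_zero] at h2
    generalize aeval R.n (M ^ 2 * S.X0 ^ 6) = F1 at *
    generalize aeval R.n (P ^ 2 * (S.U * S.V * X) ^ 3) = F2 at *
    have h3 : (-64 : E) * (F2 * R.Z F1 - F1 * R.Z F2) = 0 := by
      linear_combination -R.Z F1 * h1 + F1 * h2
    have h4 := (mul_eq_zero.mp h3).resolve_left (by norm_num)
    linear_combination -aeval R.n S.b * h4
  obtain ⟨c2, c3, hc2, hc3, hPe, hwe⟩ := S.exists_of_first_integral hh hk he hΔ hP0 hM hM0 hint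
  have h43 := S.c3_eq_four_mul_c2 hh hk he hΔ hM hint hw hP6 hc2 hc3 hPe hwe
  have hMe : M = C (4 * c2) * (X * S.U * S.V) := by
    rw [hM, hwe, hPe, h43]; simp only [map_mul]; ring
  rw [hMe, hPe] at hMn
  simp only [map_mul, aeval_C, aeval_X, map_ofNat] at hMn
  have hc2' : algebraMap K E c2 ≠ 0 := by simpa using hc2
  apply mul_left_cancel₀ (mul_ne_zero hc2' hn)
  linear_combination hMn

end CRExtension

namespace CRData

variable {K : Type*} [Field K] (S : CRData K)

/-- `u₁ + s u₂` as a polynomial in `s`. -/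
def lin (u : K) : K[X] := C (S.d1 u) + C (S.d2 u) * X

/-- The square of `n Zh - Zk` as a polynomial in `s`. -/
def radicand : K[X] := S.lin S.k ^ 2 + S.lin S.h * S.lin S.e

/-- The derivation induced by `Z` on polynomials in `s`. -/
def derS : Derivation ℤ K[X] K[X] := coeffDer S.d1 + (X : K[X]) • coeffDer S.d2

lemma derS_apply (p : K[X]) : S.derS p = coeffDer S.d1 p + X * coeffDer S.d2 p := rfl

lemma natDegree_derS_le (p : K[X]) : (S.derS p).natDegree ≤ p.natDegree + 1 := by
  rw [derS_apply]
  refine (natDegree_add_le _ _).trans (max_le ?_ ?_)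
  · exact (natDegree_coeffDer_le _ _).trans (Nat.le_succ _)
  · refine natDegree_mul_le.trans ?_
    have := natDegree_coeffDer_le S.d2 p
    have h2 : (X : K[X]).natDegree ≤ 1 := natDegree_X_le
    omega

lemma radicand_eq : S.radicand = C (S.d2 S.k ^ 2 + S.d2 S.h * S.d2 S.e) * X ^ 2
    + C (2 * S.d1 S.k * S.d2 S.k + S.d1 S.h * S.d2 S.e + S.d2 S.h * S.d1 S.e) * X
    + C (S.d1 S.k ^ 2 + S.d1 S.h * S.d1 S.e) := by
  simp only [radicand, lin, map_add, map_mul, map_pow, map_ofNat]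
  ring

lemma discrim_radicand :
    (2 * S.d1 S.k * S.d2 S.k + S.d1 S.h * S.d2 S.e + S.d2 S.h * S.d1 S.e) ^ 2
      - 4 * (S.d2 S.k ^ 2 + S.d2 S.h * S.d2 S.e) * (S.d1 S.k ^ 2 + S.d1 S.h * S.d1 S.e)
      = S.disc := by
  simp only [disc, hk, ke, he]
  ring

lemma squarefree_radicand (hd : S.disc ≠ 0) : Squarefree S.radicand :=
  squarefree_quadratic _ _ _ S.radicand_eq (by rw [discrim_radicand]; exact hd)

lemma not_isUnit_radicand (hd : S.disc ≠ 0) : ¬ IsUnit S.radicand := by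
  intro h
  obtain ⟨c, -, hc⟩ := Polynomial.isUnit_iff.mp h
  apply hd
  rw [← discrim_radicand]
  have hr := S.radicand_eq
  rw [← hc] at hr
  generalize S.d2 S.k ^ 2 + S.d2 S.h * S.d2 S.e = α at *
  generalize 2 * S.d1 S.k * S.d2 S.k + S.d1 S.h * S.d2 S.e + S.d2 S.h * S.d1 S.e = β at *
  generalize S.d1 S.k ^ 2 + S.d1 S.h * S.d1 S.e = γ at *
  have h1 := congrArg (fun p => coeff p 1) hr
  have h2 := congrArg (fun p => coeff p 2) hr
  simp [coeff_C] at h1 h2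
  rw [← h1, ← h2]
  ring

lemma eq_zero_of_sq_eq_radicand_mul_sq (hd : S.disc ≠ 0) {α β : K[X]}
    (h : α ^ 2 = β ^ 2 * S.radicand) : β = 0 := by
  by_contra hβ
  have h1 : β ^ 2 ∣ α ^ 2 := ⟨_, h⟩
  obtain ⟨γ, rfl⟩ := (IsIntegrallyClosed.pow_dvd_pow_iff two_ne_zero).mp h1
  have h2 : S.radicand = γ * γ := by
    apply mul_left_cancel₀ (pow_ne_zero 2 hβ)
    rw [← h]; ring
  have h3 := S.squarefree_radicand hd γ ⟨1, by rw [h2, mul_one]⟩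
  exact S.not_isUnit_radicand hd (h2 ▸ h3.mul h3)

/-- A first integral with nonzero irrational part forces the radicand to be a Darboux
polynomial. -/
lemma radicand_dvd_derS [CharZero K] (hd : S.disc ≠ 0) {β γ : K[X]} (hβ : β ≠ 0) (hγ : γ ≠ 0)
    (h : γ ^ 2 * S.derS (β ^ 2 * S.radicand) = (β ^ 2 * S.radicand) * S.derS (γ ^ 2)) :
    S.radicand ∣ S.derS S.radicand := by
  have hsq := S.squarefree_radicand hd
  refine dvd_of_squarefree_of_primes hsq fun π hπ hdvd => ?_
  obtain ⟨q, hq⟩ := hdvd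
  have hπq : ¬ π ∣ q := by
    rintro ⟨q', rfl⟩
    exact hπ.not_isUnit (hsq π ⟨q', by rw [hq]; ring⟩)
  obtain ⟨i, b', hb, hb'⟩ := exists_eq_pow_mul_not_dvd hπ hβ
  obtain ⟨j, c', hc, hc'⟩ := exists_eq_pow_mul_not_dvd hπ hγ
  have key : π ∣ S.derS π := by
    refine prime_dvd_derivation S.derS hπ (i := 2 * i + 1) (j := 2 * j) (by omega)
      (f := b' ^ 2 * q) (g := c' ^ 2) ?_ ?_ ?_ ?_ (isUnit_intCast_polynomial (K := K)) h
    · intro h'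
      rcases hπ.dvd_or_dvd h' with h' | h'
      · exact hb' (hπ.dvd_of_dvd_pow h')
      · exact hπq h'
    · exact fun h' => hc' (hπ.dvd_of_dvd_pow h')
    · rw [hb, hq]; ring
    · rw [hc]; ring
  rw [hq, Derivation.leibniz, smul_eq_mul, smul_eq_mul]
  exact dvd_add (dvd_mul_right _ _) (key.mul_left _)

end CRData

namespace CRExtension

variable {K : Type*} [Field K] {S : CRData K} {E : Type*} [Field E] [Algebra K E]

lemma Z_aeval_s (R : CRExtension S E) (p : K[X]) :
    R.Z (aeval R.s p) = aeval R.s (S.derS p) := by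
  rw [derivation_aeval R.Z S.d1 S.d2 R.s R.Z_algebraMap, S.derS_apply, R.Z_s]
  simp

lemma aeval_lin (R : CRExtension S E) (u : K) : aeval R.s (S.lin u) = R.Z (algebraMap K E u) := by
  rw [R.Z_algebraMap, CRData.lin]
  simp only [map_add, map_mul, aeval_C, aeval_X]
  ring

/-- `n Zh - Zk`, a square root of the radicand. -/
def root (R : CRExtension S E) : E :=
  R.n * R.Z (algebraMap K E S.h) - R.Z (algebraMap K E S.k)

/-- The Galois conjugate of `n` over the field of rational functions of `s`. -/
def conjN (R : CRExtension S E) : E :=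
  (R.Z (algebraMap K E S.k) - R.root) / R.Z (algebraMap K E S.h)

lemma Z_eq (R : CRExtension S E) : R.n ^ 2 * R.Z (algebraMap K E S.h)
    - 2 * R.n * R.Z (algebraMap K E S.k) - R.Z (algebraMap K E S.e) = 0 := by
  have := R.aeval_a
  simp only [CRData.a, CRData.b, map_sub, map_mul, map_pow, aeval_C, aeval_X, map_ofNat] at this
  simp only [R.Z_algebraMap]
  linear_combination this

lemma root_sq (R : CRExtension S E) : R.root ^ 2 = aeval R.s S.radicand := by
  simp only [CRData.radicand, map_add, map_mul, map_pow, R.aeval_lin, root]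
  linear_combination R.Z (algebraMap K E S.h) * R.Z_eq

lemma Z_h_ne_zero (R : CRExtension S E) (hd : S.disc ≠ 0) : R.Z (algebraMap K E S.h) ≠ 0 := by
  intro h
  rw [← R.aeval_lin] at h
  have h0 := R.eq_zero_of_aeval_s _ h
  have h1 : S.d1 S.h = 0 := by simpa [CRData.lin] using congrArg (fun p => coeff p 0) h0
  have h2 : S.d2 S.h = 0 := by simpa [CRData.lin, coeff_C] using congrArg (fun p => coeff p 1) h0
  apply hd
  simp [CRData.disc, CRData.he, CRData.hk, h1, h2]

lemma eq_zero_of_add_mul_root (R : CRExtension S E) (hd : S.disc ≠ 0) {α β : K[X]}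
    (h : aeval R.s α + aeval R.s β * R.root = 0) : α = 0 ∧ β = 0 := by
  have hβ : β = 0 := by
    apply S.eq_zero_of_sq_eq_radicand_mul_sq hd (α := α)
    rw [← sub_eq_zero]
    apply R.eq_zero_of_aeval_s
    simp only [map_sub, map_mul, map_pow, ← R.root_sq]
    linear_combination (aeval R.s α - aeval R.s β * R.root) * h
  subst hβ
  exact ⟨R.eq_zero_of_aeval_s _ (by simpa using h), rfl⟩

lemma root_ne_zero (R : CRExtension S E) (hd : S.disc ≠ 0) : R.root ≠ 0 := by
  intro h
  have := R.eq_zero_of_add_mul_root hd (α := 0) (β := 1) (by simp [h])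
  exact one_ne_zero this.2

/-- `u` and `v` are Galois conjugate over the field of rational functions of `s`. -/
def IsConj (R : CRExtension S E) (u v : E) : Prop :=
  ∃ α β γ : K[X], γ ≠ 0 ∧ aeval R.s γ * u = aeval R.s α + aeval R.s β * R.root ∧
    aeval R.s γ * v = aeval R.s α - aeval R.s β * R.root

lemma IsConj.add {R : CRExtension S E} {u v u' v' : E} (h : R.IsConj u v) (h' : R.IsConj u' v') :
    R.IsConj (u + u') (v + v') := by
  obtain ⟨α, β, γ, hγ, h1, h2⟩ := h
  obtain ⟨α', β', γ', hγ', h1', h2'⟩ := h'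
  refine ⟨γ' * α + γ * α', γ' * β + γ * β', γ * γ', mul_ne_zero hγ hγ', ?_, ?_⟩
  · simp only [map_add, map_mul]
    linear_combination aeval R.s γ' * h1 + aeval R.s γ * h1'
  · simp only [map_add, map_mul]
    linear_combination aeval R.s γ' * h2 + aeval R.s γ * h2'

lemma IsConj.mul {R : CRExtension S E} {u v u' v' : E} (h : R.IsConj u v) (h' : R.IsConj u' v') :
    R.IsConj (u * u') (v * v') := by
  obtain ⟨α, β, γ, hγ, h1, h2⟩ := h
  obtain ⟨α', β', γ', hγ', h1', h2'⟩ := h'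
  refine ⟨α * α' + β * β' * S.radicand, α * β' + α' * β, γ * γ', mul_ne_zero hγ hγ', ?_, ?_⟩
  · simp only [map_add, map_mul, ← R.root_sq]
    linear_combination aeval R.s γ' * u' * h1 + (aeval R.s α + aeval R.s β * R.root) * h1'
  · simp only [map_add, map_mul, ← R.root_sq]
    linear_combination aeval R.s γ' * v' * h2 + (aeval R.s α - aeval R.s β * R.root) * h2'

lemma IsConj.inv {R : CRExtension S E} {u v : E} (h : R.IsConj u v)
    (hu : u ≠ 0) (hv : v ≠ 0) : R.IsConj u⁻¹ v⁻¹ := by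
  obtain ⟨α, β, γ, hγ, h1, h2⟩ := h
  have h0 : aeval R.s γ ≠ 0 := fun h => hγ (R.eq_zero_of_aeval_s _ h)
  have key : aeval R.s (α ^ 2 - β ^ 2 * S.radicand) = (aeval R.s γ) ^ 2 * (u * v) := by
    simp only [map_sub, map_mul, map_pow, ← R.root_sq]
    linear_combination -aeval R.s γ * v * h1 - (aeval R.s α + aeval R.s β * R.root) * h2
  refine ⟨γ * α, -(γ * β), α ^ 2 - β ^ 2 * S.radicand, ?_, ?_, ?_⟩
  · intro h
    rw [h, map_zero] at key
    exact mul_ne_zero (pow_ne_zero 2 h0) (mul_ne_zero hu hv) key.symm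
  · rw [key]; simp only [map_mul, map_neg]; field_simp
    linear_combination h2
  · rw [key]; simp only [map_mul, map_neg]; field_simp
    linear_combination h1

lemma isConj_aeval (R : CRExtension S E) (hd : S.disc ≠ 0) (p : K[X]) :
    R.IsConj (aeval R.n p) (aeval R.conjN p) := by
  have hC : ∀ c : K, R.IsConj (algebraMap K E c) (algebraMap K E c) := fun c =>
    ⟨C c, 0, 1, one_ne_zero, by simp, by simp⟩
  have hZh := R.Z_h_ne_zero hd
  have hX : R.IsConj R.n R.conjN := by
    refine ⟨S.lin S.k, 1, S.lin S.h, ?_, ?_, ?_⟩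
    · intro h
      rw [← R.aeval_lin, h, map_zero] at hZh
      exact hZh rfl
    · simp only [R.aeval_lin, map_one, root]; ring
    · simp only [R.aeval_lin, map_one, conjN]; field_simp
  induction p using Polynomial.induction_on' with
  | add p q hp hq => simpa only [map_add] using hp.add hq
  | monomial i c =>
    have hpow : R.IsConj (R.n ^ i) (R.conjN ^ i) := by
      induction i with
      | zero => simpa using hC 1
      | succ i ih => simpa only [pow_succ] using ih.mul hX
    simpa only [aeval_monomial] using (hC c).mul hpow

lemma eq_zero_of_aeval_conjN (R : CRExtension S E) (hd : S.disc ≠ 0) (p : K[X])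
    (h : aeval R.conjN p = 0) : p = 0 := by
  obtain ⟨α, β, γ, hγ, h1, h2⟩ := R.isConj_aeval hd p
  rw [h, mul_zero] at h2
  have h3 := R.eq_zero_of_add_mul_root hd (α := α) (β := -β) (by simp; linear_combination -h2)
  have h4 : β = 0 := neg_eq_zero.mp h3.2
  rw [h3.1, h4] at h1
  simp only [map_zero, zero_mul, add_zero] at h1
  refine R.eq_zero_of_aeval_n _ ((mul_eq_zero.mp h1).resolve_left ?_)
  exact fun h => hγ (R.eq_zero_of_aeval_s _ h)

lemma conjN_ne (R : CRExtension S E) [CharZero K] (hd : S.disc ≠ 0) : R.n ≠ R.conjN := by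
  intro h
  have : CharZero E := charZero_of_injective_algebraMap (algebraMap K E).injective
  have hZh := R.Z_h_ne_zero hd
  have h1 : R.conjN * R.Z (algebraMap K E S.h) = R.Z (algebraMap K E S.k) - R.root := by
    rw [conjN]; field_simp
  rw [← h] at h1
  have h2 : 2 * R.root = 0 := by
    rw [root] at h1 ⊢
    linear_combination h1
  exact R.root_ne_zero hd ((mul_eq_zero.mp h2).resolve_left two_ne_zero)

/-- Either the constant `g` of `Z` is fixed by conjugation, or `w` divides `P6`. -/
lemma IsConj.eq_or_radicand_dvd [CharZero K] {R : CRExtension S E} (hd : S.disc ≠ 0) {u v : E}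
    (h : R.IsConj u v) (hu : R.Z u = 0) : u = v ∨ S.radicand ∣ S.derS S.radicand := by
  have : CharZero E := charZero_of_injective_algebraMap (algebraMap K E).injective
  obtain ⟨α, β, γ, hγ, h1, h2⟩ := h
  have h0 : aeval R.s γ ≠ 0 := fun h => hγ (R.eq_zero_of_aeval_s _ h)
  by_cases hβ : β = 0
  · left
    apply mul_left_cancel₀ h0
    rw [h1, h2, hβ]; simp
  right
  apply S.radicand_dvd_derS hd hβ hγ
  have h3 := congrArg R.Z h1
  simp only [map_add, Derivation.leibniz, hu, R.Z_aeval_s, smul_eq_mul, mul_zero, zero_add] at h3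
  have h4 : 2 * R.root * R.Z R.root = aeval R.s (S.derS S.radicand) := by
    have := congrArg R.Z R.root_sq
    rw [R.Z_aeval_s, sq, Derivation.leibniz, smul_eq_mul] at this
    linear_combination this
  have h5 := R.root_sq
  have h6 := R.eq_zero_of_add_mul_root hd
    (α := 2 * S.radicand * S.derS γ * α - 2 * S.radicand * γ * S.derS α)
    (β := 2 * S.radicand * S.derS γ * β - 2 * S.radicand * γ * S.derS β
      - γ * β * S.derS S.radicand) (by
        simp only [map_sub, map_mul, map_ofNat, ← h4, ← h5]
        linear_combination 2 * R.root ^ 2 * (aeval R.s γ * h3 - aeval R.s (S.derS γ) * h1))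
  have h7 := h6.2
  simp only [sq, Derivation.leibniz, smul_eq_mul]
  linear_combination -γ * β * h7

end CRExtension

namespace CRExtension

variable {K : Type*} [Field K] [CharZero K] {S : CRData K} {E : Type*} [Field E] [Algebra K E]

lemma w_dvd_P6_of_radicand_dvd (R : CRExtension S E) (hd : S.disc ≠ 0)
    (h : S.radicand ∣ S.derS S.radicand) : S.w ∣ S.P6 := by
  have : CharZero E := charZero_of_injective_algebraMap (algebraMap K E).injective
  obtain ⟨q, hq⟩ := h
  have hr0 : S.radicand ≠ 0 := (S.squarefree_radicand hd).ne_zero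
  have hdeg : q.natDegree ≤ 1 := by
    by_cases hq0 : q = 0
    · simp [hq0]
    have h1 := S.natDegree_derS_le S.radicand
    rw [hq, natDegree_mul hr0 hq0] at h1
    omega
  obtain ⟨c1, c0, hc⟩ := exists_eq_X_add_C_of_natDegree_le_one hdeg
  have hroot := R.root_ne_zero hd
  have hZr : 2 * R.Z R.root = (algebraMap K E c1 * R.s + algebraMap K E c0) * R.root := by
    have h1 := congrArg R.Z R.root_sq
    rw [R.Z_aeval_s, sq, Derivation.leibniz, smul_eq_mul, hq, map_mul, ← R.root_sq, hc] at h1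
    simp only [map_add, map_mul, aeval_C, aeval_X] at h1
    apply mul_left_cancel₀ hroot
    linear_combination h1
  have hbr : aeval R.n S.b * R.root = aeval R.n S.w := by
    rw [← S.vf_U, S.vf_apply, root, R.Z_algebraMap, R.Z_algebraMap]
    simp only [CRData.U, map_sub, map_mul, Derivation.leibniz, coeffDer_C, coeffDer_X, smul_eq_mul,
      aeval_C]
    simp only [mul_zero, zero_add, map_mul, aeval_C, aeval_X]
    linear_combination (R.n * algebraMap K E (S.d2 S.h) - algebraMap K E (S.d2 S.k)) * R.aeval_a
  have hbη : aeval R.n S.b * R.Z (algebraMap K E S.h) = aeval R.n S.eta := by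
    rw [R.Z_algebraMap]
    simp only [CRData.eta, map_sub, map_mul, aeval_C]
    linear_combination algebraMap K E (S.d2 S.h) * R.aeval_a
  let Q : K → K[X] := fun u => S.b ^ 2 * C (S.d1 (S.d1 u)) - 2 * S.a * S.b * C (S.d1 (S.d2 u))
    + S.a ^ 2 * C (S.d2 (S.d2 u))
  have hQ : ∀ u, (aeval R.n S.b) ^ 2 * R.Z (R.Z (algebraMap K E u)) = aeval R.n (Q u) := by
    intro u
    rw [R.Z_algebraMap]
    simp only [map_add, Derivation.leibniz, R.Z_algebraMap, R.Z_s, smul_eq_mul, Q, map_sub, map_mul,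
      map_pow, aeval_C, map_ofNat, ← S.comm]
    linear_combination (2 * aeval R.n S.b * algebraMap K E (S.d1 (S.d2 u))
      + (R.s * aeval R.n S.b - aeval R.n S.a) * algebraMap K E (S.d2 (S.d2 u))) * R.aeval_a
  have hZr2 : R.Z R.root = R.Z R.n * R.Z (algebraMap K E S.h)
      + R.n * R.Z (R.Z (algebraMap K E S.h)) - R.Z (R.Z (algebraMap K E S.k)) := by
    rw [root, map_sub, Derivation.leibniz, smul_eq_mul, smul_eq_mul]
    ring
  set Q1 : K[X] := (C c0 * S.b - C c1 * S.a) * S.w - 2 * (X * Q S.h - Q S.k) with hQ1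
  have h1 : 2 * aeval R.n S.eta * (aeval R.n S.b * R.Z R.n) = aeval R.n Q1 := by
    simp only [hQ1, map_sub, map_mul, map_ofNat, aeval_C, aeval_X, ← hQ, ← hbr, ← hbη]
    linear_combination (aeval R.n S.b) ^ 2 * hZr - 2 * (aeval R.n S.b) ^ 2 * hZr2
      + algebraMap K E c1 * aeval R.n S.b * R.root * R.aeval_a
  have h2 := R.aeval_P6
  have h3 : C S.disc * S.P6 =
      S.w * ((C S.he + 2 * C S.hk * X) * Q1 + 4 * C S.hk * S.P6) := by
    rw [← sub_eq_zero]
    apply R.eq_zero_of_aeval_n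
    rw [S.disc_eq]
    simp only [map_sub, map_mul, map_add, map_neg, map_ofNat, aeval_C, aeval_X, ← h1]
    linear_combination -aeval R.n S.eta *
      (algebraMap K E S.he + 2 * algebraMap K E S.hk * R.n) * h2
  have hu : IsUnit (C S.disc : K[X]) := isUnit_C.mpr hd.isUnit
  rw [← hu.dvd_mul_left (a := S.w)]
  exact ⟨_, h3⟩

end CRExtension

lemma cubic_eq_zero {E : Type*} [Field E] [CharZero E] {n m r0 r1 r2 r3 : E} (hnm : n ≠ m)
    (h1 : r3 * n ^ 3 + r2 * n ^ 2 + r1 * n + r0 = 0)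
    (h2 : r3 * m ^ 3 + r2 * m ^ 2 + r1 * m + r0 = 0)
    (h3 : 3 * r3 * n ^ 2 + 2 * r2 * n + r1 = 0) (h4 : 3 * r3 * m ^ 2 + 2 * r2 * m + r1 = 0) :
    r0 = 0 ∧ r1 = 0 ∧ r2 = 0 ∧ r3 = 0 := by
  have hd : n - m ≠ 0 := sub_ne_zero.mpr hnm
  have e3 : r3 = 0 := by
    apply (mul_eq_zero.mp (?_ : (n - m) ^ 3 * r3 = 0)).resolve_left (pow_ne_zero 3 hd)
    linear_combination (n - m) * (h3 + h4) - 2 * (h1 - h2)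
  subst e3
  have e2 : r2 = 0 := by
    apply (mul_eq_zero.mp (?_ : (2 * (n - m)) * r2 = 0)).resolve_left (mul_ne_zero two_ne_zero hd)
    linear_combination h3 - h4
  subst e2
  have e1 : r1 = 0 := by linear_combination h3
  subst e1
  exact ⟨by linear_combination h1, rfl, rfl, rfl⟩

/-- The quartic `ν² + (h̄ν² - ē)X₀/2 - (k̄² + h̄ē)X₀²/4` has a double root at `ν`. -/
lemma quartic_double_root {E : Type*} [Field E] [CharZero E] {ν U V X0 P M hb eb c : E}
    (hX : X0 = ν * U - V) (hX0 : X0 ≠ 0) (hM : M ≠ 0)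
    (h1 : hb * (M * X0 ^ 3) = -2 * (M * X0 ^ 2 - 4 * U ^ 2 * V * ν * P))
    (h2 : eb * (M * X0 ^ 3) = 2 * (ν ^ 2 * M * X0 ^ 2 + 4 * U * V ^ 2 * ν ^ 2 * P))
    (h3 : c * (M ^ 2 * X0 ^ 6) = -64 * ((U * V * ν) ^ 3 * P ^ 2)) :
    4 * ν ^ 2 + 2 * (hb * ν ^ 2 - eb) * X0 - (c + hb * eb) * X0 ^ 2 = 0 ∧
    8 * ν + 4 * hb * ν * X0 + 4 * (hb * ν ^ 2 - eb) * U - 4 * (c + hb * eb) * X0 * U = 0 := by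
  obtain ⟨g, hg⟩ : ∃ g, g * (M * X0 ^ 2) = 4 * U * V * ν * P :=
    ⟨4 * U * V * ν * P / (M * X0 ^ 2), by field_simp⟩
  have hM2 : M * X0 ^ 2 ≠ 0 := mul_ne_zero hM (pow_ne_zero 2 hX0)
  have e1 : hb * X0 = -2 * (1 - U * g) := by
    apply mul_right_cancel₀ hM2
    linear_combination h1 - 2 * U * hg
  have e2 : eb * X0 = 2 * (ν ^ 2 + V * ν * g) := by
    apply mul_right_cancel₀ hM2
    linear_combination h2 - 2 * V * ν * hg
  have e3 : c * X0 ^ 2 = -4 * (U * V * ν * g ^ 2) := by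
    apply mul_right_cancel₀ (pow_ne_zero 2 hM2)
    linear_combination h3 + 4 * U * V * ν * (g * (M * X0 ^ 2) + 4 * U * V * ν * P) * hg
  constructor
  · linear_combination (2 * ν ^ 2 - eb * X0) * e1 + (-2 + 2 * (1 - U * g)) * e2 - e3
  · apply mul_right_cancel₀ hX0
    linear_combination (4 * ν * X0 + 4 * ν ^ 2 * U - 4 * U * eb * X0) * e1
      + (-4 * U + 8 * U * (1 - U * g)) * e2 - 4 * U * e3 + 8 * ν * U * g * hX

/-- The quartic `4ν² + 2(h̄ν² - ē)X₀ - D X₀²` with `X₀ = hν² - 2kν - e` equals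
`l (ν² - σν + π)²`, expressed through coefficients. -/
def QuarticEqSq {E : Type*} [CommRing E] (h k e hb eb D l σ π : E) : Prop :=
  2 * hb * h - D * h ^ 2 = l ∧
  -4 * hb * k + 4 * D * h * k = -2 * l * σ ∧
  4 - 2 * (hb * e + eb * h) - D * (4 * k ^ 2 - 2 * h * e) = l * (σ ^ 2 + 2 * π) ∧
  4 * eb * k - 4 * D * k * e = -2 * l * σ * π ∧
  2 * eb * e - D * e ^ 2 = l * π ^ 2

namespace CRExtension

variable {K : Type*} [Field K] [CharZero K] {S : CRData K} {E : Type*} [Field E] [Algebra K E]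

/-- Either the quartic is a multiple of a square, or `Y X₀ = 4 U V`. -/
theorem alternative (R : CRExtension S E) (hh : S.h ≠ 0) (hk : S.k ≠ 0) (he : S.e ≠ 0)
    (hΔ : S.Δ ≠ 0) (hw : S.w ≠ 0) {Y hb eb c : E} (hY : R.Z (aeval R.n S.V) = Y * R.Z R.n)
    (hY0 : Y ≠ 0) (hZh : R.Z hb = 0) (hZe : R.Z eb = 0) (hZc : R.Z c = 0)
    (h1 : hb * (Y * (aeval R.n S.X0) ^ 3) = -2 * (Y * (aeval R.n S.X0) ^ 2
      - 4 * (aeval R.n S.U) ^ 2 * aeval R.n S.V * R.n))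
    (h2 : eb * (Y * (aeval R.n S.X0) ^ 3) = 2 * (R.n ^ 2 * Y * (aeval R.n S.X0) ^ 2
      + 4 * aeval R.n S.U * (aeval R.n S.V) ^ 2 * R.n ^ 2))
    (h3 : c * Y ^ 2 * (aeval R.n S.X0) ^ 6 =
      -64 * (aeval R.n S.U * aeval R.n S.V * R.n) ^ 3) :
    Y * aeval R.n S.X0 = 4 * aeval R.n S.U * aeval R.n S.V ∨
    ∃ l σ π : E, QuarticEqSq (algebraMap K E S.h) (algebraMap K E S.k) (algebraMap K E S.e)
      hb eb (c + hb * eb) l σ π := by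
  have : CharZero E := charZero_of_injective_algebraMap (algebraMap K E).injective
  by_cases hdvd : S.w ∣ S.P6
  · exact Or.inl (R.eq_of_w_dvd_P6 hh hk he hΔ hw hdvd hY hY0 hZc h3)
  right
  have hd : S.disc ≠ 0 := fun h => hdvd (S.w_dvd_P6_of_disc_eq_zero hw h)
  have hrad : ¬ S.radicand ∣ S.derS S.radicand := fun h => hdvd (R.w_dvd_P6_of_radicand_dvd hd h)
  have hP6 : S.P6 ≠ 0 := fun h => hdvd (h ▸ dvd_zero _)
  have hX0 : S.X0 ≠ 0 := fun h => by
    have := S.natDegree_X0 hh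
    simp [h] at this
  set M : K[X] := C S.k * S.P6 - 2 * X * S.w ^ 2 with hM
  have hMY : Y * aeval R.n S.P6 = aeval R.n M := by
    have e1 := R.Z_V Y hY
    have e2 := R.aeval_P6
    simp only [hM, map_sub, map_mul, map_pow, map_ofNat, aeval_C, aeval_X]
    linear_combination (Y - algebraMap K E S.k) * e2 - 2 * aeval R.n S.w * e1
  have hM0 : M ≠ 0 := fun h => by
    rw [h, map_zero] at hMY
    exact mul_ne_zero hY0 (R.aeval_n_ne_zero hP6) hMY
  have transfer : ∀ (G H : K[X]) (g : E), H ≠ 0 → R.Z g = 0 →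
      g * aeval R.n H = aeval R.n G → g * aeval R.conjN H = aeval R.conjN G := by
    intro G H g hH hZg hg
    have n1 := R.aeval_n_ne_zero hH
    have n2 : aeval R.conjN H ≠ 0 := fun h => hH (R.eq_zero_of_aeval_conjN hd _ h)
    have hc := (R.isConj_aeval hd G).mul ((R.isConj_aeval hd H).inv n1 n2)
    rw [← hg, mul_assoc, mul_inv_cancel₀ n1, mul_one] at hc
    rcases hc.eq_or_radicand_dvd hd hZg with h | h
    · rw [h, mul_assoc, inv_mul_cancel₀ n2, mul_one]
    · exact absurd h hrad
  have hMX : M * S.X0 ^ 3 ≠ 0 := mul_ne_zero hM0 (pow_ne_zero _ hX0)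
  have hMX2 : M ^ 2 * S.X0 ^ 6 ≠ 0 := mul_ne_zero (pow_ne_zero _ hM0) (pow_ne_zero _ hX0)
  have f1 : hb * aeval R.n (M * S.X0 ^ 3) =
      aeval R.n (-2 * (M * S.X0 ^ 2 - 4 * S.U ^ 2 * S.V * X * S.P6)) := by
    simp only [map_mul, map_sub, map_pow, map_neg, map_ofNat, aeval_X, ← hMY]
    linear_combination aeval R.n S.P6 * h1
  have f2 : eb * aeval R.n (M * S.X0 ^ 3) =
      aeval R.n (2 * (X ^ 2 * M * S.X0 ^ 2 + 4 * S.U * S.V ^ 2 * X ^ 2 * S.P6)) := by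
    simp only [map_mul, map_add, map_pow, map_ofNat, aeval_X, ← hMY]
    linear_combination aeval R.n S.P6 * h2
  have f3 : c * aeval R.n (M ^ 2 * S.X0 ^ 6) =
      aeval R.n (-64 * ((S.U * S.V * X) ^ 3 * S.P6 ^ 2)) := by
    simp only [map_mul, map_pow, map_neg, map_ofNat, aeval_X, ← hMY]
    linear_combination (aeval R.n S.P6) ^ 2 * h3
  have key : ∀ ν : E, aeval ν S.X0 ≠ 0 → aeval ν M ≠ 0 →
      hb * aeval ν (M * S.X0 ^ 3) =
        aeval ν (-2 * (M * S.X0 ^ 2 - 4 * S.U ^ 2 * S.V * X * S.P6)) →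
      eb * aeval ν (M * S.X0 ^ 3) =
        aeval ν (2 * (X ^ 2 * M * S.X0 ^ 2 + 4 * S.U * S.V ^ 2 * X ^ 2 * S.P6)) →
      c * aeval ν (M ^ 2 * S.X0 ^ 6) = aeval ν (-64 * ((S.U * S.V * X) ^ 3 * S.P6 ^ 2)) →
      4 * ν ^ 2 + 2 * (hb * ν ^ 2 - eb) * aeval ν S.X0 - (c + hb * eb) * (aeval ν S.X0) ^ 2 = 0 ∧
      8 * ν + 4 * hb * ν * aeval ν S.X0 + 4 * (hb * ν ^ 2 - eb) * aeval ν S.U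
        - 4 * (c + hb * eb) * aeval ν S.X0 * aeval ν S.U = 0 := by
    intro ν n1 n2 g1 g2 g3
    simp only [map_mul, map_sub, map_add, map_pow, map_neg, map_ofNat, aeval_X] at g1 g2 g3
    exact quartic_double_root (by rw [S.X0_eq]; simp) n1 n2 g1 g2 g3
  obtain ⟨p1, p2⟩ := key R.n (R.aeval_n_ne_zero hX0) (R.aeval_n_ne_zero hM0) f1 f2 f3
  obtain ⟨q1, q2⟩ := key R.conjN (fun h => hX0 (R.eq_zero_of_aeval_conjN hd _ h))
    (fun h => hM0 (R.eq_zero_of_aeval_conjN hd _ h)) (transfer _ _ _ hMX hZh f1)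
    (transfer _ _ _ hMX hZe f2) (transfer _ _ _ hMX2 hZc f3)
  have hne := R.conjN_ne hd
  simp only [CRData.X0, CRData.U, map_mul, map_sub, map_pow, map_ofNat, aeval_C, aeval_X]
    at p1 p2 q1 q2
  generalize R.conjN = m at *
  generalize R.n = n at *
  generalize algebraMap K E S.h = h at *
  generalize algebraMap K E S.k = k at *
  generalize algebraMap K E S.e = e at *
  set D := c + hb * eb with hD
  set l := 2 * hb * h - D * h ^ 2 with hl
  obtain ⟨r0, r1, r2, r3⟩ := cubic_eq_zero hne
    (r3 := -4 * hb * k + 4 * D * h * k + 2 * l * (n + m))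
    (r2 := 4 - 2 * (hb * e + eb * h) - D * (4 * k ^ 2 - 2 * h * e)
      - l * ((n + m) ^ 2 + 2 * n * m))
    (r1 := 4 * eb * k - 4 * D * k * e + 2 * l * (n * m) * (n + m))
    (r0 := 2 * eb * e - D * e ^ 2 - l * (n * m) ^ 2)
    (by rw [hl]; linear_combination p1) (by rw [hl]; linear_combination q1)
    (by rw [hl]; linear_combination p2) (by rw [hl]; linear_combination q2)
  exact ⟨l, n + m, n * m, rfl, by linear_combination r3, by linear_combination r2,
    by linear_combination r1, by linear_combination r0⟩

end CRExtension

/-- A field with the derivations `Z`, `Z̄`, `T` of the Heisenberg group and complex conjugation;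
`s` plays the role of `2 i z̄`. -/
structure HeisenbergField (E : Type*) [Field E] where
  Z : Derivation ℤ E E
  Zb : Derivation ℤ E E
  T : Derivation ℤ E E
  conj : E →+* E
  s : E
  conj_conj : ∀ u, conj (conj u) = u
  conj_Z : ∀ u, conj (Z u) = Zb (conj u)
  Z_T : ∀ u, Z (T u) = T (Z u)
  Zb_T : ∀ u, Zb (T u) = T (Zb u)
  Zb_Z : ∀ u, Zb (Z u) = Z (Zb u) + Zb s * T u
  Z_s : Z s = 0
  T_s : T s = 0
  Zb_s : Zb s ≠ 0

/-- An element on which a derivation does not vanish is transcendental over its constants. -/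
lemma eq_zero_of_aeval_eq_zero {K E : Type*} [Field K] [CharZero K] [Field E] [Algebra K E]
    (D : Derivation ℤ E E) (hD : ∀ u : K, D (algebraMap K E u) = 0) {n : E} (hn : D n ≠ 0)
    (p : K[X]) (hp : aeval n p = 0) : p = 0 := by
  induction h : p.natDegree using Nat.strong_induction_on generalizing p with
  | _ d ih =>
    subst h
    have h1 : aeval n (derivative p) = 0 := by
      have := congrArg D hp
      rw [derivation_aeval D 0 0 0 (by simpa using hD)] at this
      have h0 : coeffDer (0 : Derivation ℤ K K) p = 0 := by
        ext i; simp [coeff_coeffDer]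
      simpa [h0, hn] using this
    by_cases hd : p.natDegree = 0
    · rw [eq_C_of_natDegree_eq_zero hd] at hp ⊢
      simpa using hp
    · have h2 := ih _ (natDegree_derivative_lt hd) _ h1 rfl
      exact absurd (derivative_eq_zero.mp h2) hd

namespace HeisenbergField

variable {E : Type*} [Field E] (H : HeisenbergField E)

lemma conj_Zb (u : E) : H.conj (H.Zb u) = H.Z (H.conj u) := by
  rw [← H.conj_conj (H.Z (H.conj u)), H.conj_Z, H.conj_conj]

/-- The field of constants of `Z̄`. -/
def CR : Subfield E where
  carrier := {u | H.Zb u = 0}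
  mul_mem' {a b} ha hb := by
    simp only [Set.mem_ofPred_eq] at *
    simp [Derivation.leibniz, ha, hb]
  one_mem' := by simp
  add_mem' {a b} ha hb := by
    simp only [Set.mem_ofPred_eq] at *
    simp [ha, hb]
  zero_mem' := by simp
  neg_mem' {a} ha := by
    simp only [Set.mem_ofPred_eq] at *
    simp [ha]
  inv_mem' a ha := by
    simp only [Set.mem_ofPred_eq] at *
    rw [Derivation.leibniz_inv, ha, smul_zero]

lemma mem_CR {u : E} : u ∈ H.CR ↔ H.Zb u = 0 := Iff.rfl

/-- Restriction of a derivation to the constants of `Z̄`. -/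
def restrict (D : Derivation ℤ E E) (hD : ∀ u ∈ H.CR, D u ∈ H.CR) : Derivation ℤ H.CR H.CR :=
  Derivation.mk' (AddMonoidHom.toIntLinearMap
    { toFun := fun u => ⟨D u, hD u u.2⟩
      map_zero' := by ext; simp
      map_add' := fun u v => by ext; simp })
    (fun u v => by
      ext
      simp [Derivation.leibniz])

lemma restrict_coe (D : Derivation ℤ E E) (hD : ∀ u ∈ H.CR, D u ∈ H.CR) (u : H.CR) :
    (H.restrict D hD u : E) = D u := rfl

lemma T_mem (u : E) (hu : u ∈ H.CR) : H.T u ∈ H.CR := by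
  rw [mem_CR] at *
  rw [H.Zb_T, hu, map_zero]

lemma Z_sub_mem (u : E) (hu : u ∈ H.CR) : (H.Z - H.s • H.T) u ∈ H.CR := by
  have h1 := (H.mem_CR).mp (H.T_mem u hu)
  rw [mem_CR] at *
  rw [Derivation.sub_apply, Derivation.smul_apply, smul_eq_mul, map_sub, H.Zb_Z, hu,
    Derivation.leibniz, h1]
  simp
  ring

/-- The differential data of three constants of `Z̄`. -/
def data (h k e : H.CR) : CRData H.CR where
  d1 := H.restrict (H.Z - H.s • H.T) H.Z_sub_mem
  d2 := H.restrict H.T H.T_mem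
  comm u := by
    apply Subtype.ext
    simp only [restrict_coe, Derivation.sub_apply, Derivation.smul_apply, smul_eq_mul, map_sub,
      Derivation.leibniz, H.Z_T, H.T_s]
    ring
  h := h
  k := k
  e := e

/-- The extension generated by a solution `n` of the equation for `Z h`, `Z k`, `Z e`. -/
def extension [CharZero E] (h k e : H.CR) (n : E) (hZb : H.Zb n ≠ 0) (hZ : H.Z n ≠ 0)
    (heq : n ^ 2 * H.Z h - 2 * n * H.Z k - H.Z e = 0) : CRExtension (H.data h k e) E where
  Z := H.Z
  s := H.s
  n := n
  Z_algebraMap u := by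
    change H.Z u = (H.Z - H.s • H.T) u + H.s * H.T u
    simp
  Z_s := H.Z_s
  eq_zero_of_aeval_s := eq_zero_of_aeval_eq_zero H.Zb (fun u => u.2) H.Zb_s
  eq_zero_of_aeval_n := eq_zero_of_aeval_eq_zero H.Zb (fun u => u.2) hZb
  aeval_a := by
    simp only [CRData.a, CRData.b, map_sub, map_mul, map_pow, aeval_C, aeval_X, map_ofNat]
    change (H.Z - H.s • H.T) (h : E) * n ^ 2 - 2 * (H.Z - H.s • H.T) (k : E) * n
      - (H.Z - H.s • H.T) (e : E) + H.s * (H.T (h : E) * n ^ 2 - 2 * H.T (k : E) * n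
      - H.T (e : E)) = 0
    simp only [Derivation.sub_apply, Derivation.smul_apply, smul_eq_mul]
    linear_combination heq
  Z_n_ne_zero := hZ

end HeisenbergField

namespace HeisenbergField

variable {E : Type*} [Field E] (H : HeisenbergField E)

theorem alternative [CharZero E] {x n h k e : E} (hx : x ≠ 0) (hn : n ≠ 0) (hA : H.Z x ≠ 0)
    (hB : H.Z (H.conj x) ≠ 0) (h1 : n ^ 2 + H.conj n ^ 2 = -2 * x * H.conj x)
    (h2 : n * H.Z n = -H.conj x * H.Z x) (h3 : n * H.Zb n = -H.conj x * H.Zb x)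
    (hk : k * H.Zb x * H.conj x ^ 3 = n ^ 3 * H.Zb (H.conj x))
    (hkb : H.Zb k = 0)
    (hh : h * H.conj x * n = n + k * H.conj x)
    (he : e * H.conj x = -n * k * H.conj x - H.conj n ^ 2)
    (hh0 : h ≠ 0) (he0 : e ≠ 0) (hΔ : k ^ 2 + h * e ≠ 0)
    (hJ : H.Z x * H.Zb (H.conj x) ≠ H.Z (H.conj x) * H.Zb x) :
    H.Z (H.conj x) * n ^ 2 * x = 2 * H.Z x * H.conj n ^ 2 * H.conj x ∨
    ∃ l σ π : E, QuarticEqSq h k e (H.conj h) (H.conj e)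
      (H.conj k ^ 2 + H.conj h * H.conj e) l σ π := by
  have hξ : H.conj x ≠ 0 := by simpa using hx
  have hAb : H.Zb (H.conj x) ≠ 0 := by rw [← H.conj_Z]; simpa using hA
  have hBb : H.Zb x ≠ 0 := by
    have := H.conj_Z (H.conj x)
    rw [H.conj_conj] at this
    rw [← this]; simpa using hB
  have hk0 : k ≠ 0 := by
    rintro rfl
    exact mul_ne_zero (pow_ne_zero 3 hn) hAb (by rw [← hk]; ring)
  have hZbn : H.Zb n ≠ 0 := fun h0 => by
    rw [h0, mul_zero] at h3
    exact mul_ne_zero (neg_ne_zero.mpr hξ) hBb h3.symm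
  have hZn : H.Z n ≠ 0 := fun h0 => by
    rw [h0, mul_zero] at h2
    exact mul_ne_zero (neg_ne_zero.mpr hξ) hA h2.symm
  have hm : H.conj n ≠ 0 := by simpa using hn
  -- conjugate relations
  have h2c : H.conj n * H.Zb (H.conj n) = -x * H.Zb (H.conj x) := by
    have := congrArg H.conj h2
    simpa [H.conj_Z, H.conj_conj] using this
  have h3c : H.conj n * H.Z (H.conj n) = -x * H.Z (H.conj x) := by
    have := congrArg H.conj h3
    simpa [H.conj_Zb, H.conj_conj] using this
  have hkc : H.conj k * H.Z (H.conj x) * x ^ 3 = H.conj n ^ 3 * H.Z x := by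
    have := congrArg H.conj hk
    simpa [H.conj_Zb, H.conj_conj] using this
  have hhc : H.conj h * x * H.conj n = H.conj n + H.conj k * x := by
    have := congrArg H.conj hh
    simpa [H.conj_conj] using this
  have hec : H.conj e * x = -H.conj n * H.conj k * x - n ^ 2 := by
    have := congrArg H.conj he
    simpa [H.conj_conj] using this
  have hhb : H.Zb h = 0 := by
    have := congrArg H.Zb hh
    simp only [Derivation.leibniz, map_add, hkb, smul_eq_mul] at this
    apply (mul_eq_zero.mp (?_ : (n ^ 3 * H.conj x ^ 2) * H.Zb h = 0)).resolve_left
      (mul_ne_zero (pow_ne_zero 3 hn) (pow_ne_zero 2 hξ))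
    linear_combination (n ^ 2 * H.conj x) * this
      - (n * H.conj x * H.Zb n + n ^ 2 * H.Zb (H.conj x)) * hh - k * H.conj x ^ 2 * h3 + hk
  have heb : H.Zb e = 0 := by
    have := congrArg H.Zb he
    simp only [Derivation.leibniz, map_sub, map_neg, hkb, smul_eq_mul, sq] at this
    apply (mul_eq_zero.mp (?_ : (n * H.conj x ^ 2) * H.Zb e = 0)).resolve_left
      (mul_ne_zero hn (pow_ne_zero 2 hξ))
    linear_combination (n * H.conj x) * this - n * H.Zb (H.conj x) * he - k * H.conj x ^ 2 * h3
      - 2 * n * H.conj x * h2c + hk + n * H.Zb (H.conj x) * h1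
  have hZkb : H.Z (H.conj k) = 0 := by rw [← H.conj_Zb, hkb, map_zero]
  have hZhb : H.Z (H.conj h) = 0 := by rw [← H.conj_Zb, hhb, map_zero]
  have hZeb : H.Z (H.conj e) = 0 := by rw [← H.conj_Zb, heb, map_zero]
  have hU : h * n - k = n / H.conj x := by
    field_simp; linear_combination hh
  have hV : k * n + e = -H.conj n ^ 2 / H.conj x := by
    field_simp; linear_combination he
  have hX0 : h * n ^ 2 - 2 * k * n - e = -2 * x := by
    apply mul_right_cancel₀ hξ
    linear_combination n * hh - he + h1
  have heq : n ^ 2 * H.Z h - 2 * n * H.Z k - H.Z e = 0 := by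
    have := congrArg H.Z hX0
    have h2' : H.Z 2 = 0 := H.Z.map_natCast 2
    simp only [Derivation.leibniz, map_sub, map_neg, h2', smul_eq_mul, sq] at this
    apply (mul_eq_zero.mp (?_ : H.conj x * _ = 0)).resolve_left hξ
    linear_combination H.conj x * this - 2 * H.Z n * hh - 2 * h2
  let h' : H.CR := ⟨h, hhb⟩
  let k' : H.CR := ⟨k, hkb⟩
  let e' : H.CR := ⟨e, heb⟩
  let R := H.extension h' k' e' n hZbn hZn heq
  have aU : aeval R.n (H.data h' k' e').U = n / H.conj x := by
    rw [← hU]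
    simp only [CRData.U, map_sub, map_mul, aeval_C, aeval_X]
    rfl
  have aV : aeval R.n (H.data h' k' e').V = -H.conj n ^ 2 / H.conj x := by
    rw [← hV]
    simp only [CRData.V, map_add, map_mul, aeval_C, aeval_X]
    rfl
  have aX0 : aeval R.n (H.data h' k' e').X0 = -2 * x := by
    rw [← hX0]
    simp only [CRData.X0, map_sub, map_mul, map_pow, map_ofNat, aeval_C, aeval_X]
    rfl
  have hw : (H.data h' k' e').w ≠ 0 := by
    intro hw
    obtain ⟨ha, hb⟩ := R.a_b_eq_zero_of_w_eq_zero hw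
    have hcoef : ∀ u v t : H.CR, C u * X ^ 2 - 2 * C v * X - C t = 0 → u = 0 ∧ v = 0 := by
      intro u v t h0
      have c1 := congrArg (fun p => coeff p 1) h0
      have c2 := congrArg (fun p => coeff p 2) h0
      rw [← C_ofNat, ← C_mul] at c1 c2
      simp [coeff_C] at c1 c2
      exact ⟨c2, c1⟩
    obtain ⟨a1, a2⟩ := hcoef _ _ _ ha
    obtain ⟨b1, b2⟩ := hcoef _ _ _ hb
    have hZh : H.Z h = 0 := by
      have := R.Z_algebraMap h'
      rw [show (H.data h' k' e').d1 h' = 0 from a1, show (H.data h' k' e').d2 h' = 0 from b1] at this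
      simp only [map_zero, mul_zero, add_zero] at this
      exact this
    have hZk : H.Z k = 0 := by
      have := R.Z_algebraMap k'
      rw [show (H.data h' k' e').d1 k' = 0 from a2, show (H.data h' k' e').d2 k' = 0 from b2] at this
      simp only [map_zero, mul_zero, add_zero] at this
      exact this
    have := congrArg H.Z hh
    simp only [Derivation.leibniz, map_add, hZh, hZk, smul_eq_mul] at this
    apply hJ
    apply mul_left_cancel₀ (mul_ne_zero hξ (pow_ne_zero 3 hn))
    linear_combination -H.conj x * H.Z x * hk + k * H.conj x ^ 3 * H.Zb x * h2
      - H.conj x ^ 2 * n ^ 2 * H.Zb x * this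
      + H.conj x * (H.conj x * n * H.Z n * H.Zb x + n ^ 2 * H.Z (H.conj x) * H.Zb x) * hh
  have ekb : H.conj k = H.conj n ^ 3 * H.Z x / (H.Z (H.conj x) * x ^ 3) := by
    field_simp; linear_combination hkc
  have ehb : H.conj h = 1 / x + H.conj k / H.conj n := by
    field_simp; linear_combination hhc
  have eeb : H.conj e = -H.conj n * H.conj k - n ^ 2 / x := by
    field_simp; linear_combination hec
  have hY : R.Z (aeval R.n (H.data h' k' e').V)
      = H.Z (H.conj x) * n ^ 3 / (H.Z x * H.conj x ^ 3) * R.Z R.n := by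
    rw [aV]
    change H.Z (-H.conj n ^ 2 / H.conj x) = _ * H.Z n
    have h0 : -H.conj n ^ 2 / H.conj x * H.conj x = -H.conj n ^ 2 := by field_simp
    generalize -H.conj n ^ 2 / H.conj x = v at h0 ⊢
    have h4 := congrArg H.Z h0
    simp only [Derivation.leibniz, map_neg, smul_eq_mul, sq] at h4
    rw [div_mul_eq_mul_div, eq_div_iff (mul_ne_zero hA (pow_ne_zero 3 hξ))]
    linear_combination H.conj x ^ 2 * H.Z x * h4 - H.conj x * H.Z x * H.Z (H.conj x) * h0
      - 2 * H.conj x ^ 2 * H.Z x * h3c + H.conj x * H.Z x * H.Z (H.conj x) * h1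
      - n ^ 2 * H.Z (H.conj x) * h2
  have hY0 : H.Z (H.conj x) * n ^ 3 / (H.Z x * H.conj x ^ 3) ≠ 0 :=
    div_ne_zero (mul_ne_zero hB (pow_ne_zero 3 hn)) (mul_ne_zero hA (pow_ne_zero 3 hξ))
  have hZc : H.Z (H.conj k ^ 2) = 0 := by simp [sq, Derivation.leibniz, hZkb]
  have alt := R.alternative (hb := H.conj h) (eb := H.conj e) (c := H.conj k ^ 2)
    (fun h0 => hh0 (congrArg Subtype.val h0))
    (fun h0 => hk0 (congrArg Subtype.val h0)) (fun h0 => he0 (congrArg Subtype.val h0))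
    (fun h0 => hΔ (congrArg Subtype.val h0)) hw hY hY0 hZhb hZeb hZc
    (by
      rw [aU, aV, aX0, ehb, ekb]
      change _ = -2 * (_ - 4 * _ ^ 2 * _ * n)
      field_simp
      ring)
    (by
      rw [aU, aV, aX0, eeb, ekb]
      change _ = 2 * (n ^ 2 * _ * _ + 4 * _ * _ * n ^ 2)
      field_simp
      ring)
    (by
      rw [aU, aV, aX0, ekb]
      change _ = -64 * (_ * n) ^ 3
      field_simp
      ring)
  refine alt.imp (fun h4 => ?_) (fun h4 => h4)
  rw [aU, aV, aX0] at h4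
  field_simp at h4
  linear_combination (-1 / 2) * h4

end HeisenbergField

end Algebra

lemma QuarticEqSq.cross_eq {E : Type*} [Field E] [CharZero E] {h k e hb eb D l σ π : E}
    (H : QuarticEqSq h k e hb eb D l σ π) (hh : h ≠ 0) (hk : k ≠ 0) (hhb : hb ≠ 0) :
    hb * e = h * eb ∨ (k ^ 2 + h * e) * (hb * e + eb * h) = 2 * h * e := by
  obtain ⟨q1, q2, q3, q4, q5⟩ := H
  have hl : l ≠ 0 := by
    rintro rfl
    have h0 : D * h = 2 * hb := by
      apply mul_right_cancel₀ hh
      linear_combination -q1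
    apply mul_ne_zero hk hhb
    linear_combination q2 / 4 - k * h0
  obtain ⟨L, rfl⟩ : ∃ L, l = L * h ^ 2 := ⟨l / h ^ 2, by field_simp⟩
  have hL : L ≠ 0 := left_ne_zero_of_mul hl
  obtain ⟨α, rfl⟩ : ∃ α, σ = (2 * k - α) / h := ⟨2 * k - h * σ, by field_simp; ring⟩
  obtain ⟨γ, rfl⟩ : ∃ γ, π = (γ - e) / h := ⟨e + h * π, by field_simp; ring⟩
  obtain ⟨D, rfl⟩ : ∃ D', D = D' - L := ⟨D + L, by ring⟩
  have hG : D * h = 2 * hb := by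
    apply mul_right_cancel₀ hh
    linear_combination -q1
  have hα : D * k = L * α := by
    field_simp at q2
    apply mul_left_cancel₀ hh
    linear_combination q2 / 2 - k * hG
  set ε := D * e - 2 * eb - 2 * L * γ with hε
  have e1 : L * α ^ 2 - 4 = ε * h := by
    field_simp at q3
    rw [hε]
    linear_combination -q3 + e * hG - 4 * k * hα
  have e2 : L * α * γ = -k * ε := by
    field_simp at q4
    rw [hε]
    linear_combination -q4 / 2 - e * hα
  have e3 : L * γ ^ 2 = -e * ε := by
    field_simp at q5
    rw [hε]
    linear_combination -q5
  by_cases h0 : ε = 0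
  · left
    rw [h0, mul_zero] at e3
    have hγ : γ = 0 := by simpa [hL] using e3
    rw [hγ, h0] at hε
    linear_combination -h / 2 * hε - e / 2 * hG
  right
  have e4 : ε * (k ^ 2 + h * e) = -4 * e := by
    apply mul_left_cancel₀ h0
    linear_combination -(L * α * γ - k * ε) * e2 + L * γ ^ 2 * e1 + (4 + ε * h) * e3
  have hD : D ≠ 0 := fun h1 => by rw [h1, zero_mul] at hG; simp [hhb] at hG
  have e5 : D * γ = -ε := by
    apply mul_left_cancel₀ hk
    linear_combination e2 + γ * hα
  have e6 : 4 * L = D ^ 2 * (k ^ 2 + h * e) := by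
    apply mul_left_cancel₀ (pow_ne_zero 2 hk)
    linear_combination -L * h * e4 - L * (k ^ 2 + h * e) * e1
      - (k ^ 2 + h * e) * (D * k + L * α) * hα
  have e7 : L * γ = D * e := by
    linear_combination γ / 4 * e6 + D * (k ^ 2 + h * e) / 4 * e5 - D / 4 * e4
  linear_combination -h / 2 * e4 + (k ^ 2 + h * e) * (h / 2 * hε - e / 2 * hG - h * e7)

section Pointwise

open scoped ComplexConjugate

variable {x n k h e : ℂ}

/-- A parametrisation of the pointwise relations. -/
lemma exists_parameters (hx : x ≠ 0) (hn : n ≠ 0) (h1 : n ^ 2 + conj n ^ 2 = -2 * x * conj x)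
    (hk : ‖n‖ ^ 3 < ‖k‖ * ‖x‖ ^ 3) (hh : h * conj x * n = n + k * conj x)
    (he : e * conj x = -n * k * conj x - conj n ^ 2) :
    ∃ (c : ℝ) (lam : ℂ), 0 < c ∧ c ≤ 1 ∧ lam ≠ 0 ∧ ‖lam‖ < c ∧
      n ^ 2 + conj n ^ 2 = -2 * c * n * conj n ∧ h * (n * conj n) = k * (conj n + lam * n) ∧
      e = -k * (n + lam * conj n) ∧ c * (k * conj k) * (lam * conj lam) = 1 ∧ k ≠ 0 := by
  have hk0 : k ≠ 0 := by
    rintro rfl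
    simp at hk
    exact absurd hk (not_lt.mpr (by positivity))
  have hξ : conj x ≠ 0 := by simpa using hx
  have hm : conj n ≠ 0 := by simpa using hn
  have hxx : x * conj x = ((‖x‖ ^ 2 : ℝ) : ℂ) := by
    rw [Complex.mul_conj, Complex.normSq_eq_norm_sq]
  have hnn : n * conj n = ((‖n‖ ^ 2 : ℝ) : ℂ) := by
    rw [Complex.mul_conj, Complex.normSq_eq_norm_sq]
  have hx' : 0 < ‖x‖ := norm_pos_iff.mpr hx
  have hn' : 0 < ‖n‖ := norm_pos_iff.mpr hn
  have hk' : 0 < ‖k‖ := norm_pos_iff.mpr hk0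
  have hc : ((‖x‖ ^ 2 / ‖n‖ ^ 2 : ℝ) : ℂ) = x * conj x / (n * conj n) := by
    rw [hxx, hnn]; push_cast; rfl
  refine ⟨‖x‖ ^ 2 / ‖n‖ ^ 2, conj n / (k * conj x), by positivity, ?_,
    div_ne_zero hm (mul_ne_zero hk0 hξ), ?_, ?_, ?_, ?_, ?_, hk0⟩
  · rw [div_le_one (by positivity)]
    have := norm_add_le (n ^ 2) (conj n ^ 2)
    rw [h1] at this
    simp at this
    nlinarith
  · simp only [norm_div, norm_mul, RCLike.norm_conj]
    rw [div_lt_div_iff₀ (by positivity) (by positivity)]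
    nlinarith
  · rw [hc, h1]; field_simp
  · apply mul_left_cancel₀ hξ
    field_simp
    linear_combination hh
  · apply mul_left_cancel₀ hξ
    field_simp
    linear_combination he
  · rw [hc]
    have hkc : conj k ≠ 0 := by simpa using hk0
    simp only [map_div₀, map_mul, Complex.conj_conj]
    field_simp

lemma pointwise_ne_zero (hx : x ≠ 0) (hn : n ≠ 0) (h1 : n ^ 2 + conj n ^ 2 = -2 * x * conj x)
    (hk : ‖n‖ ^ 3 < ‖k‖ * ‖x‖ ^ 3) (hh : h * conj x * n = n + k * conj x)
    (he : e * conj x = -n * k * conj x - conj n ^ 2) :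
    h ≠ 0 ∧ e ≠ 0 ∧ k ^ 2 + h * e ≠ 0 := by
  obtain ⟨c, lam, hc, hc1, hl, hlc, p1, p2, p3, -, hk0⟩ := exists_parameters hx hn h1 hk hh he
  have hm : conj n ≠ 0 := by simpa using hn
  have hl1 : ‖lam‖ < 1 := hlc.trans_le hc1
  refine ⟨?_, ?_, ?_⟩
  · rintro rfl
    have h0 : conj n = -(lam * n) := by
      have := (mul_eq_zero.mp (p2.symm.trans (zero_mul _))).resolve_left hk0
      linear_combination this
    have h2 := congrArg norm h0
    simp at h2
    nlinarith [norm_pos_iff.mpr hn]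
  · intro h0
    have h0 : n = -(lam * conj n) := by
      have := (mul_eq_zero.mp (p3.symm.trans h0)).resolve_left (neg_ne_zero.mpr hk0)
      linear_combination this
    have h2 := congrArg norm h0
    simp at h2
    nlinarith [norm_pos_iff.mpr hn]
  · intro h0
    have h2 : k ^ 2 * (n * conj n) * lam * (2 * c - lam) = 0 := by
      linear_combination n * conj n * h0 - e * p2 - k * (conj n + lam * n) * p3 + k ^ 2 * lam * p1
    have h3 : lam = ((2 * c : ℝ) : ℂ) := by
      have := (mul_eq_zero.mp h2).resolve_left
        (mul_ne_zero (mul_ne_zero (pow_ne_zero 2 hk0) (mul_ne_zero hn hm)) hl)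
      push_cast
      linear_combination -this
    rw [h3, Complex.norm_real, Real.norm_of_nonneg (by positivity)] at hlc
    linarith

lemma pointwise_not_quarticEqSq (hx : x ≠ 0) (hn : n ≠ 0)
    (h1 : n ^ 2 + conj n ^ 2 = -2 * x * conj x) (hnm : n ^ 2 ≠ conj n ^ 2)
    (hk : ‖n‖ ^ 3 < ‖k‖ * ‖x‖ ^ 3) (hh : h * conj x * n = n + k * conj x)
    (he : e * conj x = -n * k * conj x - conj n ^ 2) (l σ π : ℂ) :
    ¬ QuarticEqSq h k e (conj h) (conj e) (conj k ^ 2 + conj h * conj e) l σ π := by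
  intro H
  obtain ⟨hh0, he0, hΔ⟩ := pointwise_ne_zero hx hn h1 hk hh he
  obtain ⟨c, lam, hc, hc1, hl, hlc, p1, p2, p3, p4, hk0⟩ := exists_parameters hx hn h1 hk hh he
  have hm : conj n ≠ 0 := by simpa using hn
  have hkc : conj k ≠ 0 := by simpa using hk0
  have hl1 : ‖lam‖ < 1 := hlc.trans_le hc1
  have p2c : conj h * (n * conj n) = conj k * (n + conj lam * conj n) := by
    have := congrArg conj p2
    simp only [map_mul, map_add, Complex.conj_conj] at this
    linear_combination this
  have p3c : conj e = -conj k * (conj n + conj lam * n) := by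
    have := congrArg conj p3
    simpa using this
  rcases H.cross_eq hh0 hk0 (by simpa using hh0) with h0 | h0
  · have h2 : (n ^ 2 - conj n ^ 2) * (1 - lam * conj lam) = 0 := by
      apply (mul_eq_zero.mp (?_ : (k * conj k) * _ = 0)).resolve_left (mul_ne_zero hk0 hkc)
      rw [p3c, p3] at h0
      linear_combination -n * conj n * h0 - k * (n + lam * conj n) * p2c
        + conj k * (conj n + conj lam * n) * p2
    rcases mul_eq_zero.mp h2 with h3 | h3
    · exact hnm (sub_eq_zero.mp h3)
    · rw [Complex.mul_conj, Complex.normSq_eq_norm_sq] at h3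
      have : (1 : ℝ) - ‖lam‖ ^ 2 = 0 := by exact_mod_cast h3
      nlinarith [norm_nonneg lam]
  · have h2 : (k * conj k) * (lam * (2 * c - lam)) *
        (-c * (1 + lam * conj lam) + lam + conj lam) = 1 - lam * (2 * c - lam) := by
      have a1 : n * conj n * (k ^ 2 + h * e) = k ^ 2 * (n * conj n) * (lam * (2 * c - lam)) := by
        linear_combination e * p2 + k * (conj n + lam * n) * p3 - k ^ 2 * lam * p1
      have a2 : n * conj n * (conj h * e + conj e * h) = -2 * (k * conj k) * (n * conj n) *
          (-c * (1 + lam * conj lam) + lam + conj lam) := by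
        rw [p3c, p3]
        linear_combination -k * (n + lam * conj n) * p2c - conj k * (conj n + conj lam * n) * p2
          - k * conj k * (1 + lam * conj lam) * p1
      apply mul_left_cancel₀ (mul_ne_zero (pow_ne_zero 2 hk0) (pow_ne_zero 2 (mul_ne_zero hn hm)))
      linear_combination -(n * conj n) ^ 2 / 2 * h0 + n * conj n * (conj h * e + conj e * h) / 2 * a1
        + k ^ 2 * (n * conj n) * (lam * (2 * c - lam)) / 2 * a2 - n * conj n * a1
    have hre : ∃ a b : ℝ, lam = a + b * Complex.I := ⟨lam.re, lam.im, by simp⟩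
    obtain ⟨a, b, rfl⟩ := hre
    have ha : a < c := by
      refine lt_of_le_of_lt ?_ hlc
      have := Complex.re_le_norm (a + b * Complex.I)
      simpa using this
    rw [Complex.mul_conj k] at h2 p4
    generalize Complex.normSq k = κ at h2 p4
    have hconj : conj (a + b * Complex.I : ℂ) = a - b * Complex.I := by
      simp [sub_eq_add_neg]
    rw [hconj] at h2 p4
    have h3 : (((a * (2 * c - a) + b ^ 2 : ℝ) : ℂ) + ((2 * b * (c - a) : ℝ) : ℂ) * Complex.I) *
        ((κ * (-c * (1 + a ^ 2 + b ^ 2) + 2 * a) + 1 : ℝ) : ℂ) = 1 := by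
      push_cast
      linear_combination h2 + (b ^ 2 * (κ * (-c * (1 + a ^ 2 + b ^ 2) + 2 * a) + 1) - κ * c * b ^ 2 *
        ((a + b * Complex.I) * (2 * c - (a + b * Complex.I)))) * Complex.I_sq
    have h4 : c * κ * (a ^ 2 + b ^ 2) = 1 := by
      have : ((c * κ * (a ^ 2 + b ^ 2) : ℝ) : ℂ) = 1 := by
        push_cast
        linear_combination p4 + c * κ * b ^ 2 * Complex.I_sq
      exact_mod_cast this
    have r1 := congrArg Complex.re h3
    have i1 := congrArg Complex.im h3
    simp only [Complex.re_mul_ofReal, Complex.im_mul_ofReal, Complex.add_re, Complex.add_im,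
      Complex.re_ofReal_mul, Complex.im_ofReal_mul,
      Complex.ofReal_re, Complex.ofReal_im, Complex.I_re, Complex.I_im, Complex.one_re,
      Complex.one_im, mul_zero, zero_add, mul_one, add_zero] at r1 i1
    have hb : b = 0 := by
      rcases mul_eq_zero.mp i1 with h5 | h5
      · rcases mul_eq_zero.mp h5 with h6 | h6
        · linarith
        · linarith
      · rw [h5] at r1; linarith
    subst hb
    have : a * (c - a) ^ 2 = 0 := by
      apply mul_left_cancel₀ (two_ne_zero' ℝ)
      linear_combination -c * a ^ 2 * r1 + a * (2 * c - a) * (-c * (1 + a ^ 2) + 2 * a) * h4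
    rcases mul_eq_zero.mp this with h5 | h5
    · exact hl (by simp [h5])
    · nlinarith [pow_pos (sub_pos.mpr ha) 2]

end Pointwise

section Calculus

open scoped ContDiff ComplexConjugate Topology

variable {W : Set Heis} {u v : Heis → ℂ} {p : Heis}

/-- Differentiation along a vector field. -/
def fieldDeriv (V : Heis → Heis) (u : Heis → ℂ) (p : Heis) : ℂ := fderiv ℝ u p (V p)

/-- The coefficients of the vector field `X`. -/
def fieldX (p : Heis) : Heis := (1, 0, 2 * p.2.1)

/-- The coefficients of the vector field `Y`. -/
def fieldY (p : Heis) : Heis := (0, 1, -(2 * p.1))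

/-- The coefficients of the vector field `T`. -/
def fieldT (_ : Heis) : Heis := (0, 0, 1)

lemma contDiff_fieldX : ContDiff ℝ ∞ fieldX := by unfold fieldX; fun_prop
lemma contDiff_fieldY : ContDiff ℝ ∞ fieldY := by unfold fieldY; fun_prop
lemma contDiff_fieldT : ContDiff ℝ ∞ fieldT := by unfold fieldT; fun_prop

lemma XD_eq (u : Heis → ℂ) : XD u = fieldDeriv fieldX u := rfl
lemma YD_eq (u : Heis → ℂ) : YD u = fieldDeriv fieldY u := rfl
lemma TD_eq (u : Heis → ℂ) : TD u = fieldDeriv fieldT u := rfl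

lemma ContDiffOn.fieldDeriv {V : Heis → Heis} (hV : ContDiff ℝ ∞ V) (hW : IsOpen W)
    (hu : ContDiffOn ℝ ∞ u W) : ContDiffOn ℝ ∞ (fieldDeriv V u) W :=
  ((hu.fderiv_of_isOpen hW (m := ∞) (by simp)).clm_apply hV.contDiffOn)

lemma ContDiffOn.differentiableAt_of_isOpen {E : Type*} [NormedAddCommGroup E] [NormedSpace ℝ E]
    {u : Heis → E} (hu : ContDiffOn ℝ ∞ u W) (hW : IsOpen W) (hp : p ∈ W) :
    DifferentiableAt ℝ u p :=
  (hu.contDiffAt (hW.mem_nhds hp)).differentiableAt (by simp)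

lemma fieldDeriv_fieldDeriv {V V' : Heis → Heis} (hV : ContDiff ℝ ∞ V) (hW : IsOpen W)
    (hu : ContDiffOn ℝ ∞ u W) (hp : p ∈ W) :
    fieldDeriv V' (fieldDeriv V u) p =
      fderiv ℝ (fderiv ℝ u) p (V' p) (V p) + fderiv ℝ u p (fderiv ℝ V p (V' p)) := by
  have h1 : DifferentiableAt ℝ (fderiv ℝ u) p :=
    (hu.fderiv_of_isOpen hW (m := ∞) (by simp)).differentiableAt_of_isOpen hW hp
  have h2 : DifferentiableAt ℝ V p := hV.differentiable (by simp) p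
  change fderiv ℝ (fun q => fderiv ℝ u q (V q)) p (V' p) = _
  rw [fderiv_clm_apply h1 h2]
  simp [add_comm]

lemma fieldDeriv_comm {V V' : Heis → Heis} (hV : ContDiff ℝ ∞ V) (hV' : ContDiff ℝ ∞ V')
    (hW : IsOpen W) (hu : ContDiffOn ℝ ∞ u W) (hp : p ∈ W) :
    fieldDeriv V' (fieldDeriv V u) p = fieldDeriv V (fieldDeriv V' u) p +
      fderiv ℝ u p (fderiv ℝ V p (V' p) - fderiv ℝ V' p (V p)) := by
  rw [fieldDeriv_fieldDeriv hV hW hu hp, fieldDeriv_fieldDeriv hV' hW hu hp, map_sub]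
  have h1 : IsSymmSndFDerivAt ℝ u p :=
    (hu.contDiffAt (hW.mem_nhds hp)).isSymmSndFDerivAt (by
      simp only [minSmoothness_of_isRCLikeNormedField]
      exact WithTop.coe_le_coe.mpr le_top)
  rw [h1.eq (V' p) (V p)]
  ring

lemma fderiv_fieldX (p w : Heis) : fderiv ℝ fieldX p w = (0, 0, 2 * w.2.1) := by
  have h : HasFDerivAt fieldX (ContinuousLinearMap.prod 0 (ContinuousLinearMap.prod 0
      ((2 : ℝ) • (ContinuousLinearMap.fst ℝ ℝ ℝ).comp (ContinuousLinearMap.snd ℝ ℝ (ℝ × ℝ))))) p :=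
    (hasFDerivAt_const _ _).prodMk ((hasFDerivAt_const _ _).prodMk
      (((ContinuousLinearMap.fst ℝ ℝ ℝ).comp
        (ContinuousLinearMap.snd ℝ ℝ (ℝ × ℝ))).hasFDerivAt.const_smul (2 : ℝ)))
  rw [h.fderiv]
  simp

lemma fderiv_fieldY (p w : Heis) : fderiv ℝ fieldY p w = (0, 0, -(2 * w.1)) := by
  have h : HasFDerivAt fieldY (ContinuousLinearMap.prod 0 (ContinuousLinearMap.prod 0
      (-((2 : ℝ) • (ContinuousLinearMap.fst ℝ ℝ (ℝ × ℝ)))))) p :=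
    (hasFDerivAt_const _ _).prodMk ((hasFDerivAt_const _ _).prodMk
      (((ContinuousLinearMap.fst ℝ ℝ (ℝ × ℝ)).hasFDerivAt.const_smul (2 : ℝ)).neg))
  rw [h.fderiv]
  simp

lemma fderiv_fieldT (p w : Heis) : fderiv ℝ fieldT p w = 0 := by
  rw [show fieldT = fun _ => ((0, 0, 1) : Heis) from rfl]
  simp

lemma ContDiffOn.ZD (hW : IsOpen W) (hu : ContDiffOn ℝ ∞ u W) : ContDiffOn ℝ ∞ (ZD u) W :=
  ((hu.fieldDeriv contDiff_fieldX hW).sub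
    (contDiffOn_const.mul (hu.fieldDeriv contDiff_fieldY hW))).div_const 2

lemma ContDiffOn.ZbD (hW : IsOpen W) (hu : ContDiffOn ℝ ∞ u W) : ContDiffOn ℝ ∞ (ZbD u) W :=
  ((hu.fieldDeriv contDiff_fieldX hW).add
    (contDiffOn_const.mul (hu.fieldDeriv contDiff_fieldY hW))).div_const 2

lemma ContDiffOn.TD (hW : IsOpen W) (hu : ContDiffOn ℝ ∞ u W) : ContDiffOn ℝ ∞ (TD u) W :=
  hu.fieldDeriv contDiff_fieldT hW

lemma ContDiffOn.conj (hu : ContDiffOn ℝ ∞ u W) : ContDiffOn ℝ ∞ (fun p => conj (u p)) W :=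
  (Complex.conjCLE.contDiff (n := ∞)).comp_contDiffOn hu

/-- The properties shared by the first order differential operators `Z`, `Z̄`, `T`. -/
structure IsFirstOrder (D : (Heis → ℂ) → Heis → ℂ) : Prop where
  contDiffOn : ∀ {W : Set Heis} {u : Heis → ℂ}, IsOpen W → ContDiffOn ℝ ∞ u W →
    ContDiffOn ℝ ∞ (D u) W
  congr : ∀ {u v : Heis → ℂ} {p : Heis}, u =ᶠ[𝓝 p] v → D u p = D v p
  add : ∀ {u v : Heis → ℂ} {p : Heis}, DifferentiableAt ℝ u p → DifferentiableAt ℝ v p →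
    D (fun q => u q + v q) p = D u p + D v p
  mul : ∀ {u v : Heis → ℂ} {p : Heis}, DifferentiableAt ℝ u p → DifferentiableAt ℝ v p →
    D (fun q => u q * v q) p = u p * D v p + v p * D u p
  const : ∀ (c : ℂ) (p : Heis), D (fun _ => c) p = 0
  /-- The chain rule for holomorphic functions. -/
  comp : ∀ {φ : ℂ → ℂ} {φ' : ℂ} {u : Heis → ℂ} {p : Heis}, HasDerivAt φ φ' (u p) →
    DifferentiableAt ℝ u p → D (fun q => φ (u q)) p = φ' * D u p

lemma fderiv_comp_holomorphic {φ : ℂ → ℂ} {φ' : ℂ} (hφ : HasDerivAt φ φ' (u p))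
    (hu : DifferentiableAt ℝ u p) (w : Heis) :
    fderiv ℝ (fun q => φ (u q)) p w = φ' * fderiv ℝ u p w := by
  have := (hφ.hasFDerivAt.restrictScalars ℝ).comp p hu.hasFDerivAt
  have h2 := this.fderiv
  rw [show (fun q => φ (u q)) = φ ∘ u from rfl, h2]
  simp [mul_comm]

lemma isFirstOrder_ZD : IsFirstOrder ZD where
  contDiffOn hW hu := ContDiffOn.ZD hW hu
  congr h := by simp only [ZD, XD, YD, h.fderiv_eq]
  add hu hv := by
    simp only [ZD, XD, YD, fderiv_fun_add hu hv, add_apply]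
    ring
  mul hu hv := by
    simp only [ZD, XD, YD, fderiv_fun_mul hu hv, add_apply,
      smul_apply, smul_eq_mul]
    ring
  const c p := by simp [ZD, XD, YD]
  comp hφ hu := by
    simp only [ZD, XD, YD, fderiv_comp_holomorphic hφ hu]
    ring

lemma isFirstOrder_ZbD : IsFirstOrder ZbD where
  contDiffOn hW hu := ContDiffOn.ZbD hW hu
  congr h := by simp only [ZbD, XD, YD, h.fderiv_eq]
  add hu hv := by
    simp only [ZbD, XD, YD, fderiv_fun_add hu hv, add_apply]
    ring
  mul hu hv := by
    simp only [ZbD, XD, YD, fderiv_fun_mul hu hv, add_apply,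
      smul_apply, smul_eq_mul]
    ring
  const c p := by simp [ZbD, XD, YD]
  comp hφ hu := by
    simp only [ZbD, XD, YD, fderiv_comp_holomorphic hφ hu]
    ring

lemma isFirstOrder_TD : IsFirstOrder (TD (E := ℂ)) where
  contDiffOn hW hu := ContDiffOn.TD hW hu
  congr h := by simp only [TD, h.fderiv_eq]
  add hu hv := by
    simp only [TD, fderiv_fun_add hu hv, add_apply]
  mul hu hv := by
    simp only [TD, fderiv_fun_mul hu hv, add_apply,
      smul_apply, smul_eq_mul]
  const c p := by simp [TD]
  comp hφ hu := by
    simp only [TD, fderiv_comp_holomorphic hφ hu]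

lemma fderiv_conj (u : Heis → ℂ) (p w : Heis) :
    fderiv ℝ (fun q => conj (u q)) p w = conj (fderiv ℝ u p w) := by
  have := Complex.conjCLE.comp_fderiv (f := u) (x := p)
  rw [show (fun q => conj (u q)) = Complex.conjCLE ∘ u from rfl, this]
  simp

lemma ZD_conj (u : Heis → ℂ) (p : Heis) : ZD (fun q => conj (u q)) p = conj (ZbD u p) := by
  simp only [ZD, ZbD, XD, YD, fderiv_conj, map_div₀, map_add, map_mul, Complex.conj_I, map_ofNat]
  ring

lemma ZbD_conj (u : Heis → ℂ) (p : Heis) : ZbD (fun q => conj (u q)) p = conj (ZD u p) := by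
  simp only [ZD, ZbD, XD, YD, fderiv_conj, map_div₀, map_sub, map_mul, Complex.conj_I, map_ofNat]
  ring

lemma fieldDeriv_sub_I_mul {V V₁ V₂ : Heis → Heis} (hV₁ : ContDiff ℝ ∞ V₁)
    (hV₂ : ContDiff ℝ ∞ V₂) (c : ℂ) (hW : IsOpen W) (hu : ContDiffOn ℝ ∞ u W) (hp : p ∈ W) :
    fieldDeriv V (fun q => (fieldDeriv V₁ u q + c * fieldDeriv V₂ u q) / 2) p =
      (fieldDeriv V (fieldDeriv V₁ u) p + c * fieldDeriv V (fieldDeriv V₂ u) p) / 2 := by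
  have h1 := (hu.fieldDeriv hV₁ hW).differentiableAt_of_isOpen hW hp
  have h2 := (hu.fieldDeriv hV₂ hW).differentiableAt_of_isOpen hW hp
  have h3 : HasFDerivAt (fun q => (fieldDeriv V₁ u q + c * fieldDeriv V₂ u q) / 2)
      ((2⁻¹ : ℂ) • (fderiv ℝ (fieldDeriv V₁ u) p + c • fderiv ℝ (fieldDeriv V₂ u) p)) p := by
    simpa [div_eq_inv_mul] using (h1.hasFDerivAt.add (h2.hasFDerivAt.const_mul c)).const_mul 2⁻¹
  rw [fieldDeriv, h3.fderiv]
  simp [fieldDeriv]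
  ring

lemma ZD_eq_fieldDeriv (u : Heis → ℂ) :
    ZD u = fun q => (fieldDeriv fieldX u q + -Complex.I * fieldDeriv fieldY u q) / 2 := by
  ext q; simp only [ZD, XD_eq, YD_eq]; ring

lemma ZbD_eq_fieldDeriv (u : Heis → ℂ) :
    ZbD u = fun q => (fieldDeriv fieldX u q + Complex.I * fieldDeriv fieldY u q) / 2 := rfl

lemma XD_TD_comm (hW : IsOpen W) (hu : ContDiffOn ℝ ∞ u W) (hp : p ∈ W) :
    fieldDeriv fieldX (fieldDeriv fieldT u) p = fieldDeriv fieldT (fieldDeriv fieldX u) p := by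
  rw [fieldDeriv_comm contDiff_fieldT contDiff_fieldX hW hu hp, fderiv_fieldT, fderiv_fieldX]
  simp [fieldT, show ((0, 0, 0) : Heis) = 0 from rfl]

lemma YD_TD_comm (hW : IsOpen W) (hu : ContDiffOn ℝ ∞ u W) (hp : p ∈ W) :
    fieldDeriv fieldY (fieldDeriv fieldT u) p = fieldDeriv fieldT (fieldDeriv fieldY u) p := by
  rw [fieldDeriv_comm contDiff_fieldT contDiff_fieldY hW hu hp, fderiv_fieldT, fderiv_fieldY]
  simp [fieldT, show ((0, 0, 0) : Heis) = 0 from rfl]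

lemma YD_XD_comm (hW : IsOpen W) (hu : ContDiffOn ℝ ∞ u W) (hp : p ∈ W) :
    fieldDeriv fieldY (fieldDeriv fieldX u) p =
      fieldDeriv fieldX (fieldDeriv fieldY u) p + 4 * fieldDeriv fieldT u p := by
  rw [fieldDeriv_comm contDiff_fieldX contDiff_fieldY hW hu hp, fderiv_fieldX, fderiv_fieldY]
  have : (0, 0, 2 * (fieldY p).2.1) - (0, 0, -(2 * (fieldX p).1)) = (4 : ℝ) • fieldT p := by
    simp [fieldX, fieldY, fieldT]; norm_num
  rw [this, map_smul]
  simp [fieldDeriv]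

lemma ZD_TD (hW : IsOpen W) (hu : ContDiffOn ℝ ∞ u W) (hp : p ∈ W) :
    ZD (TD u) p = TD (ZD u) p := by
  rw [TD_eq (ZD u), ZD_eq_fieldDeriv u,
    fieldDeriv_sub_I_mul contDiff_fieldX contDiff_fieldY _ hW hu hp, ZD_eq_fieldDeriv, TD_eq]
  simp only
  rw [XD_TD_comm hW hu hp, YD_TD_comm hW hu hp]

lemma ZbD_TD (hW : IsOpen W) (hu : ContDiffOn ℝ ∞ u W) (hp : p ∈ W) :
    ZbD (TD u) p = TD (ZbD u) p := by
  rw [TD_eq (ZbD u), ZbD_eq_fieldDeriv u,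
    fieldDeriv_sub_I_mul contDiff_fieldX contDiff_fieldY _ hW hu hp, ZbD_eq_fieldDeriv, TD_eq]
  simp only
  rw [XD_TD_comm hW hu hp, YD_TD_comm hW hu hp]

lemma ZbD_ZD (hW : IsOpen W) (hu : ContDiffOn ℝ ∞ u W) (hp : p ∈ W) :
    ZbD (ZD u) p = ZD (ZbD u) p + 2 * Complex.I * TD u p := by
  rw [ZbD_eq_fieldDeriv (ZD u), ZD_eq_fieldDeriv (ZbD u), ZD_eq_fieldDeriv u,
    ZbD_eq_fieldDeriv u, TD_eq]
  simp only
  rw [fieldDeriv_sub_I_mul contDiff_fieldX contDiff_fieldY _ hW hu hp,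
    fieldDeriv_sub_I_mul contDiff_fieldX contDiff_fieldY _ hW hu hp,
    fieldDeriv_sub_I_mul contDiff_fieldX contDiff_fieldY _ hW hu hp,
    fieldDeriv_sub_I_mul contDiff_fieldX contDiff_fieldY _ hW hu hp,
    YD_XD_comm hW hu hp]
  ring

end Calculus

section Germs

open scoped ContDiff ComplexConjugate Topology
open Filter

/-- The field of germs of smooth functions along an ultrafilter. -/
def smoothGerms (l : Ultrafilter Heis) : Subfield (Germ (l : Filter Heis) ℂ) where
  carrier := {g | ∃ (u : Heis → ℂ) (W : Set Heis), IsOpen W ∧ W ∈ l ∧ ContDiffOn ℝ ∞ u W ∧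
    g = (u : Germ (l : Filter Heis) ℂ)}
  mul_mem' := by
    rintro _ _ ⟨u, W, hW, hWl, hu, rfl⟩ ⟨v, W', hW', hWl', hv, rfl⟩
    exact ⟨u * v, W ∩ W', hW.inter hW', inter_mem hWl hWl',
      (hu.mono Set.inter_subset_left).mul (hv.mono Set.inter_subset_right), rfl⟩
  one_mem' := ⟨1, Set.univ, isOpen_univ, univ_mem, contDiffOn_const, rfl⟩
  add_mem' := by
    rintro _ _ ⟨u, W, hW, hWl, hu, rfl⟩ ⟨v, W', hW', hWl', hv, rfl⟩
    exact ⟨u + v, W ∩ W', hW.inter hW', inter_mem hWl hWl',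
      (hu.mono Set.inter_subset_left).add (hv.mono Set.inter_subset_right), rfl⟩
  zero_mem' := ⟨0, Set.univ, isOpen_univ, univ_mem, contDiffOn_const, rfl⟩
  neg_mem' := by
    rintro _ ⟨u, W, hW, hWl, hu, rfl⟩
    exact ⟨-u, W, hW, hWl, hu.neg, rfl⟩
  inv_mem' := by
    rintro _ ⟨u, W, hW, hWl, hu, rfl⟩
    by_cases h : (u : Germ (l : Filter Heis) ℂ) = 0
    · rw [h, inv_zero]
      exact ⟨0, Set.univ, isOpen_univ, univ_mem, contDiffOn_const, rfl⟩
    · have h1 : ∀ᶠ p in (l : Filter Heis), u p ≠ 0 := by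
        rw [Ultrafilter.eventually_not]
        intro h2
        exact h (Germ.coe_eq.mpr h2)
      exact ⟨u⁻¹, W ∩ u ⁻¹' {0}ᶜ, hu.continuousOn.isOpen_inter_preimage hW isOpen_compl_singleton,
        inter_mem hWl h1, (hu.mono Set.inter_subset_left).inv fun p hp => hp.2, rfl⟩

variable {l : Ultrafilter Heis}

/-- The germ of a function which is smooth on an open set of the ultrafilter. -/
def smoothGerm (u : Heis → ℂ) {W : Set Heis} (hW : IsOpen W) (hWl : W ∈ l)
    (hu : ContDiffOn ℝ ∞ u W) : smoothGerms l := ⟨u, u, W, hW, hWl, hu, rfl⟩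

lemma smoothGerm_eq_iff {u v : Heis → ℂ} {W W' : Set Heis} {hW : IsOpen W} {hWl : W ∈ l}
    {hu : ContDiffOn ℝ ∞ u W} {hW' : IsOpen W'} {hWl' : W' ∈ l} {hv : ContDiffOn ℝ ∞ v W'} :
    smoothGerm u hW hWl hu = smoothGerm v hW' hWl' hv ↔ ∀ᶠ p in (l : Filter Heis), u p = v p := by
  rw [Subtype.ext_iff]
  exact Germ.coe_eq

lemma smoothGerm_eq_zero_iff {u : Heis → ℂ} {W : Set Heis} {hW : IsOpen W} {hWl : W ∈ l}
    {hu : ContDiffOn ℝ ∞ u W} :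
    smoothGerm u hW hWl hu = 0 ↔ ∀ᶠ p in (l : Filter Heis), u p = 0 := by
  rw [Subtype.ext_iff]
  exact Germ.coe_eq (g := fun _ => 0)

lemma smoothGerm_add {u v : Heis → ℂ} {W W' : Set Heis} {hW : IsOpen W} {hWl : W ∈ l}
    {hu : ContDiffOn ℝ ∞ u W} {hW' : IsOpen W'} {hWl' : W' ∈ l} {hv : ContDiffOn ℝ ∞ v W'} :
    smoothGerm u hW hWl hu + smoothGerm v hW' hWl' hv =
      smoothGerm (fun p => u p + v p) (hW.inter hW') (inter_mem hWl hWl')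
        ((hu.mono Set.inter_subset_left).add (hv.mono Set.inter_subset_right)) := rfl

lemma smoothGerm_mul {u v : Heis → ℂ} {W W' : Set Heis} {hW : IsOpen W} {hWl : W ∈ l}
    {hu : ContDiffOn ℝ ∞ u W} {hW' : IsOpen W'} {hWl' : W' ∈ l} {hv : ContDiffOn ℝ ∞ v W'} :
    smoothGerm u hW hWl hu * smoothGerm v hW' hWl' hv =
      smoothGerm (fun p => u p * v p) (hW.inter hW') (inter_mem hWl hWl')
        ((hu.mono Set.inter_subset_left).mul (hv.mono Set.inter_subset_right)) := rfl

lemma exists_eq_smoothGerm (g : smoothGerms l) : ∃ (u : Heis → ℂ) (W : Set Heis) (hW : IsOpen W)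
    (hWl : W ∈ l) (hu : ContDiffOn ℝ ∞ u W), g = smoothGerm u hW hWl hu := by
  obtain ⟨_, u, W, hW, hWl, hu, rfl⟩ := g
  exact ⟨u, W, hW, hWl, hu, rfl⟩

instance : CharZero (smoothGerms l) := by
  let φ : ℂ →+* smoothGerms l :=
    ((Germ.coeRingHom (l : Filter Heis)).comp (Pi.constRingHom Heis ℂ)).codRestrict _
      (fun c => ⟨fun _ => c, Set.univ, isOpen_univ, univ_mem, contDiffOn_const, rfl⟩)
  exact charZero_of_injective_ringHom φ.injective

/-- An equality of continuous functions along a generic ultrafilter holds on an open set. -/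
lemma interior_mem_of_eventuallyEq (hl : ∀ O : Set Heis, IsOpen O → Dense O → O ∈ l)
    {u v : Heis → ℂ} {W : Set Heis} (hW : IsOpen W) (hWl : W ∈ l) (hu : ContinuousOn u W)
    (hv : ContinuousOn v W) (huv : ∀ᶠ p in (l : Filter Heis), u p = v p) :
    ∀ᶠ p in (l : Filter Heis), u =ᶠ[𝓝 p] v := by
  set N : Set Heis := W ∩ (fun p => u p - v p) ⁻¹' {0}ᶜ with hN
  have hNo : IsOpen N := (hu.sub hv).isOpen_inter_preimage hW isOpen_compl_singleton
  have hF : (frontier N)ᶜ ∈ l := by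
    apply hl _ isClosed_frontier.isOpen_compl
    rw [← interior_eq_empty_iff_dense_compl, ← frontier_compl]
    exact interior_frontier hNo.isClosed_compl
  filter_upwards [huv, hWl, hF] with p h1 h2 h3
  have h4 : p ∉ closure N := by
    rw [hNo.frontier_eq] at h3
    intro h5
    exact h3 ⟨h5, fun h6 => h6.2 (by simp [h1])⟩
  filter_upwards [hW.mem_nhds h2, isClosed_closure.isOpen_compl.mem_nhds h4] with q h5 h6
  by_contra h7
  exact h6 (subset_closure ⟨h5, fun h8 => h7 (sub_eq_zero.mp h8)⟩)

namespace IsFirstOrder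

variable {D : (Heis → ℂ) → Heis → ℂ}

lemma congr_germ (hD : IsFirstOrder D) (hl : ∀ O : Set Heis, IsOpen O → Dense O → O ∈ l) {u v : Heis → ℂ}
    {W W' : Set Heis} (hW : IsOpen W) (hWl : W ∈ l) (hu : ContDiffOn ℝ ∞ u W) (hW' : IsOpen W')
    (hWl' : W' ∈ l) (hv : ContDiffOn ℝ ∞ v W') (huv : ∀ᶠ p in (l : Filter Heis), u p = v p) :
    ∀ᶠ p in (l : Filter Heis), D u p = D v p :=
  (interior_mem_of_eventuallyEq hl (hW.inter hW') (inter_mem hWl hWl')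
    (hu.continuousOn.mono Set.inter_subset_left)
    (hv.continuousOn.mono Set.inter_subset_right) huv).mono fun _ h => hD.congr h

/-- The action of a first order operator on germs. -/
def onGerm (hD : IsFirstOrder D) (g : smoothGerms l) : smoothGerms l :=
  have h := (exists_eq_smoothGerm g).choose_spec.choose_spec
  smoothGerm (D (exists_eq_smoothGerm g).choose) h.choose h.choose_spec.choose
    (hD.contDiffOn h.choose h.choose_spec.choose_spec.choose)

lemma onGerm_smoothGerm (hD : IsFirstOrder D) (hl : ∀ O : Set Heis, IsOpen O → Dense O → O ∈ l)
    {u : Heis → ℂ} {W : Set Heis} (hW : IsOpen W) (hWl : W ∈ l) (hu : ContDiffOn ℝ ∞ u W) :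
    hD.onGerm (smoothGerm u hW hWl hu) = smoothGerm (D u) hW hWl (hD.contDiffOn hW hu) := by
  have h := (exists_eq_smoothGerm (smoothGerm u hW hWl hu)).choose_spec.choose_spec
  refine Subtype.ext (Germ.coe_eq.mpr ?_)
  apply hD.congr_germ hl h.choose h.choose_spec.choose h.choose_spec.choose_spec.choose hW hWl hu
  exact smoothGerm_eq_iff.mp h.choose_spec.choose_spec.choose_spec.symm

/-- The derivation of the field of germs defined by a first order operator. -/
def derivation (hD : IsFirstOrder D) (hl : ∀ O : Set Heis, IsOpen O → Dense O → O ∈ l) :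
    Derivation ℤ (smoothGerms l) (smoothGerms l) :=
  Derivation.mk' (AddMonoidHom.toIntLinearMap (AddMonoidHom.mk' hD.onGerm (by
    intro a b
    obtain ⟨u, W, hW, hWl, hu, rfl⟩ := exists_eq_smoothGerm a
    obtain ⟨v, W', hW', hWl', hv, rfl⟩ := exists_eq_smoothGerm b
    rw [smoothGerm_add, onGerm_smoothGerm hD hl, onGerm_smoothGerm hD hl, onGerm_smoothGerm hD hl,
      smoothGerm_add, smoothGerm_eq_iff]
    filter_upwards [hWl, hWl'] with p hp hp'
    exact hD.add (hu.differentiableAt_of_isOpen hW hp) (hv.differentiableAt_of_isOpen hW' hp'))))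
  (by
    intro a b
    obtain ⟨u, W, hW, hWl, hu, rfl⟩ := exists_eq_smoothGerm a
    obtain ⟨v, W', hW', hWl', hv, rfl⟩ := exists_eq_smoothGerm b
    change hD.onGerm _ = _ * hD.onGerm _ + _ * hD.onGerm _
    rw [smoothGerm_mul, onGerm_smoothGerm hD hl, onGerm_smoothGerm hD hl, onGerm_smoothGerm hD hl,
      smoothGerm_mul, smoothGerm_mul, smoothGerm_add, smoothGerm_eq_iff]
    filter_upwards [hWl, hWl'] with p hp hp'
    exact hD.mul (hu.differentiableAt_of_isOpen hW hp) (hv.differentiableAt_of_isOpen hW' hp'))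

lemma derivation_smoothGerm (hD : IsFirstOrder D)
    (hl : ∀ O : Set Heis, IsOpen O → Dense O → O ∈ l)
    {u : Heis → ℂ} {W : Set Heis} (hW : IsOpen W) (hWl : W ∈ l) (hu : ContDiffOn ℝ ∞ u W) :
    hD.derivation hl (smoothGerm u hW hWl hu) = smoothGerm (D u) hW hWl (hD.contDiffOn hW hu) :=
  hD.onGerm_smoothGerm hl hW hWl hu

end IsFirstOrder

/-- Complex conjugation on the field of germs. -/
def conjGerm : smoothGerms l →+* smoothGerms l :=
  RingHom.codRestrict ((RingHom.mk' (⟨⟨Germ.map conj, Germ.coe_eq.mpr (.of_forall fun p => map_one _)⟩, by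
      intro a b
      induction a, b using Germ.inductionOn₂ with
      | _ u v => exact Germ.coe_eq.mpr (.of_forall fun p => map_mul _ _ _)⟩ :
        Germ (l : Filter Heis) ℂ →* Germ (l : Filter Heis) ℂ) (by
      intro a b
      induction a, b using Germ.inductionOn₂ with
      | _ u v => exact Germ.coe_eq.mpr (.of_forall fun p => map_add _ _ _))).comp
        (smoothGerms l).subtype) _ (by
    rintro ⟨_, u, W, hW, hWl, hu, rfl⟩
    exact ⟨fun p => conj (u p), W, hW, hWl, hu.conj, rfl⟩)

lemma conjGerm_smoothGerm {u : Heis → ℂ} {W : Set Heis} (hW : IsOpen W) (hWl : W ∈ l)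
    (hu : ContDiffOn ℝ ∞ u W) :
    conjGerm (smoothGerm u hW hWl hu) = smoothGerm (fun p => conj (u p)) hW hWl hu.conj := rfl

lemma contDiff_two_I_conj : ContDiff ℝ ∞ (fun p : Heis => 2 * Complex.I * (p.1 - p.2.1 * Complex.I)) := by
  have h : ContDiff ℝ ∞ (fun x : ℝ => (x : ℂ)) := Complex.ofRealCLM.contDiff
  fun_prop

lemma fderiv_two_I_conj (p w : Heis) :
    fderiv ℝ (fun p : Heis => 2 * Complex.I * ((p.1 : ℂ) - p.2.1 * Complex.I)) p w =
      2 * Complex.I * (w.1 - w.2.1 * Complex.I) := by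
  have h1 : HasFDerivAt (fun p : Heis => (p.1 : ℂ))
      (Complex.ofRealCLM.comp (ContinuousLinearMap.fst ℝ ℝ (ℝ × ℝ))) p :=
    (Complex.ofRealCLM.comp (ContinuousLinearMap.fst ℝ ℝ (ℝ × ℝ))).hasFDerivAt
  have h2 : HasFDerivAt (fun p : Heis => (p.2.1 : ℂ))
      (Complex.ofRealCLM.comp ((ContinuousLinearMap.fst ℝ ℝ ℝ).comp
        (ContinuousLinearMap.snd ℝ ℝ (ℝ × ℝ)))) p :=
    (Complex.ofRealCLM.comp ((ContinuousLinearMap.fst ℝ ℝ ℝ).comp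
      (ContinuousLinearMap.snd ℝ ℝ (ℝ × ℝ)))).hasFDerivAt
  rw [((h1.fun_sub (h2.mul_const Complex.I)).const_mul (2 * Complex.I)).fderiv]
  simp
  ring

end Germs

open Filter in
/-- The Heisenberg field of germs of smooth functions along a generic ultrafilter. -/
def heisenbergGerms {l : Ultrafilter Heis} (hl : ∀ O : Set Heis, IsOpen O → Dense O → O ∈ l) :
    HeisenbergField (smoothGerms l) where
  Z := isFirstOrder_ZD.derivation hl
  Zb := isFirstOrder_ZbD.derivation hl
  T := isFirstOrder_TD.derivation hl
  conj := conjGerm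
  s := smoothGerm _ isOpen_univ univ_mem contDiff_two_I_conj.contDiffOn
  conj_conj g := by
    obtain ⟨u, W, hW, hWl, hu, rfl⟩ := exists_eq_smoothGerm g
    rw [conjGerm_smoothGerm, conjGerm_smoothGerm, smoothGerm_eq_iff]
    exact .of_forall fun p => Complex.conj_conj _
  conj_Z g := by
    obtain ⟨u, W, hW, hWl, hu, rfl⟩ := exists_eq_smoothGerm g
    rw [IsFirstOrder.derivation_smoothGerm, conjGerm_smoothGerm, conjGerm_smoothGerm,
      IsFirstOrder.derivation_smoothGerm, smoothGerm_eq_iff]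
    exact .of_forall fun p => (ZbD_conj u p).symm
  Z_T g := by
    obtain ⟨u, W, hW, hWl, hu, rfl⟩ := exists_eq_smoothGerm g
    simp only [IsFirstOrder.derivation_smoothGerm, smoothGerm_eq_iff]
    filter_upwards [hWl] with p hp using ZD_TD hW hu hp
  Zb_T g := by
    obtain ⟨u, W, hW, hWl, hu, rfl⟩ := exists_eq_smoothGerm g
    simp only [IsFirstOrder.derivation_smoothGerm, smoothGerm_eq_iff]
    filter_upwards [hWl] with p hp using ZbD_TD hW hu hp
  Zb_Z g := by
    obtain ⟨u, W, hW, hWl, hu, rfl⟩ := exists_eq_smoothGerm g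
    simp only [IsFirstOrder.derivation_smoothGerm, smoothGerm_eq_iff, smoothGerm_mul,
      smoothGerm_add]
    filter_upwards [hWl] with p hp
    rw [ZbD_ZD hW hu hp]
    congr 2
    simp [ZbD, XD, YD, fderiv_two_I_conj]
    linear_combination Complex.I * Complex.I_sq
  Z_s := by
    rw [IsFirstOrder.derivation_smoothGerm, smoothGerm_eq_zero_iff]
    refine .of_forall fun p => ?_
    simp [ZD, XD, YD, fderiv_two_I_conj]
    linear_combination 2 * Complex.I * Complex.I_sq
  T_s := by
    rw [IsFirstOrder.derivation_smoothGerm, smoothGerm_eq_zero_iff]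
    refine .of_forall fun p => ?_
    simp [TD, fderiv_two_I_conj]
  Zb_s := by
    rw [IsFirstOrder.derivation_smoothGerm, Ne, smoothGerm_eq_zero_iff]
    intro h
    obtain ⟨p, hp⟩ := h.exists
    simp [ZbD, XD, YD, fderiv_two_I_conj] at hp
    have h4 : 4 * Complex.I = 0 := by linear_combination hp + 2 * Complex.I * Complex.I_sq
    simp at h4

section Rigidity

open scoped ContDiff ComplexConjugate Topology
open Filter

section

variable {l : Ultrafilter Heis} {u v : Heis → ℂ} {W W' : Set Heis} {hW : IsOpen W} {hWl : W ∈ l}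
  {hu : ContDiffOn ℝ ∞ u W} {hW' : IsOpen W'} {hWl' : W' ∈ l} {hv : ContDiffOn ℝ ∞ v W'}

lemma smoothGerm_neg : -smoothGerm u hW hWl hu = smoothGerm (fun p => -u p) hW hWl hu.neg := rfl

lemma smoothGerm_sub : smoothGerm u hW hWl hu - smoothGerm v hW' hWl' hv =
    smoothGerm (fun p => u p - v p) (hW.inter hW') (inter_mem hWl hWl')
      ((hu.mono Set.inter_subset_left).sub (hv.mono Set.inter_subset_right)) := rfl

lemma smoothGerm_pow (k : ℕ) :
    smoothGerm u hW hWl hu ^ k = smoothGerm (fun p => u p ^ k) hW hWl (hu.pow k) := by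
  induction k with
  | zero => simp only [pow_zero]; rfl
  | succ k ih => simp only [pow_succ, ih]; rfl

lemma two_eq_smoothGerm : (2 : smoothGerms l) =
    smoothGerm (fun _ => 2) isOpen_univ univ_mem contDiffOn_const := by
  rw [← one_add_one_eq_two]
  exact Subtype.ext (Germ.coe_eq.mpr (.of_forall fun _ => one_add_one_eq_two))

lemma four_eq_smoothGerm : (4 : smoothGerms l) =
    smoothGerm (fun _ => 4) isOpen_univ univ_mem contDiffOn_const := by
  rw [show (4 : smoothGerms l) = 2 + 2 by norm_num, two_eq_smoothGerm, smoothGerm_add,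
    smoothGerm_eq_iff]
  exact .of_forall fun _ => by norm_num

variable (hl : ∀ O : Set Heis, IsOpen O → Dense O → O ∈ l)

lemma heisenbergGerms_Z : (heisenbergGerms hl).Z (smoothGerm u hW hWl hu) =
    smoothGerm (ZD u) hW hWl (hu.ZD hW) :=
  isFirstOrder_ZD.derivation_smoothGerm hl hW hWl hu

lemma heisenbergGerms_Zb : (heisenbergGerms hl).Zb (smoothGerm u hW hWl hu) =
    smoothGerm (ZbD u) hW hWl (hu.ZbD hW) :=
  isFirstOrder_ZbD.derivation_smoothGerm hl hW hWl hu

lemma heisenbergGerms_conj : (heisenbergGerms hl).conj (smoothGerm u hW hWl hu) =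
    smoothGerm (fun p => conj (u p)) hW hWl hu.conj := rfl

end

lemma ContDiffOn.complexDiv {u v : Heis → ℂ} {W : Set Heis} (hu : ContDiffOn ℝ ∞ u W)
    (hv : ContDiffOn ℝ ∞ v W) (h0 : ∀ p ∈ W, v p ≠ 0) :
    ContDiffOn ℝ ∞ (fun p => u p / v p) W := by
  simp only [div_eq_mul_inv]
  exact hu.mul (hv.inv h0)

/-- Every nonempty open set belongs to an ultrafilter containing all dense open sets. -/
lemma exists_generic_ultrafilter {V : Set Heis} (hV : IsOpen V) (hne : V.Nonempty) :
    ∃ l : Ultrafilter Heis, V ∈ l ∧ ∀ O : Set Heis, IsOpen O → Dense O → O ∈ l := by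
  have : NeBot (residual Heis ⊓ 𝓟 V) := by
    rw [inf_principal_neBot_iff]
    intro U hU
    exact ((dense_of_mem_residual hU).inter_open_nonempty V hV hne).mono fun p hp => ⟨hp.2, hp.1⟩
  obtain ⟨l, hl⟩ := Ultrafilter.exists_le (residual Heis ⊓ 𝓟 V)
  exact ⟨l, hl (mem_inf_of_right (mem_principal_self V)),
    fun O hO hd => hl (mem_inf_of_left (residual_of_dense_open hO hd))⟩

theorem no_generic_solution {V : Set Heis} (hV : IsOpen V) (hne : V.Nonempty) {x n : Heis → ℂ}
    (hx : ContDiffOn ℝ ∞ x V) (hn : ContDiffOn ℝ ∞ n V) (hx0 : ∀ p ∈ V, x p ≠ 0)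
    (hn0 : ∀ p ∈ V, n p ≠ 0) (hB0 : ∀ p ∈ V, ZbD x p ≠ 0)
    (hAB : ∀ p ∈ V, ‖ZbD x p‖ < ‖ZD x p‖)
    (h1 : ∀ p ∈ V, n p ^ 2 + conj (n p) ^ 2 = -2 * x p * conj (x p))
    (h2 : ∀ p ∈ V, n p * ZD n p = -conj (x p) * ZD x p)
    (h3 : ∀ p ∈ V, n p * ZbD n p = -conj (x p) * ZbD x p)
    (hk : ∀ p ∈ V, ZbD (fun q => n q ^ 3 * conj (ZD x q) / (ZbD x q * conj (x q) ^ 3)) p = 0) :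
    False := by
  obtain ⟨l, hVl, hl⟩ := exists_generic_ultrafilter hV hne
  have hξ0 : ∀ p ∈ V, conj (x p) ≠ 0 := fun p hp => by simpa using hx0 p hp
  have hA0 : ∀ p ∈ V, ZD x p ≠ 0 := fun p hp h0 => by
    have := hAB p hp
    rw [h0, norm_zero] at this
    exact absurd this (not_lt.mpr (norm_nonneg _))
  set k : Heis → ℂ := fun q => n q ^ 3 * conj (ZD x q) / (ZbD x q * conj (x q) ^ 3) with hkdef
  have hks : ContDiffOn ℝ ∞ k V := ((hn.pow 3).mul (hx.ZD hV).conj).complexDiv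
    ((hx.ZbD hV).mul (hx.conj.pow 3)) fun p hp => mul_ne_zero (hB0 p hp) (pow_ne_zero 3 (hξ0 p hp))
  set h : Heis → ℂ := fun q => (n q + k q * conj (x q)) / (conj (x q) * n q) with hhdef
  have hhs : ContDiffOn ℝ ∞ h V := (hn.add (hks.mul hx.conj)).complexDiv
    (hx.conj.mul hn)
    fun p hp => mul_ne_zero (hξ0 p hp) (hn0 p hp)
  set e : Heis → ℂ := fun q => (-n q * k q * conj (x q) - conj (n q) ^ 2) / conj (x q) with hedef
  have hes : ContDiffOn ℝ ∞ e V := (((hn.neg.mul hks).mul hx.conj).sub (hn.conj.pow 2)).complexDiv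
    hx.conj hξ0
  have hhp : ∀ p ∈ V, h p * conj (x p) * n p = n p + k p * conj (x p) := fun p hp => by
    have := hξ0 p hp
    have := hn0 p hp
    simp only [hhdef]
    field_simp
  have hep : ∀ p ∈ V, e p * conj (x p) = -n p * k p * conj (x p) - conj (n p) ^ 2 := fun p hp => by
    have := hξ0 p hp
    simp only [hedef]
    field_simp
  have hkp : ∀ p ∈ V, k p * ZbD x p * conj (x p) ^ 3 = n p ^ 3 * conj (ZD x p) := fun p hp => by
    have := hξ0 p hp
    have := hB0 p hp
    simp only [hkdef]
    field_simp
  have hkn : ∀ p ∈ V, ‖n p‖ ^ 3 < ‖k p‖ * ‖x p‖ ^ 3 := fun p hp => by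
    have h4 := congrArg norm (hkp p hp)
    simp only [norm_mul, norm_pow, RCLike.norm_conj] at h4
    have h5 := hAB p hp
    have h6 : 0 < ‖ZbD x p‖ := norm_pos_iff.mpr (hB0 p hp)
    have h7 : 0 < ‖n p‖ ^ 3 := pow_pos (norm_pos_iff.mpr (hn0 p hp)) 3
    by_contra h8
    nlinarith [mul_le_mul_of_nonneg_left (not_lt.mp h8) h6.le, mul_lt_mul_of_pos_left h5 h7]
  have hp0 := fun p hp => pointwise_ne_zero (hx0 p hp) (hn0 p hp) (h1 p hp) (hkn p hp) (hhp p hp)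
    (hep p hp)
  have ne0 : ∀ {u : Heis → ℂ} {W : Set Heis} {hW : IsOpen W} {hWl : W ∈ l}
      {hu : ContDiffOn ℝ ∞ u W}, (∀ p ∈ V, u p ≠ 0) → smoothGerm u hW hWl hu ≠ 0 := by
    intro u W hW hWl hu h0 h4
    obtain ⟨p, hp, hp'⟩ := ((smoothGerm_eq_zero_iff.mp h4).and hVl).exists
    exact h0 p hp' hp
  set H := heisenbergGerms hl with hH
  have key := H.alternative (x := smoothGerm x hV hVl hx) (n := smoothGerm n hV hVl hn)
    (h := smoothGerm h hV hVl hhs) (k := smoothGerm k hV hVl hks) (e := smoothGerm e hV hVl hes)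
    (ne0 hx0) (ne0 hn0) (by rw [hH, heisenbergGerms_Z]; exact ne0 hA0)
    (by
      rw [hH, heisenbergGerms_conj, heisenbergGerms_Z]
      exact ne0 fun p hp => by rw [ZD_conj]; simpa using hB0 p hp)
    (by
      simp only [hH, heisenbergGerms_conj, heisenbergGerms_Z, heisenbergGerms_Zb, smoothGerm_pow,
        smoothGerm_mul, smoothGerm_add, smoothGerm_neg, two_eq_smoothGerm, smoothGerm_eq_iff]
      filter_upwards [hVl] with p hp using h1 p hp)
    (by
      simp only [hH, heisenbergGerms_conj, heisenbergGerms_Z, heisenbergGerms_Zb, smoothGerm_pow,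
        smoothGerm_mul, smoothGerm_add, smoothGerm_neg, two_eq_smoothGerm, smoothGerm_eq_iff]
      filter_upwards [hVl] with p hp using h2 p hp)
    (by
      simp only [hH, heisenbergGerms_conj, heisenbergGerms_Z, heisenbergGerms_Zb, smoothGerm_pow,
        smoothGerm_mul, smoothGerm_add, smoothGerm_neg, two_eq_smoothGerm, smoothGerm_eq_iff]
      filter_upwards [hVl] with p hp using h3 p hp)
    (by
      simp only [hH, heisenbergGerms_conj, heisenbergGerms_Z, heisenbergGerms_Zb, smoothGerm_pow,
        smoothGerm_mul, smoothGerm_add, smoothGerm_neg, two_eq_smoothGerm, smoothGerm_eq_iff]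
      filter_upwards [hVl] with p hp
      rw [ZbD_conj]
      exact hkp p hp)
    (by
      simp only [hH, heisenbergGerms_Zb, smoothGerm_eq_zero_iff]
      filter_upwards [hVl] with p hp using hk p hp)
    (by
      simp only [hH, heisenbergGerms_conj, smoothGerm_mul, smoothGerm_add, smoothGerm_eq_iff]
      filter_upwards [hVl] with p hp using hhp p hp)
    (by
      simp only [hH, heisenbergGerms_conj, smoothGerm_mul, smoothGerm_neg, smoothGerm_sub,
        smoothGerm_pow, smoothGerm_eq_iff]
      filter_upwards [hVl] with p hp using hep p hp)
    (ne0 fun p hp => (hp0 p hp).1) (ne0 fun p hp => (hp0 p hp).2.1)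
    (by
      simp only [smoothGerm_pow, smoothGerm_mul, smoothGerm_add]
      exact ne0 fun p hp => (hp0 p hp).2.2)
    (by
      simp only [hH, heisenbergGerms_conj, heisenbergGerms_Z, heisenbergGerms_Zb, smoothGerm_mul,
        Ne, smoothGerm_eq_iff]
      intro h4
      obtain ⟨p, hp, hp'⟩ := (h4.and hVl).exists
      rw [ZD_conj, ZbD_conj] at hp
      have := congrArg norm hp
      simp only [norm_mul, RCLike.norm_conj] at this
      nlinarith [hAB p hp', norm_nonneg (ZbD x p)])
  rcases key with key | ⟨L, σ, π, key⟩
  · simp only [hH, heisenbergGerms_conj, heisenbergGerms_Z, smoothGerm_mul, smoothGerm_pow,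
      two_eq_smoothGerm, smoothGerm_eq_iff] at key
    obtain ⟨p, hp, hp'⟩ := (key.and hVl).exists
    rw [ZD_conj] at hp
    have := congrArg norm hp
    simp only [norm_mul, norm_pow, RCLike.norm_conj, Complex.norm_ofNat] at this
    have h4 : 0 < ‖n p‖ ^ 2 * ‖x p‖ :=
      mul_pos (pow_pos (norm_pos_iff.mpr (hn0 p hp')) 2) (norm_pos_iff.mpr (hx0 p hp'))
    have h5 : ‖ZbD x p‖ = 2 * ‖ZD x p‖ := by
      apply mul_right_cancel₀ h4.ne'
      linear_combination this
    linarith [hAB p hp', norm_nonneg (ZD x p)]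
  · have hN : ∀ᶠ p in (l : Filter Heis), n p ^ 2 ≠ conj (n p) ^ 2 := by
      rw [Ultrafilter.eventually_not]
      intro h4
      have h5 : ∀ᶠ p in (l : Filter Heis), n p ^ 2 = -(x p * conj (x p)) := by
        filter_upwards [h4, hVl] with p hp hp'
        linear_combination h1 p hp' / 2 + hp / 2
      have h6 := interior_mem_of_eventuallyEq hl hV hVl (hn.pow 2).continuousOn
        (hx.mul hx.conj).neg.continuousOn h5
      obtain ⟨p, hp, hp'⟩ := (h6.and hVl).exists
      have h7 := isFirstOrder_ZD.congr hp
      have hxd := hx.differentiableAt_of_isOpen hV hp'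
      have hnd := hn.differentiableAt_of_isOpen hV hp'
      have hxc := hx.conj.differentiableAt_of_isOpen hV hp'
      have h8 : ZD (fun q => n q * n q) p = ZD (fun q => (-1) * (x q * conj (x q))) p := by
        simpa only [sq, neg_one_mul] using h7
      rw [isFirstOrder_ZD.mul hnd hnd,
        isFirstOrder_ZD.mul (differentiableAt_const _) (hxd.fun_mul hxc), isFirstOrder_ZD.mul hxd hxc,
        isFirstOrder_ZD.const, ZD_conj] at h8
      have h9 : x p * conj (ZbD x p) = conj (x p) * ZD x p := by
        linear_combination h8 - 2 * h2 p hp'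
      have h10 := congrArg norm h9
      simp only [norm_mul, RCLike.norm_conj] at h10
      exact (hAB p hp').ne (mul_left_cancel₀ (norm_ne_zero_iff.mpr (hx0 p hp')) h10)
    obtain ⟨L, _, _, _, _, rfl⟩ := exists_eq_smoothGerm L
    obtain ⟨σ, _, _, _, _, rfl⟩ := exists_eq_smoothGerm σ
    obtain ⟨π, _, _, _, _, rfl⟩ := exists_eq_smoothGerm π
    obtain ⟨q1, q2, q3, q4, q5⟩ := key
    simp only [hH, heisenbergGerms_conj, smoothGerm_mul, smoothGerm_pow, smoothGerm_add,
      smoothGerm_sub, smoothGerm_neg, two_eq_smoothGerm, four_eq_smoothGerm,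
      smoothGerm_eq_iff] at q1 q2 q3 q4 q5
    obtain ⟨p, q1, q2, q3, q4, q5, hp, hp'⟩ :=
      (q1.and (q2.and (q3.and (q4.and (q5.and (hN.and hVl)))))).exists
    exact pointwise_not_quarticEqSq (hx0 p hp') (hn0 p hp') (h1 p hp') hp (hkn p hp') (hhp p hp')
      (hep p hp') (L p) (σ p) (π p) ⟨q1, q2, q3, q4, q5⟩

end Rigidity

section Schwarzian

open scoped ContDiff ComplexConjugate Topology
open Filter

variable {W : Set Heis} {u v : Heis → ℂ} {p : Heis}

namespace IsFirstOrder

variable {D : (Heis → ℂ) → Heis → ℂ}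

lemma const_mul (hD : IsFirstOrder D) (c : ℂ) (hu : DifferentiableAt ℝ u p) :
    D (fun q => c * u q) p = c * D u p := by
  rw [hD.mul (differentiableAt_const c) hu, hD.const, mul_zero, add_zero]

lemma div (hD : IsFirstOrder D) (hu : DifferentiableAt ℝ u p) (hv : DifferentiableAt ℝ v p)
    (h0 : v p ≠ 0) :
    D (fun q => u q / v q) p = (D u p * v p - u p * D v p) / v p ^ 2 := by
  have h1 : DifferentiableAt ℝ (fun q => (v q)⁻¹) p := hv.fun_inv h0
  simp only [div_eq_mul_inv]
  rw [hD.mul hu h1, hD.comp (hasDerivAt_inv h0) hv]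
  field_simp
  ring

lemma congr_of_eqOn (hD : IsFirstOrder D) (hW : IsOpen W) (hp : p ∈ W) (h : Set.EqOn u v W) :
    D u p = D v p :=
  hD.congr (h.eventuallyEq_of_mem (hW.mem_nhds hp))

end IsFirstOrder

/-- The Schwarzian of a complex valued function with respect to `Z`. -/
def schwarzian (u : Heis → ℂ) (p : Heis) : ℂ :=
  ZD (ZD (ZD u)) p / ZD u p - (3 / 2 : ℂ) * (ZD (ZD u) p / ZD u p) ^ 2

lemma SCL_eq_schwarzian (f1 f2 : Heis → ℝ) : SCL f1 f2 = schwarzian (CF f1 f2) := rfl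

lemma schwarzian_affine (hW : IsOpen W) (hu : ContDiffOn ℝ ∞ u W) (hp : p ∈ W) {c : ℂ}
    (hc : c ≠ 0) (d : ℂ) : schwarzian (fun q => c * u q + d) p = schwarzian u p := by
  have h1 : Set.EqOn (ZD fun q => c * u q + d) (fun q => c * ZD u q) W := fun q hq => by
    have hd := hu.differentiableAt_of_isOpen hW hq
    rw [isFirstOrder_ZD.add (hd.const_mul c) (differentiableAt_const d),
      isFirstOrder_ZD.const_mul c hd, isFirstOrder_ZD.const, add_zero]
  have h2 : Set.EqOn (ZD (ZD fun q => c * u q + d)) (fun q => c * ZD (ZD u) q) W := fun q hq => by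
    rw [isFirstOrder_ZD.congr_of_eqOn hW hq h1,
      isFirstOrder_ZD.const_mul c ((hu.ZD hW).differentiableAt_of_isOpen hW hq)]
  have h3 : ZD (ZD (ZD fun q => c * u q + d)) p = c * ZD (ZD (ZD u)) p := by
    rw [isFirstOrder_ZD.congr_of_eqOn hW hp h2,
      isFirstOrder_ZD.const_mul c (((hu.ZD hW).ZD hW).differentiableAt_of_isOpen hW hp)]
  rw [schwarzian, schwarzian, h1 hp, h2 hp, h3, mul_div_mul_left _ _ hc, mul_div_mul_left _ _ hc]

/-- The Schwarzian in terms of the logarithmic derivative of `Zu`. -/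
lemma schwarzian_eq (hW : IsOpen W) (hu : ContDiffOn ℝ ∞ u W) (hp : p ∈ W)
    (h0 : ZD u p ≠ 0) {P : Heis → ℂ} (hP : ContDiffOn ℝ ∞ P W)
    (h : ∀ q ∈ W, ZD (ZD u) q = P q * ZD u q) : schwarzian u p = ZD P p - P p ^ 2 / 2 := by
  have h1 : ZD (ZD (ZD u)) p = ZD (fun q => P q * ZD u q) p :=
    isFirstOrder_ZD.congr_of_eqOn hW hp h
  rw [isFirstOrder_ZD.mul (hP.differentiableAt_of_isOpen hW hp)
    ((hu.ZD hW).differentiableAt_of_isOpen hW hp)] at h1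
  rw [schwarzian, h1, h p hp]
  field_simp
  ring

/-- The Schwarzian of the Korányi inversion of a contact map. -/
lemma schwarzian_div_sub {x N : Heis → ℂ} (hW : IsOpen W) (hx : ContDiffOn ℝ ∞ x W)
    (hN : ContDiffOn ℝ ∞ N W) (hN0 : ∀ q ∈ W, N q ≠ 0) (hA : ∀ q ∈ W, ZD x q ≠ 0)
    (hNx : ∀ q ∈ W, N q + conj (N q) = -2 * x q * conj (x q))
    (hZN : ∀ q ∈ W, ZD N q = -2 * conj (x q) * ZD x q)
    (hZbN : ∀ q ∈ W, ZbD N q = -2 * conj (x q) * ZbD x q) (hp : p ∈ W) :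
    schwarzian (fun q => x q / N q) p - schwarzian x p = -(2 / conj (N p)) *
      (3 * ZD x p * conj (ZbD x p) + x p * (ZD (fun q => conj (ZbD x q)) p -
        ZD (ZD x) p / ZD x p * conj (ZbD x p)) + 3 * x p ^ 2 * conj (ZbD x p) ^ 2 / conj (N p)) := by
  have hM0 : ∀ q ∈ W, conj (N q) ≠ 0 := fun q hq => by simpa using hN0 q hq
  have hAs := hx.ZD hW
  have hBs := (hx.ZbD hW).conj
  have hZM : ∀ q ∈ W, ZD (fun q => conj (N q)) q = -2 * x q * conj (ZbD x q) := fun q hq => by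
    rw [ZD_conj, hZbN q hq]
    simp only [map_mul, map_neg, map_ofNat, Complex.conj_conj]
  have hG : Set.EqOn (ZD fun q => x q / N q) (fun q => (-1) * (ZD x q * conj (N q)) / N q ^ 2) W :=
    fun q hq => by
      rw [isFirstOrder_ZD.div (hx.differentiableAt_of_isOpen hW hq)
        (hN.differentiableAt_of_isOpen hW hq) (hN0 q hq), hZN q hq]
      congr 1
      linear_combination ZD x q * hNx q hq
  set P₀ : Heis → ℂ := fun q => ZD (ZD x) q / ZD x q with hP₀
  set R₁ : Heis → ℂ := fun q => x q * conj (ZbD x q) / conj (N q) with hR₁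
  set R₂ : Heis → ℂ := fun q => conj (x q) * ZD x q / N q with hR₂
  have hP₀s : ContDiffOn ℝ ∞ P₀ W := (hAs.ZD hW).complexDiv hAs hA
  have hR₁s : ContDiffOn ℝ ∞ R₁ W := (hx.mul hBs).complexDiv hN.conj hM0
  have hR₂s : ContDiffOn ℝ ∞ R₂ W := (hx.conj.mul hAs).complexDiv hN hN0
  have hG2 : ∀ q ∈ W, ZD (ZD fun q => x q / N q) q =
      (P₀ q + ((-2) * R₁ q + 4 * R₂ q)) * ZD (fun q => x q / N q) q := fun q hq => by
    have hNd := hN.differentiableAt_of_isOpen hW hq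
    have hMd := hN.conj.differentiableAt_of_isOpen hW hq
    have hAd := hAs.differentiableAt_of_isOpen hW hq
    have h1 := hN0 q hq
    have h2 := hM0 q hq
    have h3 := hA q hq
    rw [isFirstOrder_ZD.congr_of_eqOn hW hq hG, hG hq,
      isFirstOrder_ZD.div ((hAd.fun_mul hMd).const_mul _) (hNd.fun_pow 2) (pow_ne_zero 2 h1),
      isFirstOrder_ZD.const_mul _ (hAd.fun_mul hMd), isFirstOrder_ZD.mul hAd hMd,
      isFirstOrder_ZD.comp (φ := fun z => z ^ 2) (hasDerivAt_pow 2 _) hNd, hZM q hq, hZN q hq]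
    simp only [hP₀, hR₁, hR₂]
    field_simp
    push_cast
    ring
  have hGA : ZD (fun q => x q / N q) p ≠ 0 := by
    rw [hG hp]
    exact div_ne_zero (mul_ne_zero (by norm_num) (mul_ne_zero (hA p hp) (hM0 p hp)))
      (pow_ne_zero 2 (hN0 p hp))
  have hc : ∀ c : ℂ, ContDiffOn ℝ ∞ (fun _ : Heis => c) W := fun c => contDiffOn_const
  rw [schwarzian_eq hW (hx.complexDiv hN hN0) hp hGA
      (hP₀s.add (((hc (-2)).mul hR₁s).add ((hc 4).mul hR₂s))) hG2,
    schwarzian_eq hW hx hp (hA p hp) hP₀s fun q hq => by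
      simp only [hP₀]; rw [div_mul_cancel₀ _ (hA q hq)]]
  have hxd := hx.differentiableAt_of_isOpen hW hp
  have hξd := hx.conj.differentiableAt_of_isOpen hW hp
  have hAd := hAs.differentiableAt_of_isOpen hW hp
  have hBd := hBs.differentiableAt_of_isOpen hW hp
  have hNd := hN.differentiableAt_of_isOpen hW hp
  have hMd := hN.conj.differentiableAt_of_isOpen hW hp
  have hR₁d := hR₁s.differentiableAt_of_isOpen hW hp
  have hR₂d := hR₂s.differentiableAt_of_isOpen hW hp
  rw [isFirstOrder_ZD.add (hP₀s.differentiableAt_of_isOpen hW hp)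
      ((hR₁d.const_mul _).fun_add (hR₂d.const_mul _)),
    isFirstOrder_ZD.add (hR₁d.const_mul _) (hR₂d.const_mul _), isFirstOrder_ZD.const_mul _ hR₁d,
    isFirstOrder_ZD.const_mul _ hR₂d]
  have h1 := hN0 p hp
  have h2 := hM0 p hp
  have h3 := hA p hp
  have hDR₁ : ZD R₁ p = ((x p * ZD (fun q => conj (ZbD x q)) p + conj (ZbD x p) * ZD x p) *
      conj (N p) + 2 * (x p * conj (ZbD x p)) ^ 2) / conj (N p) ^ 2 := by
    rw [hR₁, isFirstOrder_ZD.div (hxd.fun_mul hBd) hMd h2, isFirstOrder_ZD.mul hxd hBd, hZM p hp]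
    congr 1
    ring
  have hDR₂ : ZD R₂ p = ((conj (x p) * ZD (ZD x) p + ZD x p * conj (ZbD x p)) * N p +
      2 * (conj (x p) * ZD x p) ^ 2) / N p ^ 2 := by
    rw [hR₂, isFirstOrder_ZD.div (hξd.fun_mul hAd) hNd h1, isFirstOrder_ZD.mul hξd hAd, hZN p hp,
      ZD_conj]
    congr 1
    ring
  rw [hDR₁, hDR₂]
  simp only [hP₀, hR₁, hR₂]
  have h4 := hNx p hp
  generalize ZD (fun q => conj (ZbD x q)) p = B' at *
  generalize conj (ZbD x p) = B at *
  generalize conj (N p) = M at *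
  generalize conj (x p) = ξ at *
  generalize ZD (ZD x) p = A' at *
  generalize ZD x p = A at *
  field_simp
  linear_combination (8 * A ^ 3 * B * N p * M) * h4

/-- A holomorphic square root of a function with negative real part. -/
lemma exists_sq_eq {N : Heis → ℂ} (hN : ContDiffOn ℝ ∞ N W) (hre : ∀ q ∈ W, (N q).re < 0) :
    ∃ n : Heis → ℂ, ContDiffOn ℝ ∞ n W ∧ ∀ q ∈ W, n q * n q = N q := by
  have hs : ∀ q ∈ W, -N q ∈ slitPlane := fun q hq => by
    left
    simpa using hre q hq
  refine ⟨fun q => Complex.I * cexp (Complex.log (-N q) / 2), ?_, fun q hq => ?_⟩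
  · intro q hq
    have h1 : ContDiffAt ℝ ∞ (fun z : ℂ => Complex.I * cexp (Complex.log z / 2)) (-N q) :=
      ((contDiffAt_const.mul (((contDiffAt_log (n := ∞) (hs q hq)).div_const 2).cexp)).restrict_scalars
        ℝ)
    exact ContDiffAt.comp_contDiffWithinAt (f := fun q => -N q) q h1 (hN.neg q hq)
  · have h1 : cexp (Complex.log (-N q) / 2) * cexp (Complex.log (-N q) / 2) = -N q := by
      rw [← Complex.exp_add, add_halves, Complex.exp_log (slitPlane_ne_zero (hs q hq))]
    linear_combination Complex.I ^ 2 * h1 - N q * Complex.I_sq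

/-- A contact map whose Schwarzian is unchanged by the Korányi inversion is conformal. -/
theorem ZbD_eq_zero_of_schwarzian_eq {x N : Heis → ℂ} (hW : IsOpen W) (hx : ContDiffOn ℝ ∞ x W)
    (hN : ContDiffOn ℝ ∞ N W) (hN0 : ∀ q ∈ W, N q ≠ 0) (hAB : ∀ q ∈ W, ‖ZbD x q‖ < ‖ZD x q‖)
    (hNx : ∀ q ∈ W, N q + conj (N q) = -2 * x q * conj (x q))
    (hZN : ∀ q ∈ W, ZD N q = -2 * conj (x q) * ZD x q)
    (hZbN : ∀ q ∈ W, ZbD N q = -2 * conj (x q) * ZbD x q)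
    (hS : ∀ q ∈ W, schwarzian (fun q => x q / N q) q = schwarzian x q) (hp : p ∈ W) :
    ZbD x p = 0 := by
  by_contra hne
  have hA : ∀ q ∈ W, ZD x q ≠ 0 := fun q hq =>
    norm_pos_iff.mp ((norm_nonneg _).trans_lt (hAB q hq))
  set U := W ∩ ZbD x ⁻¹' {0}ᶜ with hU
  have hUo : IsOpen U := (hx.ZbD hW).continuousOn.isOpen_inter_preimage hW isOpen_compl_singleton
  set V := U ∩ x ⁻¹' {0}ᶜ with hVdef
  have hUW : U ⊆ W := Set.inter_subset_left
  have hVo : IsOpen V :=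
    (hx.mono hUW).continuousOn.isOpen_inter_preimage hUo isOpen_compl_singleton
  have hVW : V ⊆ W := Set.inter_subset_left.trans hUW
  have hVne : V.Nonempty := by
    by_contra h1
    rw [Set.not_nonempty_iff_eq_empty] at h1
    have h2 : Set.EqOn x (fun _ => 0) U := fun q hq => by
      by_contra h3
      exact Set.eq_empty_iff_forall_notMem.mp h1 q ⟨hq, h3⟩
    exact hne ((isFirstOrder_ZbD.congr_of_eqOn hUo ⟨hp, hne⟩ h2).trans
      (isFirstOrder_ZbD.const 0 p))
  have hx0 : ∀ q ∈ V, x q ≠ 0 := fun q hq => hq.2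
  have hB0 : ∀ q ∈ V, ZbD x q ≠ 0 := fun q hq => hq.1.2
  obtain ⟨n, hn, hnN⟩ := exists_sq_eq (hN.mono hVW) fun q hq => by
    have h1 := congrArg Complex.re (hNx q (hVW hq))
    rw [mul_assoc, Complex.mul_conj] at h1
    have h2 : 0 < Complex.normSq (x q) := Complex.normSq_pos.mpr (hx0 q hq)
    simp at h1
    linarith
  have hn0 : ∀ q ∈ V, n q ≠ 0 := fun q hq h0 => by
    apply hN0 q (hVW hq)
    rw [← hnN q hq, h0, zero_mul]
  have hDn : ∀ {D : (Heis → ℂ) → Heis → ℂ}, IsFirstOrder D → ∀ q ∈ V,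
      2 * (n q * D n q) = D N q := fun hD q hq => by
    have hnd := hn.differentiableAt_of_isOpen hVo hq
    rw [← hD.congr_of_eqOn hVo hq hnN, hD.mul hnd hnd]
    ring
  have hZn : ∀ q ∈ V, n q * ZD n q = -conj (x q) * ZD x q := fun q hq => by
    linear_combination (hDn isFirstOrder_ZD q hq + hZN q (hVW hq)) / 2
  have hZbn : ∀ q ∈ V, n q * ZbD n q = -conj (x q) * ZbD x q := fun q hq => by
    linear_combination (hDn isFirstOrder_ZbD q hq + hZbN q (hVW hq)) / 2
  refine no_generic_solution hVo hVne (hx.mono hVW) hn hx0 hn0 hB0 (fun q hq => hAB q (hVW hq))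
    (fun q hq => ?_) hZn hZbn fun q hq => ?_
  · rw [← hNx q (hVW hq), ← hnN q hq, map_mul]
    ring
  · have h1 := schwarzian_div_sub hW hx hN hN0 hA hNx hZN hZbN (hVW hq)
    rw [hS q (hVW hq), sub_self, ← hnN q hq, map_mul] at h1
    have hm0 : conj (n q) ≠ 0 := by simpa using hn0 q hq
    have hb0 : conj (ZbD x q) ≠ 0 := by simpa using hB0 q hq
    have ha0 := hA q (hVW hq)
    have hx0 := hx0 q hq
    have hZm : conj (n q) * ZD (fun q => conj (n q)) q = -x q * conj (ZbD x q) := by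
      have h2 := congrArg conj (hZbn q hq)
      simpa only [ZD_conj, map_mul, map_neg, Complex.conj_conj] using h2
    have hxd := hx.differentiableAt_of_isOpen hW (hVW hq)
    have had := (hx.ZD hW).differentiableAt_of_isOpen hW (hVW hq)
    have hbd := (hx.ZbD hW).conj.differentiableAt_of_isOpen hW (hVW hq)
    have hmd := hn.conj.differentiableAt_of_isOpen hVo hq
    have h3 : ZD (fun q => conj (n q) ^ 3 * ZD x q / (conj (ZbD x q) * x q ^ 3)) q = 0 := by
      rw [isFirstOrder_ZD.div ((hmd.fun_pow 3).fun_mul had) (hbd.fun_mul (hxd.fun_pow 3))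
          (mul_ne_zero hb0 (pow_ne_zero 3 hx0)), isFirstOrder_ZD.mul (hmd.fun_pow 3) had,
        isFirstOrder_ZD.mul hbd (hxd.fun_pow 3),
        isFirstOrder_ZD.comp (φ := fun z => z ^ 3) (hasDerivAt_pow 3 _) hmd,
        isFirstOrder_ZD.comp (φ := fun z => z ^ 3) (hasDerivAt_pow 3 _) hxd]
      rw [div_eq_zero_iff]
      left
      generalize ZD (fun q => conj (ZbD x q)) q = B' at *
      generalize ZD (fun q => conj (n q)) q = m' at *
      generalize conj (ZbD x q) = B at *
      generalize conj (n q) = m at *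
      generalize ZD (ZD x) q = A' at *
      generalize ZD x q = A at *
      have h2 : 3 * A ^ 2 * B * m ^ 2 + x q * (B' * A - A' * B) * m ^ 2 +
          3 * x q ^ 2 * B ^ 2 * A = 0 := by
        have h4 := (mul_eq_zero.mp h1.symm).resolve_left
          (neg_ne_zero.mpr (div_ne_zero two_ne_zero (mul_ne_zero hm0 hm0)))
        field_simp at h4
        linear_combination h4
      linear_combination (3 * A * m * B * x q ^ 3) * hZm - m * x q ^ 2 * h2
    have h4 := congrArg conj h3
    rw [← ZbD_conj] at h4
    simpa only [map_mul, map_div₀, map_pow, Complex.conj_conj, map_zero] using h4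

end Schwarzian

section Contact

open scoped ContDiff ComplexConjugate Topology

variable {f1 f2 f3 : Heis → ℝ} {Ω : Set Heis}

lemma ContDiffOn.ofReal {u : Heis → ℝ} (hu : ContDiffOn ℝ ∞ u Ω) :
    ContDiffOn ℝ ∞ (fun p => (u p : ℂ)) Ω :=
  (Complex.ofRealCLM.contDiff (n := ∞)).comp_contDiffOn hu

lemma contDiffOn_CF (hf1 : ContDiffOn ℝ ∞ f1 Ω) (hf2 : ContDiffOn ℝ ∞ f2 Ω) :
    ContDiffOn ℝ ∞ (CF f1 f2) Ω :=
  hf1.ofReal.add (hf2.ofReal.mul contDiffOn_const)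

lemma differentiableAt_CF {p : Heis} (hf1 : DifferentiableAt ℝ f1 p)
    (hf2 : DifferentiableAt ℝ f2 p) : DifferentiableAt ℝ (CF f1 f2) p :=
  (Complex.ofRealCLM.differentiableAt.comp p hf1).add
    ((Complex.ofRealCLM.differentiableAt.comp p hf2).mul_const Complex.I)

lemma fderiv_CF {p : Heis} (hf1 : DifferentiableAt ℝ f1 p) (hf2 : DifferentiableAt ℝ f2 p)
    (w : Heis) :
    fderiv ℝ (CF f1 f2) p w = (fderiv ℝ f1 p w : ℂ) + (fderiv ℝ f2 p w : ℂ) * Complex.I := by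
  have h : HasFDerivAt (CF f1 f2) (Complex.ofRealCLM.comp (fderiv ℝ f1 p) +
      (Complex.ofRealCLM.comp (fderiv ℝ f2 p)).smulRight Complex.I) p :=
    (Complex.ofRealCLM.hasFDerivAt.comp p hf1.hasFDerivAt).add
      ((Complex.ofRealCLM.hasFDerivAt.comp p hf2.hasFDerivAt).mul_const' Complex.I)
  rw [h.fderiv]
  simp

lemma CF_re (f1 f2 : Heis → ℝ) (v : Heis) : (CF f1 f2 v).re = f1 v := by simp [CF]

lemma CF_im (f1 f2 : Heis → ℝ) (v : Heis) : (CF f1 f2 v).im = f2 v := by simp [CF]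

lemma norm_ZbD_lt_norm_ZD {p : Heis} (hf1 : DifferentiableAt ℝ f1 p)
    (hf2 : DifferentiableAt ℝ f2 p) (hJ : 0 < JF f1 f2 p) :
    ‖ZbD (CF f1 f2) p‖ < ‖ZD (CF f1 f2) p‖ := by
  refine lt_of_pow_lt_pow_left₀ 2 (norm_nonneg _) ?_
  rw [← Complex.normSq_eq_norm_sq, ← Complex.normSq_eq_norm_sq]
  unfold JF XD YD at hJ
  simp only [ZbD, ZD, XD, YD, fderiv_CF hf1 hf2, Complex.normSq_apply]
  simp
  nlinarith

/-- The denominator of the Korányi inversion composed with a dilation and a left translation. -/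
def inversionDenom (f1 f2 f3 : Heis → ℝ) (q : Heis) (r : ℝ) (v : Heis) : ℂ :=
  (r : ℂ) ^ 2 * (CF (fun v => -((f1 v + q.1) ^ 2 + (f2 v + q.2.1) ^ 2))
    (fun v => f3 v + q.2.2 + 2 * (f1 v * q.2.1 - q.1 * f2 v)) v)

lemma fderiv_inversionDenom {p w : Heis} (hf1 : DifferentiableAt ℝ f1 p)
    (hf2 : DifferentiableAt ℝ f2 p) (hf3 : DifferentiableAt ℝ f3 p) (q : Heis) (r : ℝ)
    (h : fderiv ℝ f3 p w - 2 * f2 p * fderiv ℝ f1 p w + 2 * f1 p * fderiv ℝ f2 p w = 0) :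
    fderiv ℝ (inversionDenom f1 f2 f3 q r) p w =
      -2 * r ^ 2 * conj (CF f1 f2 p + (q.1 + q.2.1 * Complex.I)) * fderiv ℝ (CF f1 f2) p w := by
  have hu1 : HasFDerivAt (fun v => -((f1 v + q.1) ^ 2 + (f2 v + q.2.1) ^ 2)) _ p :=
    ((HasFDerivAt.pow (hf1.hasFDerivAt.add_const q.1) 2).fun_add
      (HasFDerivAt.pow (hf2.hasFDerivAt.add_const q.2.1) 2)).fun_neg
  have hu2 : HasFDerivAt (fun v => f3 v + q.2.2 + 2 * (f1 v * q.2.1 - q.1 * f2 v)) _ p :=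
    (hf3.hasFDerivAt.add_const q.2.2).fun_add (((hf1.hasFDerivAt.mul_const q.2.1).fun_sub
      (hf2.hasFDerivAt.const_mul q.1)).const_mul 2)
  have h3 : fderiv ℝ f3 p w = 2 * f2 p * fderiv ℝ f1 p w - 2 * f1 p * fderiv ℝ f2 p w := by
    linarith
  unfold inversionDenom
  rw [fderiv_const_mul (differentiableAt_CF hu1.differentiableAt hu2.differentiableAt), smul_apply, fderiv_CF hu1.differentiableAt hu2.differentiableAt,
    fderiv_CF hf1 hf2, hu1.fderiv, hu2.fderiv]
  simp [h3, CF]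
  linear_combination (-2 * (r : ℂ) ^ 2 * (f2 p + q.2.1) * (fderiv ℝ f2 p w : ℂ)) * Complex.I_sq

/-- The complex factor of the similarity `r_φ ∘ δ_r`. -/
def similarityFactor (φ r : ℝ) : ℂ := r * (Real.cos φ + Real.sin φ * Complex.I)

lemma similarityFactor_mul_conj (φ r : ℝ) :
    similarityFactor φ r * conj (similarityFactor φ r) = (r : ℂ) ^ 2 := by
  have h := congrArg (fun s : ℝ => (s : ℂ)) (Real.sin_sq_add_cos_sq φ)
  simp only [similarityFactor, map_mul, map_add, Complex.conj_ofReal, Complex.conj_I]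
  push_cast at h ⊢
  linear_combination (r : ℂ) ^ 2 * h - (r : ℂ) ^ 2 * Complex.sin φ ^ 2 * Complex.I_sq

lemma similarityFactor_ne_zero (φ : ℝ) {r : ℝ} (hr : 0 < r) : similarityFactor φ r ≠ 0 :=
  fun h => by
    have h1 := similarityFactor_mul_conj φ r
    rw [h, zero_mul] at h1
    exact pow_ne_zero 2 (Complex.ofReal_ne_zero.mpr hr.ne') h1.symm

lemma CF_similarity (f1 f2 f3 : Heis → ℝ) (q : Heis) (φ r : ℝ) (v : Heis) :
    CF (fun v => (rot φ (dil r (tau q (Fmap f1 f2 f3 v)))).1)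
      (fun v => (rot φ (dil r (tau q (Fmap f1 f2 f3 v)))).2.1) v =
      similarityFactor φ r * (CF f1 f2 v + (q.1 + q.2.1 * Complex.I)) := by
  simp only [CF, rot, dil, tau, hmul, Fmap, similarityFactor]
  push_cast
  linear_combination
    (-(r : ℂ) * Complex.sin φ * (f2 v + q.2.1)) * Complex.I_sq

lemma CF_tau (p : Heis) (g : Heis → Heis) :
    CF (fun v => (tau p (g v)).1) (fun v => (tau p (g v)).2.1) =
      fun v => CF (fun v => (g v).1) (fun v => (g v).2.1) v + (p.1 + p.2.1 * Complex.I) := by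
  ext v
  simp only [CF, tau, hmul]
  push_cast
  ring

lemma iotaC_eq_div (f1 f2 f3 : Heis → ℝ) (q : Heis) (φ r : ℝ) (v : Heis) :
    iotaC (rot φ (dil r (tau q (Fmap f1 f2 f3 v)))) =
      similarityFactor φ r * (CF f1 f2 v + (q.1 + q.2.1 * Complex.I)) /
        inversionDenom f1 f2 f3 q r v := by
  rw [← CF_similarity f1 f2 f3, iotaC]
  congr 1
  have h := congrArg (fun s : ℝ => (s : ℂ)) (Real.sin_sq_add_cos_sq φ)
  simp only [inversionDenom, CF, rot, dil, tau, hmul, Fmap]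
  push_cast at h ⊢
  linear_combination (-(r : ℂ) ^ 2 * ((f1 v + q.1) ^ 2 + (f2 v + q.2.1) ^ 2)) * h

lemma inversionDenom_ne_zero {q : Heis} {φ r : ℝ} (hr : 0 < r) {v : Heis}
    (h : rot φ (dil r (tau q (Fmap f1 f2 f3 v))) ≠ 0) : inversionDenom f1 f2 f3 q r v ≠ 0 := by
  intro h0
  have h1 := (mul_eq_zero.mp h0).resolve_left
    (pow_ne_zero 2 (Complex.ofReal_ne_zero.mpr hr.ne'))
  have h2 := congrArg Complex.re h1
  have h3 := congrArg Complex.im h1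
  rw [CF_re, Complex.zero_re] at h2
  rw [CF_im, Complex.zero_im] at h3
  have h4 : f1 v + q.1 = 0 := by nlinarith [sq_nonneg (f1 v + q.1), sq_nonneg (f2 v + q.2.1)]
  have h5 : f2 v + q.2.1 = 0 := by nlinarith [sq_nonneg (f1 v + q.1), sq_nonneg (f2 v + q.2.1)]
  apply h
  simp only [rot, dil, tau, hmul, Fmap]
  ext <;> simp
  · rw [add_comm q.1, add_comm q.2.1, h4, h5]; ring
  · rw [add_comm q.1, add_comm q.2.1, h4, h5]; ring
  · right; linarith

lemma inversionDenom_add_conj (f1 f2 f3 : Heis → ℝ) (q : Heis) (φ r : ℝ) (v : Heis) :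
    inversionDenom f1 f2 f3 q r v + conj (inversionDenom f1 f2 f3 q r v) =
      -2 * (similarityFactor φ r * (CF f1 f2 v + (q.1 + q.2.1 * Complex.I))) *
        conj (similarityFactor φ r * (CF f1 f2 v + (q.1 + q.2.1 * Complex.I))) := by
  rw [map_mul]
  have h : -2 * (similarityFactor φ r * (CF f1 f2 v + (q.1 + q.2.1 * Complex.I))) *
      (conj (similarityFactor φ r) * conj (CF f1 f2 v + (q.1 + q.2.1 * Complex.I))) =
      -2 * (similarityFactor φ r * conj (similarityFactor φ r)) *
        ((CF f1 f2 v + (q.1 + q.2.1 * Complex.I)) *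
          conj (CF f1 f2 v + (q.1 + q.2.1 * Complex.I))) := by ring
  rw [h, similarityFactor_mul_conj]
  simp [inversionDenom, CF, map_ofNat]
  linear_combination (-2 * (r : ℂ) ^ 2 * (f2 v + q.2.1) ^ 2) * Complex.I_sq

end Contact

/-- for a smooth positively oriented contact map f on Ω and a conformal g:
(1) if g = τ_p ∘ r_φ ∘ δ_r ∘ τ_q (type 1), then S_CL(g ∘ f) = S_CL(f) on Ω;
(2) if g = τ_p ∘ ι ∘ r_φ ∘ δ_r ∘ τ_q (type 2, defined on an open set containing f(Ω),
i.e. avoiding the singularity of ι), then S_CL(g ∘ f) = S_CL(f) on Ω iff Z̄F = 0 on Ω,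
i.e. iff f is conformal. -/
theorem stmt_10 (Ω : Set Heis) (hΩ : IsOpen Ω) (f1 f2 f3 : Heis → ℝ)
    (hf1 : ContDiffOn ℝ (⊤ : ℕ∞) f1 Ω) (hf2 : ContDiffOn ℝ (⊤ : ℕ∞) f2 Ω)
    (hf3 : ContDiffOn ℝ (⊤ : ℕ∞) f3 Ω)
    (hcont : ContactOn f1 f2 f3 Ω) (hJ : ∀ p ∈ Ω, 0 < JF f1 f2 p) :
    -- (1) type 1
    (∀ p q : Heis, ∀ φ r : ℝ, 0 < r →
      ∀ w ∈ Ω,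
        SCL (fun v => (tau p (rot φ (dil r (tau q (Fmap f1 f2 f3 v))))).1)
            (fun v => (tau p (rot φ (dil r (tau q (Fmap f1 f2 f3 v))))).2.1) w
          = SCL f1 f2 w) ∧
    -- (2) type 2
    (∀ p q : Heis, ∀ φ r : ℝ, 0 < r →
      (∀ w ∈ Ω, rot φ (dil r (tau q (Fmap f1 f2 f3 w))) ≠ 0) →
      ((∀ w ∈ Ω,
          SCL (fun v => (tau p (iotaMap (rot φ (dil r (tau q (Fmap f1 f2 f3 v)))))).1)
              (fun v => (tau p (iotaMap (rot φ (dil r (tau q (Fmap f1 f2 f3 v)))))).2.1) w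
            = SCL f1 f2 w)
        ↔ (∀ w ∈ Ω, ZbD (CF f1 f2) w = 0))) := by
  have hF : ContDiffOn ℝ (⊤ : ℕ∞) (CF f1 f2) Ω := contDiffOn_CF hf1 hf2
  have hd1 := fun v (hv : v ∈ Ω) => hf1.differentiableAt_of_isOpen hΩ hv
  have hd2 := fun v (hv : v ∈ Ω) => hf2.differentiableAt_of_isOpen hΩ hv
  have hd3 := fun v (hv : v ∈ Ω) => hf3.differentiableAt_of_isOpen hΩ hv
  have hdF := fun v (hv : v ∈ Ω) => hF.differentiableAt_of_isOpen hΩ hv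
  refine ⟨fun p q φ r hr w hw => ?_, fun p q φ r hr h0 => ?_⟩
  · have h1 : CF (fun v => (tau p (rot φ (dil r (tau q (Fmap f1 f2 f3 v))))).1)
        (fun v => (tau p (rot φ (dil r (tau q (Fmap f1 f2 f3 v))))).2.1) =
        fun v => similarityFactor φ r * CF f1 f2 v +
          (similarityFactor φ r * (q.1 + q.2.1 * Complex.I) + (p.1 + p.2.1 * Complex.I)) := by
      rw [CF_tau p fun v => rot φ (dil r (tau q (Fmap f1 f2 f3 v)))]
      ext v
      rw [CF_similarity]
      ring
    rw [SCL_eq_schwarzian, SCL_eq_schwarzian, h1,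
      schwarzian_affine hΩ hF hw (similarityFactor_ne_zero φ hr)]
  · set c := similarityFactor φ r with hc
    have hc0 : c ≠ 0 := similarityFactor_ne_zero φ hr
    set b : ℂ := q.1 + q.2.1 * Complex.I with hb
    set x : Heis → ℂ := fun v => c * CF f1 f2 v + c * b with hxdef
    set N := inversionDenom f1 f2 f3 q r with hNdef
    have hxv : ∀ v, c * (CF f1 f2 v + b) = x v := fun v => mul_add _ _ _
    have hx : ContDiffOn ℝ (⊤ : ℕ∞) x Ω := (contDiffOn_const.mul hF).add contDiffOn_const
    have hN : ContDiffOn ℝ (⊤ : ℕ∞) N Ω := by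
      refine contDiffOn_const.mul (contDiffOn_CF ?_ ?_) <;> fun_prop
    have hN0 : ∀ v ∈ Ω, N v ≠ 0 := fun v hv => inversionDenom_ne_zero hr (h0 v hv)
    have hDx : ∀ {D : (Heis → ℂ) → Heis → ℂ}, IsFirstOrder D → ∀ v ∈ Ω,
        D x v = c * D (CF f1 f2) v := fun hD v hv => by
      rw [hxdef, hD.add ((hdF v hv).const_mul c) (differentiableAt_const _),
        hD.const_mul c (hdF v hv), hD.const, add_zero]
    have hNx : ∀ v ∈ Ω, N v + (starRingEnd ℂ) (N v) = -2 * x v * (starRingEnd ℂ) (x v) :=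
      fun v _ => by
        rw [← hxv]
        exact inversionDenom_add_conj f1 f2 f3 q φ r v
    have hrc : ∀ v, -2 * (r : ℂ) ^ 2 * (starRingEnd ℂ) (CF f1 f2 v + b) =
        -2 * (starRingEnd ℂ) (x v) * c := fun v => by
      rw [← hxv, map_mul, ← similarityFactor_mul_conj φ r]
      ring
    have hNX : ∀ v ∈ Ω, XD N v = -2 * (starRingEnd ℂ) (x v) * c * XD (CF f1 f2) v :=
      fun v hv => by
        rw [← hrc]
        exact fderiv_inversionDenom (hd1 v hv) (hd2 v hv) (hd3 v hv) q r (hcont v hv).1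
    have hNY : ∀ v ∈ Ω, YD N v = -2 * (starRingEnd ℂ) (x v) * c * YD (CF f1 f2) v :=
      fun v hv => by
        rw [← hrc]
        exact fderiv_inversionDenom (hd1 v hv) (hd2 v hv) (hd3 v hv) q r (hcont v hv).2
    have hZN : ∀ v ∈ Ω, ZD N v = -2 * (starRingEnd ℂ) (x v) * ZD x v := fun v hv => by
      rw [hDx isFirstOrder_ZD v hv, ZD, ZD, hNX v hv, hNY v hv]
      ring
    have hZbN : ∀ v ∈ Ω, ZbD N v = -2 * (starRingEnd ℂ) (x v) * ZbD x v := fun v hv => by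
      rw [hDx isFirstOrder_ZbD v hv, ZbD, ZbD, hNX v hv, hNY v hv]
      ring
    have hAB : ∀ v ∈ Ω, ‖ZbD x v‖ < ‖ZD x v‖ := fun v hv => by
      rw [hDx isFirstOrder_ZD v hv, hDx isFirstOrder_ZbD v hv, norm_mul, norm_mul]
      exact mul_lt_mul_of_pos_left (norm_ZbD_lt_norm_ZD (hd1 v hv) (hd2 v hv) (hJ v hv))
        (norm_pos_iff.mpr hc0)
    have hA : ∀ v ∈ Ω, ZD x v ≠ 0 := fun v hv =>
      norm_pos_iff.mp ((norm_nonneg _).trans_lt (hAB v hv))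
    have hB : ∀ v ∈ Ω, ZbD x v = 0 ↔ ZbD (CF f1 f2) v = 0 := fun v hv => by
      rw [hDx isFirstOrder_ZbD v hv, mul_eq_zero, or_iff_right hc0]
    have hSx : ∀ v ∈ Ω, SCL f1 f2 v = schwarzian x v := fun v hv =>
      (schwarzian_affine hΩ hF hv hc0 _).symm
    have hG : CF (fun v => (tau p (iotaMap (rot φ (dil r (tau q (Fmap f1 f2 f3 v)))))).1)
        (fun v => (tau p (iotaMap (rot φ (dil r (tau q (Fmap f1 f2 f3 v)))))).2.1) =
        fun v => 1 * (x v / N v) + (p.1 + p.2.1 * Complex.I) := by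
      rw [CF_tau p fun v => iotaMap (rot φ (dil r (tau q (Fmap f1 f2 f3 v))))]
      ext v
      rw [one_mul, ← hxv, ← iotaC_eq_div]
      simp only [CF, iotaMap, Complex.re_add_im]
    have hSG : ∀ v ∈ Ω,
        SCL (fun v => (tau p (iotaMap (rot φ (dil r (tau q (Fmap f1 f2 f3 v)))))).1)
          (fun v => (tau p (iotaMap (rot φ (dil r (tau q (Fmap f1 f2 f3 v)))))).2.1) v =
        schwarzian (fun v => x v / N v) v := fun v hv => by
      rw [SCL_eq_schwarzian, hG, schwarzian_affine hΩ (hx.complexDiv hN hN0) hv one_ne_zero]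
    constructor
    · intro h w hw
      rw [← hB w hw]
      refine ZbD_eq_zero_of_schwarzian_eq hΩ hx hN hN0 hAB hNx hZN hZbN (fun v hv => ?_) hw
      rw [← hSG v hv, ← hSx v hv, h v hv]
    · intro h w hw
      have h1 : Set.EqOn (fun v => (starRingEnd ℂ) (ZbD x v)) (fun _ => 0) Ω := fun v hv => by
        simp [(hB v hv).mpr (h v hv)]
      rw [hSG w hw, hSx w hw, ← sub_eq_zero,
        schwarzian_div_sub hΩ hx hN hN0 hA hNx hZN hZbN hw,
        isFirstOrder_ZD.congr_of_eqOn hΩ hw h1, isFirstOrder_ZD.const, (hB w hw).mpr (h w hw)]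
      simp
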